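/- arXiv:1809.05460 — 2 statements merged into one kernel-verified Lean document; each statement's English description precedes it below -/
import Mathlib

section
/- Let G ⊆ UT(n,ℝ) be a real unipotent group, let F : ℝ^d → G be a polynomial map, and set X = F(ℝ^d). Suppose g ∈ G and H is a real algebraic subgroup of G such that gH is the minimal coset of a real algebraic subgroup of G containing X, i.e. X ⊆ gH and gH ⊆ g'H' whenever g' ∈ G, H' is a real algebraic subgroup of G and X ⊆ g'H'. Then for every lattice Γ in G there exists a real algebraic subgroup H₀ of G such that H ⊆ H₀, H₀ is Γ-rational, H₀ is contained in every Γ-rational real algebraic subgroup of G containing H, and the topological closure of the set X·Γ = {x·γ : x ∈ X, γ ∈ Γ} in G equals g·H₀·Γ. -/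
open Pointwise Filter

noncomputable section

/-- Square matrices of size `n` over `R`. -/
abbrev Mat (n : ℕ) (R : Type) : Type := Matrix (Fin n) (Fin n) R

/-- The set `UT(n,ℝ)` of upper triangular matrices with `1`s on the diagonal. -/
def UTset (n : ℕ) : Set (Mat n ℝ) :=
  {A | (∀ i, A i i = 1) ∧ ∀ i j : Fin n, (j : ℕ) < (i : ℕ) → A i j = 0}

/-- The entries of a matrix, as a point of `ℝ^(n²)`. -/
def matEval {n : ℕ} (A : Mat n ℝ) : Fin n × Fin n → ℝ := fun ij => A ij.1 ij.2

/-- A real unipotent group: a subgroup of `UT(n,ℝ)` which is the common zero set in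
`UT(n,ℝ)` of a family of real polynomials in the matrix entries. -/
def IsRealUnipotentGroup (n : ℕ) (G : Set (Mat n ℝ)) : Prop :=
  (∃ S : Set (MvPolynomial (Fin n × Fin n) ℝ),
      G = {A | A ∈ UTset n ∧ ∀ p ∈ S, MvPolynomial.eval (matEval A) p = 0}) ∧
    (1 : Mat n ℝ) ∈ G ∧ (∀ a ∈ G, ∀ b ∈ G, a * b ∈ G) ∧ ∀ a ∈ G, a⁻¹ ∈ G

/-- A real algebraic subgroup of a real unipotent group `G`. -/
def IsRealAlgSubgroup (n : ℕ) (G H : Set (Mat n ℝ)) : Prop :=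
  H ⊆ G ∧ IsRealUnipotentGroup n H

/-- `N` is a normal subgroup-set of `G`. -/
def IsNormalIn (n : ℕ) (G N : Set (Mat n ℝ)) : Prop :=
  ∀ g ∈ G, ∀ x ∈ N, g * x * g⁻¹ ∈ N

/-- `Γ` is a lattice in `G`: a discrete subgroup which is cocompact, i.e. there is a
compact `K ⊆ G` with `K·Γ = G` (equivalently, `G/Γ` is compact). -/
def IsLatticeIn (n : ℕ) (G Γ : Set (Mat n ℝ)) : Prop :=
  Γ ⊆ G ∧ (1 : Mat n ℝ) ∈ Γ ∧ (∀ a ∈ Γ, ∀ b ∈ Γ, a * b ∈ Γ) ∧ (∀ a ∈ Γ, a⁻¹ ∈ Γ) ∧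
    DiscreteTopology ↥Γ ∧
    ∃ K : Set (Mat n ℝ), K ⊆ G ∧ IsCompact K ∧ ∀ g ∈ G, ∃ k ∈ K, ∃ γ ∈ Γ, g = k * γ

/-- `H` is `Γ`-rational: `Γ ∩ H` is a lattice in `H`. -/
def IsRationalFor (n : ℕ) (Γ H : Set (Mat n ℝ)) : Prop :=
  IsLatticeIn n H (Γ ∩ H)

/-- The hyperreal matrix represented by a sequence of real matrices. -/
def matOfSeq (n : ℕ) (u : ℕ → Mat n ℝ) : Mat n Hyperreal :=
  Matrix.of fun i j => Hyperreal.ofSeq fun k => u k i j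

/-- The nonstandard extension `S^♯` of a set `S` of real matrices: hyperreal matrices
represented by sequences landing in `S` on a set of indices in the ultrafilter. -/
def matSharp (n : ℕ) (S : Set (Mat n ℝ)) : Set (Mat n Hyperreal) :=
  {A | ∃ u : ℕ → Mat n ℝ, (∀ᶠ k in hyperfilter ℕ, u k ∈ S) ∧ A = matOfSeq n u}

/-- The canonical embedding of real matrices into hyperreal matrices. -/
def matCast {n : ℕ} (A : Mat n ℝ) : Mat n Hyperreal :=
  Matrix.of fun i j => (A i j : Hyperreal)

/-- `μ(G)`: elements of `G^♯` all of whose entries are infinitesimally close to the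
corresponding entries of the identity matrix. -/
def muSet (n : ℕ) (G : Set (Mat n ℝ)) : Set (Mat n Hyperreal) :=
  {A | A ∈ matSharp n G ∧ ∀ i j, Hyperreal.Infinitesimal (A i j - (1 : Mat n Hyperreal) i j)}

/-- The coset `gH` is near `α`, i.e. `α ∈ μ(G)·g·H^♯`. -/
def NearCoset (n : ℕ) (G : Set (Mat n ℝ)) (g : Mat n ℝ) (H : Set (Mat n ℝ))
    (α : Mat n Hyperreal) : Prop :=
  α ∈ muSet n G * ({matCast g} * matSharp n H)

/-- The set of standard parts of the finite elements of a set of hyperreal matrices. -/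
def matStSet (n : ℕ) (A : Set (Mat n Hyperreal)) : Set (Mat n ℝ) :=
  {B | ∃ a ∈ A, ∀ i j, Hyperreal.IsSt (a i j) (B i j)}

/-- A polynomial map `ℝ^d → Mat n ℝ`. -/
def IsPolyMapVec (d n : ℕ) (F : (Fin d → ℝ) → Mat n ℝ) : Prop :=
  ∃ P : Fin n → Fin n → MvPolynomial (Fin d) ℝ,
    ∀ x i j, F x i j = MvPolynomial.eval x (P i j)

/-- The inclusion `ℝ →+* ℝ*` as a ring homomorphism. -/
def realHyperRingHom : ℝ →+* Hyperreal where
  toFun r := (r : Hyperreal)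
  map_one' := Hyperreal.coe_one
  map_mul' := Hyperreal.coe_mul
  map_zero' := Hyperreal.coe_zero
  map_add' := Hyperreal.coe_add

/-- A semialgebraic subset of matrix space: a finite union of sets defined by finitely
many polynomial equations and finitely many strict polynomial inequalities. -/
def IsSemialgebraic (n : ℕ) (S : Set (Mat n ℝ)) : Prop :=
  ∃ (k : ℕ) (P Q : Fin k → Finset (MvPolynomial (Fin n × Fin n) ℝ)),
    S = ⋃ t : Fin k, {A | (∀ p ∈ P t, MvPolynomial.eval (matEval A) p = 0) ∧
      ∀ q ∈ Q t, 0 < MvPolynomial.eval (matEval A) q}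


namespace UP

variable {n : ℕ}

/-- matrices vanishing below the `k`-th superdiagonal -/
def J (n k : ℕ) : Submodule ℝ (Mat n ℝ) where
  carrier := {X | ∀ i j : Fin n, (j : ℕ) < (i : ℕ) + k → X i j = 0}
  add_mem' := by
    intro a b ha hb i j h
    simp [ha i j h, hb i j h]
  zero_mem' := by intro i j _; rfl
  smul_mem' := by
    intro c a ha i j h
    simp [ha i j h]

theorem mem_J {k : ℕ} {X : Mat n ℝ} :
    X ∈ J n k ↔ ∀ i j : Fin n, (j : ℕ) < (i : ℕ) + k → X i j = 0 := Iff.rfl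

theorem J_anti {k l : ℕ} (h : k ≤ l) : J n l ≤ J n k :=
  fun _ hX i j hij => hX i j (by omega)

theorem J_mul {k l : ℕ} {X Y : Mat n ℝ} (hX : X ∈ J n k) (hY : Y ∈ J n l) :
    X * Y ∈ J n (k + l) := by
  intro i j hij
  rw [Matrix.mul_apply]
  refine Finset.sum_eq_zero fun m _ => ?_
  by_cases h : (m : ℕ) < i + k
  · rw [hX i m h, zero_mul]
  · rw [hY m j (by omega), mul_zero]

theorem one_mem_J0 : (1 : Mat n ℝ) ∈ J n 0 := by
  intro i j hij
  rw [Matrix.one_apply_ne]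
  intro h; subst h; omega

theorem J_pow {X : Mat n ℝ} (hX : X ∈ J n 1) (k : ℕ) : X ^ k ∈ J n k := by
  induction k with
  | zero => simpa using one_mem_J0
  | succ k ih => rw [pow_succ]; exact J_mul ih hX

theorem J_eq_zero {X : Mat n ℝ} {k : ℕ} (hk : n ≤ k) (hX : X ∈ J n k) : X = 0 := by
  ext i j
  exact hX i j (by have := j.2; omega)

theorem J_pow_eq_zero {X : Mat n ℝ} (hX : X ∈ J n 1) {k : ℕ} (hk : n ≤ k) : X ^ k = 0 :=
  J_eq_zero hk (J_pow hX k)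

theorem mem_UT_iff {A : Mat n ℝ} : A ∈ UTset n ↔ A - 1 ∈ J n 1 := by
  constructor
  · rintro ⟨h1, h2⟩ i j hij
    by_cases h : i = j
    · subst h; simp [h1]
    · have : (j : ℕ) < i := by
        have : (i : ℕ) ≠ j := fun h' => h (Fin.ext h')
        omega
      simp [h2 i j this, Matrix.one_apply_ne h]
  · intro h
    refine ⟨fun i => ?_, fun i j hij => ?_⟩
    · have := h i i (by omega)
      simp at this; linarith
    · have := h i j (by omega)
      have hne : i ≠ j := by intro h; subst h; omega
      simpa [Matrix.one_apply_ne hne] using this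

/-- The group of unipotent upper triangular matrices. -/
def U (n : ℕ) : Type := {A : Mat n ℝ // A ∈ UTset n}

/-- underlying matrix -/
def U.m (A : U n) : Mat n ℝ := A.1

theorem U.ext {A B : U n} (h : A.m = B.m) : A = B := Subtype.ext h

theorem U.sub_mem (A : U n) : A.m - 1 ∈ J n 1 := mem_UT_iff.1 A.2

theorem mul_mem_UT {A B : Mat n ℝ} (hA : A - 1 ∈ J n 1) (hB : B - 1 ∈ J n 1) :
    A * B - 1 ∈ J n 1 := by
  have : A * B - 1 = (A - 1) * (B - 1) + ((A - 1) + (B - 1)) := by noncomm_ring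
  rw [this]
  exact add_mem (J_anti (by norm_num) (J_mul hA hB)) (add_mem hA hB)

/-- inverse matrix as a geometric sum -/
def ginv (A : Mat n ℝ) : Mat n ℝ := ∑ i ∈ Finset.range (n + 1), (1 - A) ^ i

theorem ginv_mul {A : Mat n ℝ} (hA : A - 1 ∈ J n 1) : ginv A * A = 1 := by
  have h := geom_sum_mul_neg (1 - A) (n + 1)
  rw [sub_sub_cancel, J_pow_eq_zero (by rw [← neg_sub]; exact neg_mem hA) (by omega), sub_zero] at h
  exact h

theorem ginv_mem {A : Mat n ℝ} (hA : A - 1 ∈ J n 1) : ginv A - 1 ∈ J n 1 := by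
  unfold ginv
  rw [Finset.sum_range_succ', pow_zero, add_sub_cancel_right]
  refine Submodule.sum_mem _ fun i _ => ?_
  exact J_anti (by omega) (J_pow (by rw [← neg_sub]; exact neg_mem hA) (i + 1))

instance : Mul (U n) := ⟨fun A B => ⟨A.m * B.m, mem_UT_iff.2 (mul_mem_UT A.sub_mem B.sub_mem)⟩⟩
instance : One (U n) := ⟨⟨1, mem_UT_iff.2 (by simp)⟩⟩
instance : Inv (U n) := ⟨fun A => ⟨ginv A.m, mem_UT_iff.2 (ginv_mem A.sub_mem)⟩⟩
instance : Group (U n) := Group.ofLeftAxioms (G := U n)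
  (fun a b c => U.ext (mul_assoc a.m b.m c.m)) (fun a => U.ext (one_mul a.m))
  (fun a => U.ext (ginv_mul a.sub_mem))

@[simp] theorem m_mul (A B : U n) : (A * B).m = A.m * B.m := rfl
@[simp] theorem m_one : (1 : U n).m = 1 := rfl
theorem m_inv' (A : U n) : (A⁻¹).m = ginv A.m := rfl
theorem m_inv (A : U n) : (A⁻¹).m = (A.m)⁻¹ :=
  (Matrix.inv_eq_left_inv (by rw [m_inv']; exact ginv_mul A.sub_mem)).symm
@[simp] theorem m_pow (A : U n) (k : ℕ) : (A ^ k).m = A.m ^ k := by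
  induction k with
  | zero => simp
  | succ k ih => simp [pow_succ, ih]

instance : TopologicalSpace (U n) := inferInstanceAs (TopologicalSpace {A : Mat n ℝ // A ∈ UTset n})
instance : T2Space (U n) := inferInstanceAs (T2Space {A : Mat n ℝ // A ∈ UTset n})
instance : SecondCountableTopology (U n) :=
  haveI : SecondCountableTopology (Mat n ℝ) := inferInstanceAs (SecondCountableTopology (Fin n → Fin n → ℝ))
  inferInstanceAs (SecondCountableTopology {A : Mat n ℝ // A ∈ UTset n})

theorem continuous_m : Continuous (U.m : U n → Mat n ℝ) := continuous_subtype_val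

theorem continuous_U {X : Type*} [TopologicalSpace X] {f : X → U n} :
    Continuous f ↔ Continuous (fun x => (f x).m) :=
  Topology.IsInducing.subtypeVal.continuous_iff

theorem isInducing_m : Topology.IsInducing (U.m : U n → Mat n ℝ) := Topology.IsInducing.subtypeVal

theorem isClosed_J (k : ℕ) : IsClosed (J n k : Set (Mat n ℝ)) := by
  have : (J n k : Set (Mat n ℝ)) = ⋂ (i : Fin n) (j : Fin n) (_ : (j : ℕ) < (i : ℕ) + k),
      {X | X i j = 0} := by
    ext X; simp [mem_J]
  rw [this]
  refine isClosed_iInter fun i => isClosed_iInter fun j => isClosed_iInter fun _ => ?_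
  exact isClosed_eq (continuous_id.matrix_elem i j) continuous_const

theorem isClosed_UT : IsClosed (UTset n) := by
  have : UTset n = (fun A => A - 1) ⁻¹' (J n 1 : Set (Mat n ℝ)) := by
    ext A; exact mem_UT_iff
  rw [this]
  exact (isClosed_J 1).preimage (continuous_id.sub continuous_const)

theorem isClosedEmbedding_m : Topology.IsClosedEmbedding (U.m : U n → Mat n ℝ) :=
  isClosed_UT.isClosedEmbedding_subtypeVal

instance : LocallyCompactSpace (U n) :=
  haveI : LocallyCompactSpace (Mat n ℝ) := inferInstanceAs (LocallyCompactSpace (Fin n → Fin n → ℝ))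
  isClosedEmbedding_m.locallyCompactSpace

instance : IsTopologicalGroup (U n) where
  continuous_mul := by
    rw [continuous_U]
    exact (continuous_m.comp continuous_fst).mul (continuous_m.comp continuous_snd)
  continuous_inv := by
    rw [continuous_U]
    simp only [m_inv', ginv]
    refine continuous_finsetSum _ fun i _ => ?_
    exact (continuous_const.sub continuous_m).pow i

/-- build an element of `U` from a strictly upper triangular matrix -/
def mkU (X : Mat n ℝ) (h : X - 1 ∈ J n 1) : U n := ⟨X, mem_UT_iff.2 h⟩

@[simp] theorem mkU_m (X : Mat n ℝ) (h : X - 1 ∈ J n 1) : (mkU X h).m = X := rfl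

end UP

namespace UP

variable {n : ℕ}

/-- strictly upper triangular matrices -/
abbrev V (n : ℕ) : Type := ↥(J n 1)

/-- truncated exponential -/
def E (X : Mat n ℝ) : Mat n ℝ := ∑ j ∈ Finset.range (n + 2), ((j.factorial : ℝ)⁻¹) • X ^ j

theorem E_eq {X : Mat n ℝ} (hX : X ∈ J n 1) : E X = IsNilpotent.exp X := by
  rw [IsNilpotent.exp_eq_sum (J_pow_eq_zero hX (show n ≤ n + 2 by omega))]
  refine Finset.sum_congr rfl fun j _ => ?_
  ext a b
  simp only [Matrix.smul_apply, smul_eq_mul]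
  rw [Rat.smul_def]
  push_cast
  rfl

theorem nilp {X : Mat n ℝ} (hX : X ∈ J n 1) : IsNilpotent X := ⟨n, J_pow_eq_zero hX le_rfl⟩

theorem E_add {X Y : Mat n ℝ} (hX : X ∈ J n 1) (hY : Y ∈ J n 1) (h : Commute X Y) :
    E (X + Y) = E X * E Y := by
  rw [E_eq (add_mem hX hY), E_eq hX, E_eq hY,
    IsNilpotent.exp_add_of_commute h (nilp hX) (nilp hY)]

theorem E_sub_one {X : Mat n ℝ} :
    E X - 1 = ∑ j ∈ Finset.range (n + 1), (((j + 1).factorial : ℝ)⁻¹) • X ^ (j + 1) := by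
  unfold E
  rw [Finset.sum_range_succ']
  simp

theorem E_mem {X : Mat n ℝ} (hX : X ∈ J n 1) : E X - 1 ∈ J n 1 := by
  rw [E_sub_one]
  exact Submodule.sum_mem _ fun j _ => Submodule.smul_mem _ _ (J_anti (by omega) (J_pow hX _))

/-- the exponential map -/
def ex (X : V n) : U n := mkU (E X.1) (E_mem X.2)

@[simp] theorem ex_m (X : V n) : (ex X).m = E X.1 := rfl

theorem ex_add {X Y : V n} (h : Commute X.1 Y.1) : ex (X + Y) = ex X * ex Y :=
  U.ext (E_add X.2 Y.2 h)

@[simp] theorem ex_zero : ex (0 : V n) = 1 := by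
  apply U.ext
  simp only [ex_m, m_one]
  have := E_sub_one (X := (0 : Mat n ℝ))
  simp at this
  exact sub_eq_zero.1 this

theorem ex_add_smul (s t : ℝ) (X : V n) : ex ((s + t) • X) = ex (s • X) * ex (t • X) := by
  rw [add_smul]
  exact ex_add ((Commute.refl X.1).smul_left s |>.smul_right t)

theorem ex_nsmul (k : ℕ) (X : V n) : ex ((k : ℝ) • X) = ex X ^ k := by
  induction k with
  | zero => simp
  | succ k ih => rw [Nat.cast_succ, ex_add_smul, ih, one_smul, pow_succ]

theorem ex_neg (X : V n) : ex (-X) = (ex X)⁻¹ := by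
  refine eq_inv_of_mul_eq_one_left ?_
  rw [← ex_add (by simp), neg_add_cancel, ex_zero]

/-- binomial polynomial -/
def binom (j : ℕ) : Polynomial ℝ := Polynomial.C ((j.factorial : ℝ)⁻¹) * descPochhammer ℝ j

theorem binom_eval (j m : ℕ) : (binom j).eval (m : ℝ) = (m.choose j : ℝ) := by
  unfold binom
  rw [Polynomial.eval_mul, Polynomial.eval_C, descPochhammer_eval_eq_descFactorial,
    Nat.descFactorial_eq_factorial_mul_choose]
  push_cast
  rw [inv_mul_cancel_left₀]
  positivity

/-- coefficients of the logarithm -/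
def dl (j : ℕ) : ℝ := (binom j).coeff 1

theorem dl_zero : dl 0 = 0 := by simp [dl, binom, Polynomial.coeff_one]
theorem dl_one : dl 1 = 1 := by simp [dl, binom]

/-- truncated logarithm -/
def Lg (A : Mat n ℝ) : Mat n ℝ := ∑ j ∈ Finset.range (n + 2), dl j • (A - 1) ^ j

theorem Lg_mem {A : Mat n ℝ} (hA : A - 1 ∈ J n 1) : Lg A ∈ J n 1 := by
  unfold Lg
  rw [Finset.sum_range_succ', dl_zero, zero_smul, add_zero]
  exact Submodule.sum_mem _ fun j _ => Submodule.smul_mem _ _ (J_anti (by omega) (J_pow hA _))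

/-- the logarithm -/
def lg (A : U n) : V n := ⟨Lg A.m, Lg_mem A.sub_mem⟩

theorem pow_eq_sum {N : Mat n ℝ} (hN : N ∈ J n 1) (m : ℕ) :
    (N + 1) ^ m = ∑ j ∈ Finset.range (n + 2), (m.choose j : ℝ) • N ^ j := by
  rw [Commute.add_pow (Commute.one_right N)]
  have h1 : ∑ j ∈ Finset.range (m + 1), N ^ j * 1 ^ (m - j) * (m.choose j : Mat n ℝ)
      = ∑ j ∈ Finset.range (m + 1 + (n + 2)), (m.choose j : ℝ) • N ^ j := by
    rw [Finset.sum_range_add _ (m + 1) (n + 2)]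
    rw [Finset.sum_eq_zero (s := Finset.range (n + 2)), add_zero]
    · refine Finset.sum_congr rfl fun j _ => ?_
      rw [one_pow, mul_one, ← nsmul_eq_mul', Nat.cast_smul_eq_nsmul]
    · intro j _
      rw [Nat.choose_eq_zero_of_lt (by omega)]; simp
  have h2 : ∑ j ∈ Finset.range (n + 2), (m.choose j : ℝ) • N ^ j
      = ∑ j ∈ Finset.range (n + 2 + (m + 1)), (m.choose j : ℝ) • N ^ j := by
    rw [Finset.sum_range_add _ (n + 2) (m + 1)]
    rw [Finset.sum_eq_zero (s := Finset.range (m + 1)), add_zero]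
    intro j _
    rw [J_pow_eq_zero hN (by omega), smul_zero]
  rw [h1, h2, add_comm]

theorem poly_eq_of_nat {p q : Polynomial ℝ} (h : ∀ m : ℕ, p.eval (m : ℝ) = q.eval (m : ℝ)) :
    p = q := by
  refine Polynomial.eq_of_infinite_eval_eq p q ?_
  refine (Set.infinite_range_of_injective (Nat.cast_injective (R := ℝ))).mono ?_
  rintro _ ⟨m, rfl⟩
  exact h m

theorem lg_ex (X : V n) : lg (ex X) = X := by
  apply Subtype.ext
  ext a b
  set N : Mat n ℝ := E X.1 - 1 with hN
  have hNJ : N ∈ J n 1 := E_mem X.2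
  have key : (∑ j ∈ Finset.range (n + 2), Polynomial.C ((N ^ j) a b) * binom j)
      = ∑ j ∈ Finset.range (n + 2),
        Polynomial.C ((j.factorial : ℝ)⁻¹ * ((X.1 ^ j) a b)) * Polynomial.X ^ j := by
    apply poly_eq_of_nat
    intro m
    have h := congrArg U.m (ex_nsmul m X)
    rw [m_pow, ex_m, ex_m, show E X.1 = N + 1 by simp [hN], pow_eq_sum hNJ] at h
    have h' := congrFun (congrFun h a) b
    simp only [E, Matrix.sum_apply, Matrix.smul_apply, smul_eq_mul, Submodule.coe_smul,
      smul_pow] at h'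
    simp only [Polynomial.eval_finsetSum, Polynomial.eval_mul, Polynomial.eval_C, binom_eval,
      Polynomial.eval_pow, Polynomial.eval_X]
    rw [Finset.sum_congr rfl fun j _ => mul_comm _ _, ← h']
    exact Finset.sum_congr rfl fun j _ => by ring
  have h1 := congrArg (fun p => Polynomial.coeff p 1) key
  simp only [Polynomial.finsetSum_coeff, Polynomial.coeff_C_mul, Polynomial.coeff_X_pow] at h1
  change Lg (E X.1) a b = X.1 a b
  simp only [Lg, Matrix.sum_apply, Matrix.smul_apply, smul_eq_mul, dl, ← hN]
  rw [Finset.sum_congr rfl fun j _ => mul_comm _ _, h1]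
  rw [Finset.sum_eq_single 1]
  · simp
  · intro j _ hj; simp [Ne.symm hj]
  · intro h; simp at h

theorem pow_sub_mem {X D : Mat n ℝ} {k : ℕ} (hX : X ∈ J n 1) (hD : D ∈ J n k) (hk : 1 ≤ k) (j : ℕ) :
    (X + D) ^ (j + 1) - X ^ (j + 1) ∈ J n (k + j) := by
  induction j with
  | zero => simpa using hD
  | succ j ih =>
    have : (X + D) ^ (j + 1 + 1) - X ^ (j + 1 + 1)
        = ((X + D) ^ (j + 1) - X ^ (j + 1)) * (X + D) + X ^ (j + 1) * D := by
      rw [pow_succ (X + D) (j + 1), pow_succ X (j + 1)]; noncomm_ring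
    rw [this]
    refine add_mem ?_ ?_
    · exact J_anti (by omega) (J_mul ih (add_mem hX (J_anti hk hD)))
    · exact J_anti (by omega) (J_mul (J_pow hX (j + 1)) hD)

theorem exists_ex_approx (A : U n) (k : ℕ) : ∃ X : V n, A.m - E X.1 ∈ J n (k + 1) := by
  induction k with
  | zero =>
    refine ⟨0, ?_⟩
    have : E (0 : Mat n ℝ) = 1 := congrArg U.m (ex_zero (n := n))
    simpa [this] using A.sub_mem
  | succ k ih =>
    obtain ⟨X, hX⟩ := ih
    set D := A.m - E X.1 with hD
    refine ⟨X + ⟨D, J_anti (by omega) hX⟩, ?_⟩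
    have h : A.m - E (X.1 + D) = - (∑ j ∈ Finset.range n, (((j + 2).factorial : ℝ)⁻¹) •
        ((X.1 + D) ^ (j + 2) - X.1 ^ (j + 2))) := by
      have h1 := E_sub_one (X := X.1 + D)
      have h2 := E_sub_one (X := X.1)
      rw [Finset.sum_range_succ'] at h1 h2
      simp only [zero_add, Nat.factorial_one, Nat.cast_one, inv_one, one_smul, pow_one] at h1 h2
      simp only [smul_sub, Finset.sum_sub_distrib]
      rw [sub_eq_iff_eq_add] at h1 h2
      have hA : A.m = E X.1 + D := by simp [hD]
      rw [hA, h1, h2]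
      abel
    change A.m - E (X.1 + D) ∈ _
    rw [h]
    refine neg_mem (Submodule.sum_mem _ fun j _ => Submodule.smul_mem _ _ ?_)
    exact J_anti (by omega) (pow_sub_mem X.2 hX (by omega) (j + 1))

theorem ex_surjective : Function.Surjective (ex : V n → U n) := by
  intro A
  obtain ⟨X, hX⟩ := exists_ex_approx A n
  exact ⟨X, U.ext (sub_eq_zero.1 (J_eq_zero (by omega) hX)).symm⟩

theorem ex_lg (A : U n) : ex (lg A) = A := by
  obtain ⟨X, rfl⟩ := ex_surjective A
  rw [lg_ex]

theorem continuous_ex : Continuous (ex : V n → U n) := by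
  rw [continuous_U]
  simp only [ex_m, E]
  exact continuous_finsetSum _ fun j _ => by fun_prop

theorem continuous_lg : Continuous (lg : U n → V n) := by
  refine Continuous.subtype_mk ?_ _
  unfold Lg
  exact continuous_finsetSum _ fun j _ => by have := continuous_m (n := n); fun_prop

@[simp] theorem lg_one : lg (1 : U n) = 0 := by rw [← ex_zero, lg_ex]

theorem lg_inj {A B : U n} (h : lg A = lg B) : A = B := by rw [← ex_lg A, h, ex_lg]

/-- real powers -/
def rp (g : U n) (t : ℝ) : U n := ex (t • lg g)

theorem lg_rp (g : U n) (t : ℝ) : lg (rp g t) = t • lg g := lg_ex _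
theorem rp_add (g : U n) (s t : ℝ) : rp g (s + t) = rp g s * rp g t := ex_add_smul _ _ _
@[simp] theorem rp_zero (g : U n) : rp g 0 = 1 := by simp [rp]
@[simp] theorem rp_one (g : U n) : rp g 1 = g := by simp [rp, ex_lg]
theorem rp_nat (g : U n) (k : ℕ) : rp g k = g ^ k := by rw [rp, ex_nsmul, ex_lg]
theorem rp_neg (g : U n) (t : ℝ) : rp g (-t) = (rp g t)⁻¹ := by
  rw [rp, rp, ← ex_neg]; congr 1; ext i j; simp
theorem rp_mul (g : U n) (s t : ℝ) : rp g (s * t) = rp (rp g s) t := by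
  rw [rp, rp, lg_rp, smul_smul, mul_comm]
theorem rp_int (g : U n) (k : ℤ) : rp g k = g ^ k := by
  cases k with
  | ofNat k => simpa using rp_nat g k
  | negSucc k =>
    rw [zpow_negSucc, ← rp_nat, ← rp_neg]; congr 1; push_cast [Int.negSucc_eq]; ring
theorem rp_comm (g : U n) (s t : ℝ) : rp g s * rp g t = rp g t * rp g s := by
  rw [← rp_add, ← rp_add, add_comm]
theorem lg_pow (g : U n) (k : ℕ) : lg (g ^ k) = (k : ℝ) • lg g := by rw [← rp_nat, lg_rp]
theorem lg_inv (g : U n) : lg (g⁻¹) = - lg g := by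
  have := lg_rp g (-1)
  rw [rp_neg, rp_one] at this
  rw [this]; ext i j; simp

theorem continuous_rp : Continuous (fun p : U n × ℝ => rp p.1 p.2) :=
  continuous_ex.comp (continuous_snd.smul (continuous_lg.comp continuous_fst))

theorem continuous_rp' (g : U n) : Continuous (rp g) :=
  continuous_rp.comp (Continuous.prodMk_right g)

/-- auxiliary function for the Trotter formula -/
def e1 (s : ℝ) (X : Mat n ℝ) : Mat n ℝ :=
  ∑ j ∈ Finset.range (n + 1), (((j + 1).factorial : ℝ)⁻¹ * s ^ j) • X ^ (j + 1)

theorem E_smul (s : ℝ) (X : Mat n ℝ) : E (s • X) = 1 + s • e1 s X := by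
  rw [← sub_eq_iff_eq_add', E_sub_one, e1, Finset.smul_sum]
  refine Finset.sum_congr rfl fun j _ => ?_
  rw [smul_pow, smul_smul, smul_smul]; congr 1; ring

theorem e1_zero (X : Mat n ℝ) : e1 0 X = X := by
  unfold e1
  rw [Finset.sum_range_succ']
  simp

theorem continuous_e1 (X : Mat n ℝ) : Continuous (fun s => e1 s X) := by
  unfold e1
  exact continuous_finsetSum _ fun j _ => (continuous_const.mul (continuous_pow j)).smul continuous_const

theorem Lg_smul (s : ℝ) (Q : Mat n ℝ) :
    Lg (1 + s • Q) = s • ∑ j ∈ Finset.range (n + 1), (dl (j + 1) * s ^ j) • Q ^ (j + 1) := by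
  unfold Lg
  rw [Finset.sum_range_succ', dl_zero, zero_smul, add_zero, Finset.smul_sum]
  refine Finset.sum_congr rfl fun j _ => ?_
  rw [add_sub_cancel_left, smul_pow, smul_smul, smul_smul]; congr 1; ring

theorem trotter_aux (X Y : V n) : ∃ f : ℝ → Mat n ℝ, Continuous f ∧ f 0 = X.1 + Y.1 ∧
    ∀ s, (lg (ex (s • X) * ex (s • Y))).1 = s • f s := by
  let Q : ℝ → Mat n ℝ := fun s => e1 s X.1 + e1 s Y.1 + s • (e1 s X.1 * e1 s Y.1)
  have hQ : Continuous Q := ((continuous_e1 _).add (continuous_e1 _)).add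
    (continuous_id.smul ((continuous_e1 _).mul (continuous_e1 _)))
  have hQ0 : Q 0 = X.1 + Y.1 := by simp [Q, e1_zero]
  refine ⟨fun s => ∑ j ∈ Finset.range (n + 1), (dl (j + 1) * s ^ j) • Q s ^ (j + 1), ?_, ?_, ?_⟩
  · exact continuous_finsetSum _ fun j _ =>
      (continuous_const.mul (continuous_pow j)).smul (hQ.pow _)
  · dsimp only
    rw [Finset.sum_range_succ']
    simp [hQ0, dl_one]
  · intro s
    rw [← Lg_smul]
    change Lg (E (s • X.1) * E (s • Y.1)) = _
    congr 1
    rw [E_smul, E_smul]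
    simp only [Q, mul_add, add_mul, smul_add, mul_one, one_mul, smul_mul_assoc, mul_smul_comm]
    abel

theorem trotter (X Y : V n) :
    Tendsto (fun k : ℕ => (ex (((k : ℝ) + 1)⁻¹ • X) * ex (((k : ℝ) + 1)⁻¹ • Y)) ^ (k + 1)) atTop
      (nhds (ex (X + Y))) := by
  obtain ⟨f, hf, hf0, hfs⟩ := trotter_aux X Y
  have h0 : Tendsto (fun k : ℕ => ((k : ℝ) + 1)⁻¹) atTop (nhds 0) := by
    simpa using tendsto_one_div_add_atTop_nhds_zero_nat (𝕜 := ℝ)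
  have h1 : Tendsto (fun k : ℕ => f (((k : ℝ) + 1)⁻¹)) atTop (nhds (X.1 + Y.1)) := by
    rw [← hf0]; exact (hf.tendsto 0).comp h0
  have h2 : Tendsto (fun k : ℕ => ((k : ℝ) + 1) •
      lg (ex (((k : ℝ) + 1)⁻¹ • X) * ex (((k : ℝ) + 1)⁻¹ • Y))) atTop (nhds (X + Y)) := by
    rw [tendsto_subtype_rng]
    refine h1.congr fun k => ?_
    rw [Submodule.coe_smul, hfs, smul_smul, mul_inv_cancel₀ (by positivity), one_smul]
  refine ((continuous_ex.tendsto _).comp h2).congr fun k => ?_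
  have := ex_nsmul (k + 1) (lg (ex (((k : ℝ) + 1)⁻¹ • X) * ex (((k : ℝ) + 1)⁻¹ • Y)))
  rw [ex_lg] at this
  rw [← this]; push_cast; rfl

end UP

namespace UP

variable {n : ℕ}

section PM
variable {T : Type*} (A : Subalgebra ℝ (T → ℝ))

/-- matrix valued functions with entries in the algebra `A` -/
def MM (M : T → Mat n ℝ) : Prop := ∀ i j, (fun t => M t i j) ∈ A

variable {A}

theorem alg_const (c : ℝ) : (fun _ : T => c) ∈ A := A.algebraMap_mem c

theorem MM.const (C : Mat n ℝ) : MM A (fun _ => C) := fun _ _ => alg_const _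

theorem MM.add {M N : T → Mat n ℝ} (hM : MM A M) (hN : MM A N) : MM A (fun t => M t + N t) :=
  fun i j => A.add_mem (hM i j) (hN i j)

theorem MM.sub {M N : T → Mat n ℝ} (hM : MM A M) (hN : MM A N) : MM A (fun t => M t - N t) :=
  fun i j => A.sub_mem (hM i j) (hN i j)

theorem MM.smul {a : T → ℝ} {M : T → Mat n ℝ} (ha : a ∈ A) (hM : MM A M) :
    MM A (fun t => a t • M t) :=
  fun i j => A.mul_mem ha (hM i j)

theorem alg_sum {ι : Type*} (s : Finset ι) {f : ι → T → ℝ} (h : ∀ i ∈ s, f i ∈ A) :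
    (fun t => ∑ i ∈ s, f i t) ∈ A := by
  have : (fun t => ∑ i ∈ s, f i t) = ∑ i ∈ s, f i := by ext t; simp
  rw [this]; exact A.sum_mem h

theorem MM.sum {ι : Type*} (s : Finset ι) {M : ι → T → Mat n ℝ} (h : ∀ i ∈ s, MM A (M i)) :
    MM A (fun t => ∑ i ∈ s, M i t) := by
  intro i j
  simp only [Matrix.sum_apply]
  exact alg_sum s fun k hk => h k hk i j

theorem MM.mul {M N : T → Mat n ℝ} (hM : MM A M) (hN : MM A N) : MM A (fun t => M t * N t) := by
  intro i j
  simp only [Matrix.mul_apply]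
  exact alg_sum _ fun k _ => A.mul_mem (hM i k) (hN k j)

theorem MM.pow {M : T → Mat n ℝ} (hM : MM A M) (k : ℕ) : MM A (fun t => M t ^ k) := by
  induction k with
  | zero => simpa using MM.const 1
  | succ k ih => simpa [pow_succ] using ih.mul hM

theorem MM.E {M : T → Mat n ℝ} (hM : MM A M) : MM A (fun t => E (M t)) :=
  MM.sum _ fun _ _ => MM.smul (alg_const _) (hM.pow _)

theorem MM.Lg {M : T → Mat n ℝ} (hM : MM A M) : MM A (fun t => Lg (M t)) :=
  MM.sum _ fun _ _ => MM.smul (alg_const _) ((hM.sub (MM.const 1)).pow _)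

variable (A) in
/-- group valued functions with entries in the algebra `A` -/
def PM (φ : T → U n) : Prop := MM A (fun t => (φ t).m)

theorem PM.const (g : U n) : PM A (fun _ => g) := MM.const _

theorem PM.mul {φ ψ : T → U n} (h : PM A φ) (h' : PM A ψ) : PM A (fun t => φ t * ψ t) := by
  unfold PM; simp only [m_mul]; exact MM.mul h h'

theorem PM.rp {φ : T → U n} {τ : T → ℝ} (h : PM A φ) (hτ : τ ∈ A) :
    PM A (fun t => rp (φ t) (τ t)) :=
  MM.E (MM.smul hτ h.Lg)

theorem PM.inv {φ : T → U n} (h : PM A φ) : PM A (fun t => (φ t)⁻¹) := by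
  have : (fun t => (φ t)⁻¹) = fun t => UP.rp (φ t) (-1) := by
    ext t; rw [rp_neg, rp_one]
  rw [this]; exact h.rp (alg_const _)

theorem linfun_eq (l : V n →ₗ[ℝ] ℝ) : ∃ c : Fin n → Fin n → ℝ, ∀ X : V n,
    l X = ∑ i, ∑ j, c i j * X.1 i j := by
  obtain ⟨l', hl'⟩ := LinearMap.exists_extend l
  refine ⟨fun i j => l' (Matrix.single i j 1), fun X => ?_⟩
  rw [← hl', LinearMap.comp_apply, Submodule.subtype_apply]
  conv_lhs => rw [Matrix.matrix_eq_sum_single X.1]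
  simp only [map_sum]
  refine Finset.sum_congr rfl fun i _ => Finset.sum_congr rfl fun j _ => ?_
  rw [mul_comm, ← smul_eq_mul, ← map_smul]; simp

theorem PM.lin {φ : T → U n} (h : PM A φ) (l : V n →ₗ[ℝ] ℝ) : (fun t => l (lg (φ t))) ∈ A := by
  obtain ⟨c, hc⟩ := linfun_eq l
  simp only [hc]
  exact alg_sum _ fun i _ => alg_sum _ fun j _ => A.mul_mem (alg_const _) (MM.Lg h i j)

end PM

/-- polynomial functions on the group -/
def Pol (n : ℕ) : Subalgebra ℝ (U n → ℝ) :=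
  Algebra.adjoin ℝ (Set.range fun ij : Fin n × Fin n => fun g : U n => g.m ij.1 ij.2)

theorem PM_id : PM (Pol n) (fun g => g) := fun i j => Algebra.subset_adjoin ⟨(i, j), rfl⟩

theorem Pol.comp {T : Type*} {A : Subalgebra ℝ (T → ℝ)} {φ : T → U n} {f : U n → ℝ}
    (hf : f ∈ Pol n) (h : PM A φ) : (fun t => f (φ t)) ∈ A := by
  induction hf using Algebra.adjoin_induction with
  | mem f hf => obtain ⟨⟨i, j⟩, rfl⟩ := hf; exact h i j
  | algebraMap r => exact alg_const r
  | add f g _ _ hf hg => exact A.add_mem hf hg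
  | mul f g _ _ hf hg => exact A.mul_mem hf hg

theorem Pol.continuous {f : U n → ℝ} (hf : f ∈ Pol n) : Continuous f := by
  induction hf using Algebra.adjoin_induction with
  | mem f hf =>
    obtain ⟨⟨i, j⟩, rfl⟩ := hf
    have := continuous_m (n := n)
    fun_prop
  | algebraMap r => exact continuous_const
  | add f g _ _ hf hg => exact hf.add hg
  | mul f g _ _ hf hg => exact hf.mul hg

/-- polynomial functions on the line -/
def PR : Subalgebra ℝ (ℝ → ℝ) := (Polynomial.aeval (R := ℝ) (A := ℝ → ℝ) id).range

theorem mem_PR {f : ℝ → ℝ} : f ∈ PR ↔ ∃ p : Polynomial ℝ, ∀ t, f t = p.eval t := by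
  have key : ∀ (p : Polynomial ℝ) t, (Polynomial.aeval (R := ℝ) (A := ℝ → ℝ) id p) t = p.eval t := by
    intro p t
    induction p using Polynomial.induction_on' with
    | add p q hp hq => rw [map_add, Pi.add_apply, hp, hq, Polynomial.eval_add]
    | monomial k a => simp [Polynomial.aeval_monomial]
  constructor
  · rintro ⟨p, rfl⟩; exact ⟨p, fun t => key p t⟩
  · rintro ⟨p, hp⟩; exact ⟨p, funext fun t => by rw [hp]; exact key p t⟩

theorem PR_id : (fun t : ℝ => t) ∈ PR := mem_PR.2 ⟨Polynomial.X, by simp⟩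

theorem PR_zero {f : ℝ → ℝ} (hf : f ∈ PR) {S : Set ℝ} (hS : S.Infinite) (h : ∀ t ∈ S, f t = 0)
    (t : ℝ) : f t = 0 := by
  obtain ⟨p, hp⟩ := mem_PR.1 hf
  have : p = 0 := Polynomial.eq_zero_of_infinite_isRoot p (hS.mono fun s hs => by
    simpa [hp] using h s hs)
  rw [hp, this]; simp

theorem PR_nat {f : ℝ → ℝ} (hf : f ∈ PR) (h : ∀ k : ℕ, f k = 0) (t : ℝ) : f t = 0 :=
  PR_zero hf (Set.infinite_range_of_injective (Nat.cast_injective (R := ℝ)))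
    (by rintro _ ⟨k, rfl⟩; exact h k) t

theorem PR_bdd {f : ℝ → ℝ} (hf : f ∈ PR) {C : ℝ} (h : ∀ t, |f t| ≤ C) (t : ℝ) : f t = f 0 := by
  obtain ⟨p, hp⟩ := mem_PR.1 hf
  have hd : p.degree ≤ 0 := by
    by_contra hd
    have := Polynomial.abs_tendsto_atTop p (not_le.1 hd)
    obtain ⟨x, hx⟩ := (this.eventually_gt_atTop C).exists
    exact absurd (h x) (by rw [hp]; exact not_le.2 hx)
  rw [Polynomial.eq_C_of_degree_le_zero hd] at hp
  simp [hp]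

theorem PR_line (g : U n) : PM PR (fun t => rp g t) := (PM.const g).rp PR_id

/-- Leibman degree -/
def Dg : ℕ → (U n → ℝ) → Prop
  | 0, f => ∀ x, f x = 0
  | k + 1, f => ∀ g, Dg k (fun x => f (x * g) - f x)

theorem Dg_zero (k : ℕ) : Dg k (fun _ : U n => 0) := by
  induction k with
  | zero => intro x; rfl
  | succ k ih => intro g; simpa using ih

theorem Dg.succ {k : ℕ} {f : U n → ℝ} (h : Dg k f) : Dg (k + 1) f := by
  induction k generalizing f with
  | zero => intro g x; simp [h x, h (x * g)]
  | succ k ih => intro g; exact ih (h g)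

theorem Dg.mono {k l : ℕ} (hkl : k ≤ l) {f : U n → ℝ} (h : Dg k f) : Dg l f := by
  induction hkl with
  | refl => exact h
  | step _ ih => exact ih.succ

theorem Dg.add {k : ℕ} {f g : U n → ℝ} (hf : Dg k f) (hg : Dg k g) : Dg k (fun x => f x + g x) := by
  induction k generalizing f g with
  | zero => intro x; simp [hf x, hg x]
  | succ k ih =>
    intro a
    convert ih (hf a) (hg a) using 2
    ring

theorem Dg.smul {k : ℕ} {f : U n → ℝ} (hf : Dg k f) (c : ℝ) : Dg k (fun x => c * f x) := by
  induction k generalizing f with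
  | zero => intro x; simp [hf x]
  | succ k ih =>
    intro a
    convert ih (hf a) using 2
    ring

theorem Dg.sum {ι : Type*} (s : Finset ι) {k : ℕ} {f : ι → U n → ℝ} (hf : ∀ i ∈ s, Dg k (f i)) :
    Dg k (fun x => ∑ i ∈ s, f i x) := by
  classical
  induction s using Finset.induction_on with
  | empty => simpa using Dg_zero k
  | insert a s ha ih =>
    simp only [Finset.sum_insert ha]
    exact (hf a (by simp)).add (ih fun i hi => hf i (by simp [hi]))

theorem Dg.mul {N k l : ℕ} (hN : k + l ≤ N) {f g : U n → ℝ} (hf : Dg k f) (hg : Dg l g) :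
    Dg (k + l) (fun x => f x * g x) := by
  induction N generalizing k l f g with
  | zero =>
    obtain rfl : k = 0 := by omega
    have : (fun x => f x * g x) = fun _ => 0 := funext fun x => by rw [hf x, zero_mul]
    rw [this]; exact Dg_zero _
  | succ N ih =>
    cases k with
    | zero =>
      have : (fun x => f x * g x) = fun _ => 0 := funext fun x => by rw [hf x, zero_mul]
      rw [this]; exact Dg_zero _
    | succ k =>
      cases l with
      | zero =>
        have : (fun x => f x * g x) = fun _ => 0 := funext fun x => by rw [hg x, mul_zero]
        rw [this]; exact Dg_zero _
      | succ l =>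
        intro a
        have h1 := ih (k := k) (l := l + 1) (by omega) (hf a) hg
        have h2 := ih (k := k) (l := l) (by omega) (hf a) (hg a)
        have h3 := ih (k := k + 1) (l := l) (by omega) hf (hg a)
        have h := (h1.add (h2.mono (by omega))).add (h3.mono (show k + 1 + l ≤ k + (l + 1) by omega))
        refine Dg.mono (show k + (l + 1) ≤ k + 1 + l by omega) ?_
        convert h using 2
        ring

theorem Dg_entry (N : ℕ) (i j : Fin n) (hj : (j : ℕ) < N) : Dg N (fun g : U n => g.m i j) := by
  induction N generalizing i j with
  | zero => omega
  | succ N ih =>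
    intro g
    have : (fun x : U n => (x * g).m i j - x.m i j)
        = fun x => ∑ l, ((g.m - 1) l j) * x.m i l := by
      ext x
      have : (x * g).m - x.m = x.m * (g.m - 1) := by rw [m_mul, mul_sub, mul_one]
      rw [← Matrix.sub_apply, this, Matrix.mul_apply]
      exact Finset.sum_congr rfl fun _ _ => mul_comm _ _
    rw [this]
    refine Dg.sum _ fun l _ => ?_
    by_cases hl : (l : ℕ) < N
    · exact (ih i l hl).smul _
    · have : (g.m - 1) l j = 0 := mem_J.1 g.sub_mem l j (by omega)
      simp only [this, zero_mul]
      exact Dg_zero _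

theorem Pol.Dg {f : U n → ℝ} (hf : f ∈ Pol n) : ∃ k, Dg k f := by
  induction hf using Algebra.adjoin_induction with
  | mem f hf => obtain ⟨⟨i, j⟩, rfl⟩ := hf; exact ⟨_, Dg_entry n i j j.2⟩
  | algebraMap r => exact ⟨1, fun g x => by simp⟩
  | add f g _ _ hf hg =>
    obtain ⟨k, hk⟩ := hf
    obtain ⟨l, hl⟩ := hg
    exact ⟨k + l, (hk.mono (by omega)).add (hl.mono (by omega))⟩
  | mul f g _ _ hf hg =>
    obtain ⟨k, hk⟩ := hf
    obtain ⟨l, hl⟩ := hg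
    exact ⟨k + l, hk.mul le_rfl hl⟩

/-- closed subgroups, closed under real powers -/
structure IsR (L : Subgroup (U n)) : Prop where
  closed : IsClosed (L : Set (U n))
  rp : ∀ g ∈ L, ∀ t : ℝ, rp g t ∈ L

/-- rational subgroups -/
def Rat (Γ L : Subgroup (U n)) : Prop :=
  ∃ K : Set (U n), IsCompact K ∧ ∀ g ∈ L, ∃ k ∈ K, ∃ γ ∈ Γ, γ ∈ L ∧ g = k * γ

theorem ZD {Γ M : Subgroup (U n)} (hM : IsR M) (hR : Rat Γ M) {f : U n → ℝ} (hf : f ∈ Pol n)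
    (h0 : ∀ γ ∈ Γ, γ ∈ M → f γ = 0) : ∀ g ∈ M, f g = 0 := by
  obtain ⟨k, hk⟩ := Pol.Dg hf
  induction k generalizing f with
  | zero => exact fun g _ => hk g
  | succ k ih =>
    obtain ⟨K, hK, hKM⟩ := id hR
    have hinv : ∀ γ ∈ Γ, γ ∈ M → ∀ g ∈ M, f (g * γ) = f g := by
      intro γ hγ hγM g hg
      have h1 : (fun x => f (x * γ) - f x) ∈ Pol n :=
        (Pol n).sub_mem (Pol.comp hf (PM_id.mul (PM.const γ))) hf
      exact sub_eq_zero.1 (ih h1 (fun δ hδ hδM => by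
        simp [h0 δ hδ hδM, h0 (δ * γ) (mul_mem hδ hγ) (mul_mem hδM hγM)]) (hk γ) g hg)
    obtain ⟨C, hC⟩ := hK.exists_bound_of_continuousOn (Pol.continuous hf).continuousOn
    have hb : ∀ g ∈ M, |f g| ≤ C := by
      intro g hg
      obtain ⟨k, hkK, γ, hγ, hγM, rfl⟩ := hKM g hg
      rw [hinv γ hγ hγM k (by simpa using mul_mem hg (inv_mem hγM))]
      exact hC k hkK
    intro g hg
    have := PR_bdd (Pol.comp hf (PR_line g)) (fun t => hb _ (hM.rp g hg t)) 1
    simp only [rp_one, rp_zero] at this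
    rw [this]
    exact h0 1 (one_mem _) (one_mem _)

end UP

namespace UP

variable {n : ℕ}

theorem IsR.ex_smul {L : Subgroup (U n)} (h : IsR L) {X : V n} (hX : ex X ∈ L) (t : ℝ) :
    ex (t • X) ∈ L := by
  have := h.rp _ hX t
  rwa [UP.rp, lg_ex] at this

/-- Lie algebra of a subgroup -/
def IsR.lie {L : Subgroup (U n)} (h : IsR L) : Submodule ℝ (V n) where
  carrier := {X | ex X ∈ L}
  zero_mem' := by simp [one_mem]
  add_mem' := by
    intro X Y hX hY
    refine h.closed.mem_of_tendsto (trotter X Y) (Eventually.of_forall fun k => ?_)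
    exact pow_mem (mul_mem (h.ex_smul hX _) (h.ex_smul hY _)) _
  smul_mem' := fun t X hX => h.ex_smul hX t

theorem IsR.mem_lie {L : Subgroup (U n)} (h : IsR L) {X : V n} : X ∈ h.lie ↔ ex X ∈ L := Iff.rfl

theorem IsR.mem_iff {L : Subgroup (U n)} (h : IsR L) {g : U n} : g ∈ L ↔ lg g ∈ h.lie := by
  rw [h.mem_lie, ex_lg]

theorem IsR.le_iff {L L' : Subgroup (U n)} (h : IsR L) (h' : IsR L') : L ≤ L' ↔ h.lie ≤ h'.lie :=
  ⟨fun H _ hX => H hX, fun H _ hg => h'.mem_iff.2 (H (h.mem_iff.1 hg))⟩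

theorem IsR.eq_of_finrank {L L' : Subgroup (U n)} (h : IsR L) (h' : IsR L') (hle : L ≤ L')
    (hf : Module.finrank ℝ h'.lie ≤ Module.finrank ℝ h.lie) : L = L' := by
  refine le_antisymm hle ((h'.le_iff h).2 ?_)
  exact (Submodule.eq_of_le_of_finrank_le ((h.le_iff h').1 hle) hf).ge

theorem IsR.finrank_lt {L L' : Subgroup (U n)} (h : IsR L) (h' : IsR L') (hle : L ≤ L')
    (hne : L ≠ L') : Module.finrank ℝ h.lie < Module.finrank ℝ h'.lie := by
  by_contra hc
  exact hne (h.eq_of_finrank h' hle (not_lt.1 hc))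

theorem IsR.inf {L L' : Subgroup (U n)} (h : IsR L) (h' : IsR L') : IsR (L ⊓ L') :=
  ⟨h.closed.inter h'.closed, fun g hg t => ⟨h.rp g hg.1 t, h'.rp g hg.2 t⟩⟩

/-- criterion for membership through linear functionals -/
theorem IsR.mem_of_lin {L : Subgroup (U n)} (h : IsR L) {g : U n}
    (H : ∀ l : V n →ₗ[ℝ] ℝ, (∀ x ∈ L, l (lg x) = 0) → l (lg g) = 0) : g ∈ L := by
  by_contra hg
  rw [h.mem_iff] at hg
  obtain ⟨l, hl, hl'⟩ := Submodule.exists_le_ker_of_notMem hg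
  exact hl (H l fun x hx => hl' (h.mem_iff.1 hx))

theorem ZDmap {Γ M L : Subgroup (U n)} (hM : IsR M) (hR : Rat Γ M) (hL : IsR L) {φ : U n → U n}
    (hφ : PM (Pol n) φ) (h0 : ∀ γ ∈ Γ, γ ∈ M → φ γ ∈ L) : ∀ g ∈ M, φ g ∈ L := fun g hg =>
  hL.mem_of_lin fun l hl => ZD hM hR (hφ.lin l) (fun γ hγ hγM => hl _ (h0 γ hγ hγM)) g hg

theorem PRmap {L : Subgroup (U n)} (hL : IsR L) {φ : ℝ → U n} (hφ : PM PR φ) {S : Set ℝ}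
    (hS : S.Infinite) (h0 : ∀ t ∈ S, φ t ∈ L) (t : ℝ) : φ t ∈ L :=
  hL.mem_of_lin fun l hl => PR_zero (hφ.lin l) hS (fun s hs => hl _ (h0 s hs)) t

theorem PRmap_nat {L : Subgroup (U n)} (hL : IsR L) {φ : ℝ → U n} (hφ : PM PR φ)
    (h0 : ∀ k : ℕ, φ k ∈ L) (t : ℝ) : φ t ∈ L :=
  PRmap hL hφ (Set.infinite_range_of_injective (Nat.cast_injective (R := ℝ)))
    (by rintro _ ⟨k, rfl⟩; exact h0 k) t

theorem rp_conj (g h : U n) (t : ℝ) : rp (g * h * g⁻¹) t = g * rp h t * g⁻¹ := by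
  have key : ∀ t : ℝ, rp (g * h * g⁻¹) t * (g * rp h t * g⁻¹)⁻¹ = 1 := by
    intro t
    have hR : IsR (⊥ : Subgroup (U n)) := ⟨by simp, by
      intro g hg t; rw [Subgroup.mem_bot] at hg ⊢; rw [hg, UP.rp]; simp⟩
    have := PRmap_nat hR (φ := fun t => rp (g * h * g⁻¹) t * (g * rp h t * g⁻¹)⁻¹)
      ((PR_line _).mul ((((PM.const g).mul (PR_line h)).mul (PM.const _)).inv)) (by
        intro k
        rw [rp_nat, rp_nat, conj_pow, mul_inv_cancel]; exact one_mem _) t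
    exact Subgroup.mem_bot.1 this
  exact mul_inv_eq_one.1 (key t)

/-- conjugation-normalized -/
def Nm (M N : Subgroup (U n)) : Prop := ∀ m ∈ M, ∀ x ∈ N, m * x * m⁻¹ ∈ N

theorem Nm.inv {M N : Subgroup (U n)} (h : Nm M N) {m x : U n} (hm : m ∈ M) (hx : x ∈ N) :
    m⁻¹ * x * m ∈ N := by simpa using h _ (inv_mem hm) x hx

theorem inv_pow_mul_pow {P : Subgroup (U n)} {a b : U n} (ha : ∀ x ∈ P, a⁻¹ * x * a ∈ P)
    (hb : b ∈ P) (k : ℕ) : (a ^ k)⁻¹ * (a * b) ^ k ∈ P := by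
  induction k with
  | zero => simp [one_mem]
  | succ k ih =>
    have : (a ^ (k + 1))⁻¹ * (a * b) ^ (k + 1) = (a⁻¹ * ((a ^ k)⁻¹ * (a * b) ^ k) * a) * b := by
      rw [pow_succ, pow_succ]; group
    rw [this]
    exact mul_mem (ha _ ih) hb

theorem coset_of_lie {P : Subgroup (U n)} (hP : IsR P) {a g : U n}
    (ha : ∀ s : ℝ, ∀ x ∈ P, (rp a s)⁻¹ * x * rp a s ∈ P) (h : lg g - lg a ∈ hP.lie) :
    a⁻¹ * g ∈ P := by
  have ht := (trotter (lg a) (lg g - lg a)).const_mul a⁻¹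
  rw [add_sub_cancel, ex_lg] at ht
  refine hP.closed.mem_of_tendsto ht (Eventually.of_forall fun k => ?_)
  have hk : (k : ℝ) + 1 ≠ 0 := by positivity
  have h1 := inv_pow_mul_pow (a := rp a ((k : ℝ) + 1)⁻¹) (ha _)
    (hP.ex_smul h ((k : ℝ) + 1)⁻¹) (k + 1)
  rw [← rp_nat, ← rp_mul] at h1
  push_cast at h1
  rwa [inv_mul_cancel₀ hk, rp_one] at h1

theorem lie_of_coset {P : Subgroup (U n)} (hP : IsR P) {a g : U n}
    (ha : ∀ s : ℝ, ∀ x ∈ P, (rp a s)⁻¹ * x * rp a s ∈ P) (h : a⁻¹ * g ∈ P) :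
    lg g - lg a ∈ hP.lie := by
  have h1 : ∀ s : ℝ, (rp a s)⁻¹ * rp g s ∈ P := by
    refine PRmap_nat hP ((PR_line a).inv.mul (PR_line g)) fun k => ?_
    rw [rp_nat, rp_nat]
    have := inv_pow_mul_pow (a := a) (by simpa using ha 1) h k
    simpa using this
  have ht := trotter (-lg a) (lg g)
  rw [neg_add_eq_sub] at ht
  refine hP.closed.mem_of_tendsto ht (Eventually.of_forall fun k => ?_)
  refine pow_mem ?_ _
  have := h1 ((k : ℝ) + 1)⁻¹
  rw [← rp_neg, rp, rp] at this
  convert this using 3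
  ext i j; simp

/-- discreteness in the form we use it -/
def Disc (Γ : Subgroup (U n)) : Prop := ∀ K : Set (U n), IsCompact K → (K ∩ Γ).Finite

theorem Disc.mono {Γ Γ' : Subgroup (U n)} (h : Disc Γ) (hle : Γ' ≤ Γ) : Disc Γ' :=
  fun K hK => (h K hK).subset fun _ hx => ⟨hx.1, hle hx.2⟩

theorem Rat.inf {Γ L L' : Subgroup (U n)} (hd : Disc Γ) (h : Rat Γ L) (h' : Rat Γ L') :
    Rat Γ (L ⊓ L') := by
  obtain ⟨K, hK, hKL⟩ := h
  obtain ⟨K', hK', hKL'⟩ := h'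
  have hfin := hd (K'⁻¹ * K) (hK'.inv.mul hK)
  classical
  let P : U n → U n → Prop := fun δ a => a ∈ Γ ∧ a ∈ L ∧ δ * a ∈ L'
  let a : U n → U n := fun δ => if h : ∃ a, P δ a then h.choose else 1
  have ha : ∀ δ, (∃ a, P δ a) → P δ (a δ) := by
    intro δ hδ
    simp only [a, dif_pos hδ]; exact hδ.choose_spec
  refine ⟨K * (a '' (K'⁻¹ * K ∩ Γ)), hK.mul (hfin.image a).isCompact, ?_⟩
  rintro g ⟨hg, hg'⟩
  obtain ⟨k, hk, γ, hγ, hγL, rfl⟩ := hKL g hg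
  obtain ⟨k', hk', γ', hγ', hγL', he⟩ := hKL' _ hg'
  have hδ : k'⁻¹ * k = γ' * γ⁻¹ := by
    rw [eq_mul_inv_iff_mul_eq, mul_assoc, he]; simp
  have hP := ha (k'⁻¹ * k) ⟨γ, hγ, hγL, by rw [hδ]; simpa using hγL'⟩
  set δ := k'⁻¹ * k with hδdef
  have hδΓ : δ ∈ Γ := by rw [hδ]; exact mul_mem hγ' (inv_mem hγ)
  refine ⟨k * a δ, Set.mul_mem_mul hk ⟨δ, ⟨Set.mul_mem_mul (Set.inv_mem_inv.2 hk') hk, hδΓ⟩, rfl⟩,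
    (a δ)⁻¹ * γ, mul_mem (inv_mem hP.1) hγ, ⟨L.mul_mem (L.inv_mem hP.2.1) hγL, ?_⟩, by group⟩
  have : (a δ)⁻¹ * γ = (δ * a δ)⁻¹ * γ' := by
    rw [mul_inv_rev, hδ]; group
  rw [this]
  exact L'.mul_mem (L'.inv_mem hP.2.2) hγL'

theorem exists_hull {Γ G : Subgroup (U n)} (hd : Disc Γ) (hG : IsR G) (hR : Rat Γ G) {S : Set (U n)}
    (hS : S ⊆ G) : ∃ L : Subgroup (U n), IsR L ∧ Rat Γ L ∧ S ⊆ L ∧ L ≤ G ∧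
      ∀ L' : Subgroup (U n), IsR L' → Rat Γ L' → S ⊆ L' → L ≤ L' := by
  classical
  have hex : ∃ d : ℕ, ∃ (L : Subgroup (U n)) (h : IsR L), Rat Γ L ∧ S ⊆ L ∧
      Module.finrank ℝ h.lie = d := ⟨_, G, hG, hR, hS, rfl⟩
  obtain ⟨L, hL, hLR, hSL, hd'⟩ := Nat.find_spec hex
  have key : ∀ L' : Subgroup (U n), IsR L' → Rat Γ L' → S ⊆ L' → L ≤ L' := by
    intro L' hL' hR' hS'
    have hI := hL.inf hL'
    have h1 : L ⊓ L' = L := by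
      refine hI.eq_of_finrank hL inf_le_left ?_
      rw [hd']
      exact Nat.find_min' hex ⟨L ⊓ L', hI, hLR.inf hd hR', fun x hx => ⟨hSL hx, hS' hx⟩, rfl⟩
    exact inf_eq_left.1 h1
  exact ⟨L, hL, hLR, hSL, key G hG hR hS, key⟩

/-- conjugate subgroup -/
def cj (g : U n) (L : Subgroup (U n)) : Subgroup (U n) := L.map (MulAut.conj g).toMonoidHom

theorem mem_cj {g x : U n} {L : Subgroup (U n)} : x ∈ cj g L ↔ g⁻¹ * x * g ∈ L := by
  unfold cj
  rw [Subgroup.mem_map]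
  constructor
  · rintro ⟨y, hy, rfl⟩
    simpa [MulAut.conj_apply, mul_assoc] using hy
  · intro h
    exact ⟨_, h, by simp [MulAut.conj_apply, mul_assoc]⟩

theorem IsR.cj {L : Subgroup (U n)} (h : IsR L) (g : U n) : IsR (cj g L) := by
  constructor
  · have : ((UP.cj g L : Subgroup (U n)) : Set (U n)) = (fun x => g⁻¹ * x * g) ⁻¹' L := by
      ext x; exact mem_cj
    rw [this]
    exact h.closed.preimage (by fun_prop)
  · intro x hx t
    rw [mem_cj] at hx ⊢
    have := h.rp _ hx t
    have h2 := rp_conj g⁻¹ x t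
    rw [inv_inv] at h2
    rwa [h2] at this

theorem Rat.cj {Γ L : Subgroup (U n)} (h : Rat Γ L) {γ : U n} (hγ : γ ∈ Γ) : Rat Γ (cj γ L) := by
  obtain ⟨K, hK, hKL⟩ := h
  refine ⟨(fun x => γ * x * γ⁻¹) '' K, hK.image (by fun_prop), fun g hg => ?_⟩
  obtain ⟨k, hk, δ, hδ, hδL, he⟩ := hKL _ (mem_cj.1 hg)
  refine ⟨_, ⟨k, hk, rfl⟩, γ * δ * γ⁻¹, mul_mem (mul_mem hγ hδ) (inv_mem hγ), ?_, ?_⟩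
  · rw [mem_cj]; simpa [mul_assoc] using hδL
  · have : g = γ * (k * δ) * γ⁻¹ := by rw [← he]; group
    rw [this]; group

/-- the rational hull of a conjugation invariant set is normalized -/
theorem hull_normal {Γ G L : Subgroup (U n)} (hG : IsR G) (hR : Rat Γ G) {S : Set (U n)}
    (hS : ∀ γ ∈ G, ∀ x ∈ S, γ⁻¹ * x * γ ∈ S) (hL : IsR L) (hLR : Rat Γ L) (hSL : S ⊆ L)
    (hmin : ∀ L' : Subgroup (U n), IsR L' → Rat Γ L' → S ⊆ L' → L ≤ L') : Nm G L := by
  intro m hm x hx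
  refine ZDmap hG hR hL (φ := fun g => g * x * g⁻¹) ((PM_id.mul (PM.const x)).mul PM_id.inv)
    (fun γ hγ hγG => ?_) m hm
  have := hmin (cj γ⁻¹ L) (hL.cj _) (hLR.cj (inv_mem hγ)) (fun y hy => by
    rw [SetLike.mem_coe, mem_cj]
    apply hSL
    simpa using hS γ⁻¹ (inv_mem hγG) y hy) hx
  rw [mem_cj] at this
  simpa using this

theorem IsR.lie_eq_span {Γ L : Subgroup (U n)} (hL : IsR L) (hR : Rat Γ L) :
    hL.lie = Submodule.span ℝ (lg '' ((Γ : Set (U n)) ∩ L)) := by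
  apply le_antisymm
  · intro X hX
    by_contra hc
    obtain ⟨l, hl, hl'⟩ := Submodule.exists_le_ker_of_notMem hc
    apply hl
    have := ZD hL hR (f := fun g => l (lg g)) (PM_id.lin l)
      (fun γ hγ hγL => hl' (Submodule.subset_span ⟨γ, ⟨hγ, hγL⟩, rfl⟩)) (ex X) hX
    simpa [lg_ex] using this
  · rw [Submodule.span_le]
    rintro _ ⟨γ, hγ, rfl⟩
    exact hL.mem_iff.1 hγ.2

theorem Disc.countable {Γ : Subgroup (U n)} (h : Disc Γ) : (Γ : Set (U n)).Countable := by
  have : (Γ : Set (U n)) = ⋃ k, (compactCovering (U n) k ∩ Γ) := by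
    rw [← Set.iUnion_inter, iUnion_compactCovering, Set.univ_inter]
  rw [this]
  exact Set.countable_iUnion fun k => (h _ (isCompact_compactCovering _ k)).countable

theorem countable_rat {Γ : Subgroup (U n)} (hd : Disc Γ) :
    {L : Subgroup (U n) | IsR L ∧ Rat Γ L}.Countable := by
  have h2 : {t : Set (U n) | t.Finite ∧ t ⊆ Γ}.Countable :=
    Set.countable_ofPred_finite_subset hd.countable
  refine (h2.biUnion (t := fun t _ => {L : Subgroup (U n) | ∃ h : IsR L,
    h.lie = Submodule.span ℝ (lg '' t)}) fun t _ => ?_).mono ?_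
  · refine Set.Subsingleton.countable ?_
    rintro L ⟨h, hl⟩ L' ⟨h', hl'⟩
    exact le_antisymm ((h.le_iff h').2 (by rw [hl, hl'])) ((h'.le_iff h).2 (by rw [hl, hl']))
  · rintro L ⟨hL, hR⟩
    obtain ⟨b, hb, hb2, hb3⟩ := exists_linearIndependent ℝ (lg '' ((Γ : Set (U n)) ∩ L))
    have hfin : b.Finite := hb3.setFinite
    obtain ⟨t, ht, htf, hte⟩ := (Set.exists_subset_image_finite_and (p := fun s => s = b)).1 ⟨b, hb, hfin, rfl⟩
    simp only [Set.mem_iUnion]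
    exact ⟨t, ⟨htf, fun x hx => (ht hx).1⟩, hL, by rw [hL.lie_eq_span hR, ← hb2, hte]⟩

end UP

namespace UP

variable {n : ℕ}

theorem comm_depth {k : ℕ} {A B : U n} (hA : A.m - 1 ∈ J n k) :
    (B * A * B⁻¹ * A⁻¹).m - 1 ∈ J n (k + 1) := by
  have h0 : ∀ C : U n, C.m ∈ J n 0 := fun C => mem_J.2 fun i j hij => by
    have := mem_J.1 C.sub_mem i j (by omega)
    have hne : i ≠ j := by intro h; subst h; omega
    simpa [Matrix.one_apply_ne hne] using this
  have h1 : B.m * A.m - A.m * B.m ∈ J n (k + 1) := by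
    have : B.m * A.m - A.m * B.m = (B.m - 1) * (A.m - 1) - (A.m - 1) * (B.m - 1) := by noncomm_ring
    rw [this]
    exact sub_mem (J_anti (by omega) (J_mul B.sub_mem hA)) (J_mul hA B.sub_mem)
  have h2 : (A * B).m * (B⁻¹ * A⁻¹).m = 1 := by rw [← m_mul]; simp
  have h3 : (B * A * B⁻¹ * A⁻¹).m - 1 = (B.m * A.m - A.m * B.m) * (B⁻¹ * A⁻¹).m := by
    rw [sub_mul, ← m_mul A B, h2, ← m_mul, ← m_mul]
    congr 2; group
  rw [h3]
  exact J_anti (by omega) (J_mul h1 (h0 _))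

/-- One step of the tower of rational normal subgroups. -/
structure Step (Γ M N N₁ : Subgroup (U n)) (ζ : U n) : Prop where
  hΓ : ζ ∈ Γ
  hN : ∀ t, rp ζ t ∈ N → t = 0
  comm : ∀ m ∈ M, ∀ t, (rp ζ t)⁻¹ * (m * rp ζ t * m⁻¹) ∈ N
  mem : ∀ g, g ∈ N₁ ↔ ∃ t, (rp ζ t)⁻¹ * g ∈ N
  isR : IsR N₁
  coc : ∃ K : Set (U n), IsCompact K ∧ K ⊆ N ∧ ∀ g ∈ N₁, ∃ s ∈ Set.Icc (0 : ℝ) 1, ∃ k ∈ K, ∃ γ ∈ Γ, γ ∈ N ∧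
    ∃ m : ℤ, g = rp ζ s * k * (γ * ζ ^ m)
  nm : Nm M N₁
  le : N ≤ N₁
  le' : N₁ ≤ M
  ne : N ≠ N₁

theorem exists_step {Γ M N : Subgroup (U n)} (hΓM : Γ ≤ M) (hM : IsR M) (hMR : Rat Γ M)
    (hN : IsR N) (hNR : Rat Γ N) (hNm : Nm M N) (hle : N ≤ M) (hne : N ≠ M) :
    ∃ N₁ ζ, Step Γ M N N₁ ζ := by
  have h1 : ∃ ζ ∈ Γ, ζ ∉ N := by
    by_contra hc
    push Not at hc
    exact hne (le_antisymm hle (ZDmap hM hMR hN PM_id fun γ hγ _ => hc γ hγ))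
  have h2 : ∃ k, (∃ ζ ∈ Γ, ζ ∉ N ∧ ζ.m - 1 ∈ J n k) ∧ ¬ (∃ ζ ∈ Γ, ζ ∉ N ∧ ζ.m - 1 ∈ J n (k + 1)) := by
    by_contra hc
    push Not at hc
    have : ∀ k, ∃ ζ ∈ Γ, ζ ∉ N ∧ ζ.m - 1 ∈ J n k := by
      intro k
      induction k with
      | zero => obtain ⟨ζ, h, h'⟩ := h1; exact ⟨ζ, h, h', J_anti (by omega) ζ.sub_mem⟩
      | succ k ih => exact hc k ih
    obtain ⟨ζ, _, h', h''⟩ := this n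
    apply h'
    have : ζ = 1 := U.ext (sub_eq_zero.1 (J_eq_zero le_rfl h''))
    rw [this]; exact one_mem _
  obtain ⟨k, ⟨ζ, hζΓ, hζN, hζk⟩, hmax⟩ := h2
  have hζM := hΓM hζΓ
  have h3 : ∀ m ∈ M, m * ζ * m⁻¹ * ζ⁻¹ ∈ N := by
    refine ZDmap hM hMR hN (((PM_id.mul (PM.const _)).mul PM_id.inv).mul (PM.const _)) ?_
    intro γ hγ _
    by_contra hc
    exact hmax ⟨_, mul_mem (mul_mem (mul_mem hγ hζΓ) (inv_mem hγ)) (inv_mem hζΓ), hc, comm_depth hζk⟩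
  have hrpM : ∀ t, rp ζ t ∈ M := hM.rp ζ hζM
  have hcomm : ∀ m ∈ M, ∀ t, (rp ζ t)⁻¹ * (m * rp ζ t * m⁻¹) ∈ N := by
    intro m hm
    refine PRmap_nat hN ((PR_line ζ).inv.mul (((PM.const m).mul (PR_line ζ)).mul (PM.const _))) ?_
    intro k
    rw [rp_nat, ← conj_pow]
    have := inv_pow_mul_pow (P := N) (a := ζ) (b := ζ⁻¹ * (m * ζ * m⁻¹ * ζ⁻¹) * ζ)
      (fun x hx => hNm.inv hζM hx) (hNm.inv hζM (h3 m hm)) k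
    convert this using 3
    group
  have hnz : ∀ t, rp ζ t ∈ N → t = 0 := by
    intro t ht
    by_contra h0
    apply hζN
    have := hN.rp _ ht t⁻¹
    rwa [← rp_mul, mul_inv_cancel₀ h0, rp_one] at this
  have hnorm : ∀ t s : ℝ, ∀ x ∈ N, (rp (rp ζ t) s)⁻¹ * x * rp (rp ζ t) s ∈ N := by
    intro t s x hx
    rw [← rp_mul]; exact hNm.inv (hrpM _) hx
  let N₁ : Subgroup (U n) :=
    { carrier := {g | ∃ t, (rp ζ t)⁻¹ * g ∈ N}
      one_mem' := ⟨0, by simp [one_mem]⟩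
      mul_mem' := by
        rintro a b ⟨t, ht⟩ ⟨s, hs⟩
        refine ⟨t + s, ?_⟩
        have : (rp ζ (t + s))⁻¹ * (a * b) =
            ((rp ζ s)⁻¹ * ((rp ζ t)⁻¹ * a) * rp ζ s) * ((rp ζ s)⁻¹ * b) := by
          rw [rp_add]; group
        rw [this]
        exact mul_mem (hNm.inv (hrpM s) ht) hs
      inv_mem' := by
        rintro a ⟨t, ht⟩
        refine ⟨-t, ?_⟩
        have : (rp ζ (-t))⁻¹ * a⁻¹ = rp ζ t * ((rp ζ t)⁻¹ * a)⁻¹ * (rp ζ t)⁻¹ := by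
          rw [rp_neg]; group
        rw [this]
        exact hNm _ (hrpM t) _ (inv_mem ht) }
  have hmem : ∀ g, g ∈ N₁ ↔ ∃ t, (rp ζ t)⁻¹ * g ∈ N := fun g => Iff.rfl
  have hlie : ∀ g, g ∈ N₁ ↔ lg g ∈ hN.lie ⊔ Submodule.span ℝ {lg ζ} := by
    intro g
    rw [hmem, Submodule.mem_sup]
    constructor
    · rintro ⟨t, ht⟩
      refine ⟨_, lie_of_coset hN (hnorm t) ht, t • lg ζ,
        Submodule.smul_mem _ _ (Submodule.mem_span_singleton_self _), ?_⟩
      rw [lg_rp, sub_add_cancel]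
    · rintro ⟨y, hy, z, hz, he⟩
      obtain ⟨t, rfl⟩ := Submodule.mem_span_singleton.1 hz
      refine ⟨t, coset_of_lie hN (hnorm t) ?_⟩
      rwa [lg_rp, ← he, add_sub_cancel_right]
  have hisR : IsR N₁ := by
    constructor
    · have : (N₁ : Set (U n)) = lg ⁻¹' ((hN.lie ⊔ Submodule.span ℝ {lg ζ} : Submodule ℝ (V n)) : Set (V n)) := by
        ext g; exact hlie g
      rw [this]
      exact (Submodule.closed_of_finiteDimensional _).preimage continuous_lg
    · intro g hg t
      rw [hlie] at hg ⊢
      rw [lg_rp]; exact Submodule.smul_mem _ _ hg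
  have hζN₁ : ζ ∈ N₁ := ⟨1, by simp [one_mem]⟩
  refine ⟨N₁, ζ, hζΓ, hnz, hcomm, hmem, hisR, ?_, ?_, ?_, ?_, ?_⟩
  · obtain ⟨K, hK, hKN⟩ := hNR
    refine ⟨K ∩ N, hK.inter_right hN.closed, Set.inter_subset_right, ?_⟩
    rintro g ⟨t, ht⟩
    have h4 : rp ζ (⌊t⌋ : ℝ) * ((rp ζ t)⁻¹ * g) * (rp ζ (⌊t⌋ : ℝ))⁻¹ ∈ N := hNm _ (hrpM _) _ ht
    obtain ⟨k, hk, γ, hγ, hγN, he⟩ := hKN _ h4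
    have hkN : k ∈ N := by
      have : k = k * γ * γ⁻¹ := by group
      rw [this, ← he]; exact mul_mem h4 (inv_mem hγN)
    refine ⟨Int.fract t, ⟨Int.fract_nonneg t, (Int.fract_lt_one t).le⟩, k, ⟨hk, hkN⟩, γ, hγ, hγN, ⌊t⌋, ?_⟩
    have h5 : rp ζ t = rp ζ (Int.fract t) * rp ζ (⌊t⌋ : ℝ) := by
      rw [← rp_add, Int.fract_add_floor]
    have h6 : g = rp ζ (Int.fract t) * (rp ζ (⌊t⌋ : ℝ) * ((rp ζ t)⁻¹ * g) * (rp ζ (⌊t⌋ : ℝ))⁻¹) * rp ζ (⌊t⌋ : ℝ) := by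
      rw [h5]
      group
    rw [h6, he, rp_int]; group
  · rintro m hm g ⟨t, ht⟩
    refine ⟨t, ?_⟩
    have : (rp ζ t)⁻¹ * (m * g * m⁻¹) = (rp ζ t)⁻¹ * (m * rp ζ t * m⁻¹) * (m * ((rp ζ t)⁻¹ * g) * m⁻¹) := by
      group
    rw [this]
    exact mul_mem (hcomm m hm t) (hNm m hm _ ht)
  · intro g hg; exact ⟨0, by simpa using hg⟩
  · rintro g ⟨t, ht⟩
    have : g = rp ζ t * ((rp ζ t)⁻¹ * g) := by group
    rw [this]; exact mul_mem (hrpM t) (hle ht)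
  · intro h; rw [h] at hζN; exact hζN hζN₁

theorem Step.rat {Γ M N N₁ : Subgroup (U n)} {ζ : U n} (h : Step Γ M N N₁ ζ) : Rat Γ N₁ := by
  obtain ⟨K, hK, -, hKN⟩ := h.coc
  refine ⟨rp ζ '' Set.Icc 0 1 * K, (isCompact_Icc.image (continuous_rp' ζ)).mul hK, fun g hg => ?_⟩
  obtain ⟨s, hs, k, hk, γ, hγ, hγN, m, he⟩ := hKN g hg
  refine ⟨_, Set.mul_mem_mul ⟨s, hs, rfl⟩ hk, _, mul_mem hγ (zpow_mem h.hΓ m), ?_, he⟩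
  exact mul_mem (h.le hγN) (zpow_mem ((h.mem ζ).2 ⟨1, by simp [one_mem]⟩) m)

/-- the functional `l` gives a homomorphism on `N` extending `c`. -/
structure Good (Γ M N : Subgroup (U n)) (c : U n → ℝ) (l : V n →ₗ[ℝ] ℝ) : Prop where
  hom : ∀ g ∈ N, ∀ h ∈ N, l (lg (g * h)) = l (lg g) + l (lg h)
  inv : ∀ m ∈ M, ∀ g ∈ N, l (lg (m * g * m⁻¹)) = l (lg g)
  eq : ∀ γ ∈ Γ, γ ∈ N → l (lg γ) = c γ

theorem good_step {Γ M N N₁ : Subgroup (U n)} {ζ : U n} {c : U n → ℝ} {l : V n →ₗ[ℝ] ℝ}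
    (hd : Disc Γ) (hΓM : Γ ≤ M) (hM : IsR M) (hMR : Rat Γ M)
    (hN : IsR N) (hNm : Nm M N) (hc : ∀ γ ∈ Γ, ∀ δ ∈ Γ, c (γ * δ) = c γ + c δ)
    (hS : Step Γ M N N₁ ζ) (hl : Good Γ M N c l) :
    ∃ l₁ : V n →ₗ[ℝ] ℝ, Good Γ M N₁ c l₁ ∧ ∀ g ∈ N, l₁ (lg g) = l (lg g) := by
  have hζM := hΓM hS.hΓ
  have hrpM : ∀ t, rp ζ t ∈ M := hM.rp ζ hζM
  have hc1 : c 1 = 0 := by have := hc 1 (one_mem _) 1 (one_mem _); simp at this; exact this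
  have hcinv : ∀ γ ∈ Γ, c γ⁻¹ = - c γ := fun γ hγ => by
    have := hc γ hγ γ⁻¹ (inv_mem hγ)
    rw [mul_inv_cancel, hc1] at this; linarith
  have hinv : ∀ m ∈ M, ∀ g ∈ N, l (lg (m⁻¹ * g * m)) = l (lg g) := fun m hm g hg => by
    simpa using hl.inv m⁻¹ (inv_mem hm) g hg
  have hζN : lg ζ ∉ hN.lie := fun h => by
    have := hS.hN 1 (by rw [rp_one]; exact hN.mem_iff.2 h)
    norm_num at this
  obtain ⟨μ, hμ, hμ'⟩ := Submodule.exists_le_ker_of_notMem hζN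
  set l₁ : V n →ₗ[ℝ] ℝ := l + ((c ζ - l (lg ζ)) / μ (lg ζ)) • μ with hl₁
  have hl₁N : ∀ X ∈ hN.lie, l₁ X = l X := fun X hX => by
    have : μ X = 0 := hμ' hX
    simp [hl₁, this]
  have hl₁ζ : l₁ (lg ζ) = c ζ := by
    simp only [hl₁, LinearMap.add_apply, LinearMap.smul_apply, smul_eq_mul]
    rw [div_mul_cancel₀ _ hμ]; ring
  -- the key formula
  have key : ∀ t, ∀ ν ∈ N, l₁ (lg (rp ζ t * ν)) = t * c ζ + l (lg ν) := by
    intro t ν hν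
    set g := rp ζ t * ν with hg
    have hco : (rp ζ t)⁻¹ * g ∈ N := by rw [hg]; simpa using hν
    have hnorm : ∀ s : ℝ, ∀ x ∈ N, (rp (rp ζ t) s)⁻¹ * x * rp (rp ζ t) s ∈ N := by
      intro s x hx
      rw [← rp_mul]; exact hNm.inv (hrpM _) hx
    have h1 := lie_of_coset hN hnorm hco
    have h2 : l₁ (lg g) = t * c ζ + l (lg g - lg (rp ζ t)) := by
      rw [← hl₁N _ h1, map_sub, lg_rp, map_smul, hl₁ζ, smul_eq_mul]; ring
    rw [h2]; congr 1
    let ν' : ℝ → U n := fun s => (rp ζ (t * s))⁻¹ * rp g s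
    have hν' : ∀ s, ν' s ∈ N := by
      refine PRmap_nat hN (((PM.const ζ).rp (PR.mul_mem (alg_const t) PR_id)).inv.mul (PR_line g)) ?_
      intro k
      change (rp ζ (t * k))⁻¹ * rp g k ∈ N
      rw [rp_nat, rp_mul, rp_nat]
      exact inv_pow_mul_pow (a := rp ζ t) (fun x hx => hNm.inv (hrpM t) hx) hν k
    have hadd : ∀ s s', l (lg (ν' (s + s'))) = l (lg (ν' s)) + l (lg (ν' s')) := by
      intro s s'
      have : ν' (s + s') = ((rp ζ (t * s'))⁻¹ * ν' s * rp ζ (t * s')) * ν' s' := by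
        simp only [ν', mul_add, rp_add]
        group
      rw [this, hl.hom _ (hNm.inv (hrpM _) (hν' s)) _ (hν' s'), hinv _ (hrpM _) _ (hν' s)]
    have hmul : ∀ (k : ℕ) s, l (lg (ν' (k * s))) = k * l (lg (ν' s)) := by
      intro k s
      induction k with
      | zero => simp [ν']
      | succ k ih => push_cast; rw [add_mul, one_mul, hadd, ih]; ring
    have ht := trotter (-lg (rp ζ t)) (lg g)
    rw [neg_add_eq_sub] at ht
    have hcont : Continuous fun x : U n => l (lg x) :=
      (LinearMap.continuous_of_finiteDimensional l).comp continuous_lg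
    have ht2 := (hcont.tendsto _).comp ht
    rw [lg_ex] at ht2
    refine tendsto_nhds_unique ht2 (tendsto_const_nhds.congr fun k => ?_)
    have hk : (k : ℝ) + 1 ≠ 0 := by positivity
    have h3 : ex (((k : ℝ) + 1)⁻¹ • -lg (rp ζ t)) * ex (((k : ℝ) + 1)⁻¹ • lg g)
        = ν' ((k : ℝ) + 1)⁻¹ := by
      simp only [ν']
      rw [rp_mul, ← rp_neg, rp, rp]
      congr 2; ext i j; simp
    rw [Function.comp_apply, h3, lg_pow, map_smul, smul_eq_mul, ← hmul]
    push_cast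
    rw [mul_inv_cancel₀ hk]
    simp [ν', hg]
  have key' : ∀ g t, (rp ζ t)⁻¹ * g ∈ N → l₁ (lg g) = t * c ζ + l (lg ((rp ζ t)⁻¹ * g)) := by
    intro g t hg
    have := key t _ hg
    rwa [mul_inv_cancel_left] at this
  have hom₁ : ∀ g ∈ N₁, ∀ h ∈ N₁, l₁ (lg (g * h)) = l₁ (lg g) + l₁ (lg h) := by
    intro g hg h hh
    obtain ⟨t, ht⟩ := (hS.mem g).1 hg
    obtain ⟨s, hs⟩ := (hS.mem h).1 hh
    have : (rp ζ (t + s))⁻¹ * (g * h) =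
        ((rp ζ s)⁻¹ * ((rp ζ t)⁻¹ * g) * rp ζ s) * ((rp ζ s)⁻¹ * h) := by
      rw [rp_add]; group
    have hm := hNm.inv (hrpM s) ht
    rw [key' g t ht, key' h s hs, key' (g * h) (t + s) (by rw [this]; exact mul_mem hm hs), this,
      hl.hom _ hm _ hs, hinv _ (hrpM s) _ ht]
    ring
  have hN₁N : ∀ g ∈ N, l₁ (lg g) = l (lg g) := fun g hg => hl₁N _ (hN.mem_iff.1 hg)
  have hζN₁ : ζ ∈ N₁ := (hS.mem ζ).2 ⟨1, by simp [one_mem]⟩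
  refine ⟨l₁, ⟨hom₁, ?_, ?_⟩, hN₁N⟩
  · -- invariance
    have c1 : ∀ m ∈ M, l (lg (ζ⁻¹ * (m * ζ * m⁻¹))) = 0 := by
      refine ZD hM hMR (f := fun m => l (lg (ζ⁻¹ * (m * ζ * m⁻¹))))
        (((PM.const _).mul ((PM_id.mul (PM.const _)).mul PM_id.inv)).lin l) ?_
      intro γ hγ hγM
      have h1 : ζ⁻¹ * (γ * ζ * γ⁻¹) ∈ N := by simpa using hS.comm γ hγM 1
      have hz := hS.hΓ
      rw [hl.eq _ (mul_mem (inv_mem hz) (mul_mem (mul_mem hγ hz) (inv_mem hγ))) h1,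
        hc _ (inv_mem hz) _ (mul_mem (mul_mem hγ hz) (inv_mem hγ)), hc _ (mul_mem hγ hz) _ (inv_mem hγ),
        hc _ hγ _ hz, hcinv _ hz, hcinv _ hγ]
      ring
    have c2 : ∀ m ∈ M, ∀ t, l (lg ((rp ζ t)⁻¹ * (m * rp ζ t * m⁻¹))) = 0 := by
      intro m hm
      refine PR_nat (((PR_line ζ).inv.mul (((PM.const m).mul (PR_line ζ)).mul (PM.const _))).lin l) ?_
      intro k
      simp only [rp_nat, ← conj_pow]
      have hb : ζ⁻¹ * (m * ζ * m⁻¹) ∈ N := by simpa using hS.comm m hm 1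
      induction k with
      | zero => simp
      | succ k ih =>
        have hk : (ζ ^ k)⁻¹ * (m * ζ * m⁻¹) ^ k ∈ N := by
          have := inv_pow_mul_pow (a := ζ) (fun x hx => hNm.inv hζM hx) hb k
          simpa using this
        have : (ζ ^ (k + 1))⁻¹ * (m * ζ * m⁻¹) ^ (k + 1) =
            (ζ⁻¹ * ((ζ ^ k)⁻¹ * (m * ζ * m⁻¹) ^ k) * ζ) * (ζ⁻¹ * (m * ζ * m⁻¹)) := by
          rw [pow_succ ζ, pow_succ (m * ζ * m⁻¹)]; group
        rw [this, hl.hom _ (hNm.inv hζM hk) _ hb, hinv _ hζM _ hk, ih, c1 m hm, add_zero]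
    intro m hm g hg
    obtain ⟨t, ht⟩ := (hS.mem g).1 hg
    have h1 : (rp ζ t)⁻¹ * (m * g * m⁻¹) = (rp ζ t)⁻¹ * (m * rp ζ t * m⁻¹) * (m * ((rp ζ t)⁻¹ * g) * m⁻¹) := by
      group
    have h2 := hS.comm m hm t
    have h3 := hNm m hm _ ht
    rw [key' g t ht, key' (m * g * m⁻¹) t (by rw [h1]; exact mul_mem h2 h3), h1, hl.hom _ h2 _ h3,
      c2 m hm, hl.inv m hm _ ht, zero_add]
  · -- agreement with c
    intro γ hγ hγN
    obtain ⟨K, hK, hKN, hcoc⟩ := hS.coc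
    let ρ : U n → ℝ := fun g => c g - l₁ (lg g)
    have hρ : ∀ g ∈ Γ, g ∈ N₁ → ∀ h ∈ Γ, h ∈ N₁ → ρ (g * h) = ρ g + ρ h := by
      intro g hg hg' h hh hh'
      simp only [ρ, hc g hg h hh, hom₁ g hg' h hh']; ring
    have hρN : ∀ g ∈ Γ, g ∈ N → ρ g = 0 := fun g hg hg' => by
      simp only [ρ, hN₁N g hg', hl.eq g hg hg', sub_self]
    have hρζ : ρ ζ = 0 := by simp only [ρ, hl₁ζ, sub_self]
    have hρ1 : ρ 1 = 0 := hρN 1 (one_mem _) (one_mem _)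
    have hρinv : ∀ g ∈ Γ, g ∈ N₁ → ρ g⁻¹ = - ρ g := fun g hg hg' => by
      have := hρ g hg hg' g⁻¹ (inv_mem hg) (inv_mem hg')
      rw [mul_inv_cancel, hρ1] at this; linarith
    have hρpow : ∀ g ∈ Γ, g ∈ N₁ → ∀ k : ℕ, ρ (g ^ k) = k * ρ g := by
      intro g hg hg' k
      induction k with
      | zero => simp [hρ1]
      | succ k ih => rw [pow_succ, hρ _ (pow_mem hg k) (pow_mem hg' k) _ hg hg', ih]; push_cast; ring
    have hρζz : ∀ m : ℤ, ρ (ζ ^ m) = 0 := by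
      intro m
      cases m with
      | ofNat k => simp [hρpow ζ hS.hΓ hζN₁, hρζ]
      | negSucc k =>
        rw [zpow_negSucc, hρinv _ (pow_mem hS.hΓ _) (pow_mem hζN₁ _), hρpow ζ hS.hΓ hζN₁, hρζ]; simp
    have hfin : ((rp ζ '' Set.Icc 0 1 * K) ∩ Γ).Finite :=
      hd _ ((isCompact_Icc.image (continuous_rp' ζ)).mul hK)
    have hmemf : ∀ k : ℕ, (k : ℝ) * ρ γ ∈ ρ '' ((rp ζ '' Set.Icc 0 1 * K) ∩ Γ) := by
      intro k
      obtain ⟨s, hs, x, hx, δ, hδ, hδN, m, he⟩ := hcoc _ (pow_mem hγN k)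
      have hδζ : δ * ζ ^ m ∈ Γ := mul_mem hδ (zpow_mem hS.hΓ m)
      have hδζ' : δ * ζ ^ m ∈ N₁ := mul_mem (hS.le hδN) (zpow_mem hζN₁ m)
      have hη : rp ζ s * x = γ ^ k * (δ * ζ ^ m)⁻¹ := by rw [he]; group
      refine ⟨rp ζ s * x, ⟨Set.mul_mem_mul ⟨s, hs, rfl⟩ hx, ?_⟩, ?_⟩
      · rw [hη]; exact mul_mem (pow_mem hγ k) (inv_mem hδζ)
      · rw [hη, hρ _ (pow_mem hγ k) (pow_mem hγN k) _ (inv_mem hδζ) (inv_mem hδζ'), hρpow γ hγ hγN,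
          hρinv _ hδζ hδζ', hρ _ hδ (hS.le hδN) _ (zpow_mem hS.hΓ m) (zpow_mem hζN₁ m), hρN δ hδ hδN,
          hρζz]
        ring
    have : ρ γ = 0 := by
      by_contra h0
      refine Set.infinite_range_of_injective (f := fun k : ℕ => (k : ℝ) * ρ γ) ?_
        ((hfin.image ρ).subset (by rintro _ ⟨k, rfl⟩; exact hmemf k))
      intro a b hab
      exact Nat.cast_injective (mul_right_cancel₀ h0 hab)
    simp only [ρ] at this
    linarith

theorem good_extend {Γ M : Subgroup (U n)} {c : U n → ℝ} (hd : Disc Γ) (hΓM : Γ ≤ M) (hM : IsR M)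
    (hMR : Rat Γ M) (hc : ∀ γ ∈ Γ, ∀ δ ∈ Γ, c (γ * δ) = c γ + c δ)
    (k : ℕ) {N : Subgroup (U n)} (hN : IsR N) (hNR : Rat Γ N) (hNm : Nm M N) (hle : N ≤ M)
    (hk : Module.finrank ℝ hM.lie ≤ Module.finrank ℝ hN.lie + k) {l : V n →ₗ[ℝ] ℝ}
    (hl : Good Γ M N c l) :
    ∃ l₁ : V n →ₗ[ℝ] ℝ, Good Γ M M c l₁ ∧ ∀ g ∈ N, l₁ (lg g) = l (lg g) := by
  induction k generalizing N l with
  | zero =>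
    obtain rfl : N = M := hN.eq_of_finrank hM hle (by omega)
    exact ⟨l, hl, fun _ _ => rfl⟩
  | succ k ih =>
    by_cases hne : N = M
    · subst hne
      exact ⟨l, hl, fun _ _ => rfl⟩
    obtain ⟨N₁, ζ, hS⟩ := exists_step hΓM hM hMR hN hNR hNm hle hne
    obtain ⟨l₁, hl₁, h1⟩ := good_step hd hΓM hM hMR hN hNm hc hS hl
    have := hN.finrank_lt hS.isR hS.le hS.ne
    obtain ⟨l₂, hl₂, h2⟩ := ih hS.isR hS.rat hS.nm hS.le' (by omega) hl₁
    exact ⟨l₂, hl₂, fun g hg => by rw [h2 g (hS.le hg), h1 g hg]⟩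

end UP

namespace UP

variable {n : ℕ}

/-- closed invariant sets -/
structure Inv (Γ M N : Subgroup (U n)) (R Y : Set (U n)) : Prop where
  closed : IsClosed Y
  sub : Y ⊆ M
  ne : Y.Nonempty
  left : ∀ r ∈ R, ∀ y ∈ Y, r * y ∈ Y
  right : ∀ y ∈ Y, ∀ x ∈ N, y * x ∈ Y
  gam : ∀ y ∈ Y, ∀ γ ∈ Γ, y * γ ∈ Y

theorem exists_minimal_inv {Γ M N : Subgroup (U n)} {R Y₀ : Set (U n)} (hMR : Rat Γ M)
    (h : Inv Γ M N R Y₀) : ∃ Y, Y ⊆ Y₀ ∧ Inv Γ M N R Y ∧ ∀ Y', Y' ⊆ Y → Inv Γ M N R Y' → Y ⊆ Y' := by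
  obtain ⟨K, hK, hKM⟩ := hMR
  have hYK : ∀ Y, Inv Γ M N R Y → (Y ∩ K).Nonempty := by
    intro Y hY
    obtain ⟨y, hy⟩ := hY.ne
    obtain ⟨k, hk, γ, hγ, -, rfl⟩ := hKM y (hY.sub hy)
    exact ⟨k, by simpa using hY.gam _ hy γ⁻¹ (inv_mem hγ), hk⟩
  obtain ⟨Y, hYY, hY⟩ := zorn_superset_nonempty {Y | Inv Γ M N R Y} (by
    intro c hc hch hne
    refine ⟨⋂₀ c, ?_, fun s hs => Set.sInter_subset_of_mem hs⟩
    obtain ⟨Y₁, hY₁⟩ := hne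
    refine ⟨isClosed_sInter fun Y hY => (hc hY).closed, ?_, ?_, ?_, ?_, ?_⟩
    · exact (Set.sInter_subset_of_mem hY₁).trans (hc hY₁).sub
    · have : (⋂₀ ((fun Y => Y ∩ K) '' c)).Nonempty := by
        haveI : Nonempty ↑((fun Y => Y ∩ K) '' c) := ⟨⟨_, Y₁, hY₁, rfl⟩⟩
        refine IsCompact.nonempty_sInter_of_directed_nonempty_isCompact_isClosed ?_ ?_ ?_ ?_
        · rintro _ ⟨A, hA, rfl⟩ _ ⟨B, hB, rfl⟩
          rcases hch.total hA hB with h | h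
          · exact ⟨A ∩ K, ⟨A, hA, rfl⟩, subset_rfl, Set.inter_subset_inter_left _ h⟩
          · exact ⟨B ∩ K, ⟨B, hB, rfl⟩, Set.inter_subset_inter_left _ h, subset_rfl⟩
        · rintro _ ⟨A, hA, rfl⟩; exact hYK A (hc hA)
        · rintro _ ⟨A, hA, rfl⟩; exact hK.inter_left (hc hA).closed
        · rintro _ ⟨A, hA, rfl⟩; exact (hc hA).closed.inter hK.isClosed
      obtain ⟨x, hx⟩ := this
      exact ⟨x, fun A hA => (hx _ ⟨A, hA, rfl⟩).1⟩
    · exact fun r hr y hy A hA => (hc hA).left r hr y (hy A hA)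
    · exact fun y hy x hx A hA => (hc hA).right y (hy A hA) x hx
    · exact fun y hy x hx A hA => (hc hA).gam y (hy A hA) x hx) Y₀ h
  exact ⟨Y, hYY, hY.1, fun Y' hle hY' => hY.2 hY' hle⟩

theorem exists_lift {M : Subgroup (U n)} (hM : IsR M) {a : ℝ} (w : U n → AddCircle a)
    (hw : Continuous fun g : M => w g) : ∃ W : U n → ℝ, (Continuous fun g : M => W g) ∧
      (∀ g ∈ M, ((W g : ℝ) : AddCircle a) = w g) ∧
      ∀ (A : Type) [TopologicalSpace A] [PreconnectedSpace A] (φ : A → U n) (f : A → ℝ)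
        (_ : Continuous φ) (_ : ∀ x, φ x ∈ M) (_ : Continuous f)
        (_ : ∀ x, w (φ x) = ((f x : ℝ) : AddCircle a)) (x₀ : A) (_ : W (φ x₀) = f x₀),
        ∀ x, W (φ x) = f x := by
  classical
  have cov : IsCoveringMap (QuotientAddGroup.mk : ℝ → AddCircle a) := AddCircle.isCoveringMap_coe a
  obtain ⟨t₀, ht₀⟩ := QuotientAddGroup.mk_surjective (w 1)
  have hc : Continuous fun p : unitInterval × M => (⟨rp p.2.1 p.1.1, hM.rp _ p.2.2 _⟩ : M) :=
    Continuous.subtype_mk (continuous_rp.comp (f := fun p : unitInterval × M => (p.2.1, p.1.1)) (by fun_prop)) _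
  let H : C(unitInterval × M, AddCircle a) := ⟨fun p => w (rp p.2.1 p.1.1), hw.comp hc⟩
  have H0 : ∀ x : M, H (0, x) = ((ContinuousMap.const M t₀ x : ℝ) : AddCircle a) := by
    intro x
    change w (rp x.1 0) = _
    rw [rp_zero]; exact ht₀.symm
  let Ht := cov.liftHomotopy H (ContinuousMap.const M t₀) H0
  have hHt : ∀ p, ((Ht p : ℝ) : AddCircle a) = H p := fun p =>
    congrFun (cov.liftHomotopy_lifts H (ContinuousMap.const M t₀) H0) p
  let W' : M → ℝ := fun g => Ht (1, g)
  have hW' : Continuous W' := Ht.continuous.comp (by fun_prop)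
  let W : U n → ℝ := fun g => if h : g ∈ M then W' ⟨g, h⟩ else 0
  have hWW : ∀ g : M, W g = W' g := fun g => by simp [W]
  have hWw : ∀ g ∈ M, ((W g : ℝ) : AddCircle a) = w g := by
    intro g hg
    rw [show W g = W' ⟨g, hg⟩ by simp [W, hg]]
    refine (hHt (1, ⟨g, hg⟩)).trans ?_
    change w (rp g 1) = w g
    rw [rp_one]
  refine ⟨W, by simpa only [hWW] using hW', hWw, ?_⟩
  intro A _ _ φ f hφ hφM hf hwf x₀ hx₀ x
  have hcont : Continuous fun x => W (φ x) := by
    have : (fun x => W (φ x)) = W' ∘ fun x => (⟨φ x, hφM x⟩ : M) := by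
      ext x; exact hWW ⟨φ x, hφM x⟩
    rw [this]
    exact hW'.comp (hφ.subtype_mk _)
  refine congrFun (cov.eq_of_comp_eq (g₁ := fun x => W (φ x)) (g₂ := f) hcont hf ?_ x₀ hx₀) x
  ext x
  exact (hWw _ (hφM x)).trans (hwf x)

theorem connected_M {M : Subgroup (U n)} (hM : IsR M) : PreconnectedSpace M := by
  have : IsPreconnected (M : Set (U n)) := by
    refine isPreconnected_of_forall 1 fun g hg => ?_
    refine ⟨Set.range (rp g), ?_, ⟨0, by simp⟩, ⟨1, by simp⟩, isPreconnected_range (continuous_rp' g)⟩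
    rintro _ ⟨t, rfl⟩; exact hM.rp g hg t
  exact Subtype.preconnectedSpace this

/-- If there is a multivalued function with values in a circle, then there is a character. -/
theorem exists_char {Γ M N : Subgroup (U n)} {ζ : U n} {R : Set (U n)} (hd : Disc Γ) (hΓM : Γ ≤ M)
    (hM : IsR M) (hMR : Rat Γ M) (hN : IsR N) (hNR : Rat Γ N) (hNm : Nm M N) (hle : N ≤ M)
    (hζ : ζ ∈ Γ) (hR : IsPreconnected R) (hR1 : (1 : U n) ∈ R) (hRM : R ⊆ M)
    {a : ℝ} (ha : a ≠ 0) (w : U n → AddCircle a)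
    (hw : Continuous fun g : M => w g)
    (hwΓ : ∀ g ∈ M, ∀ γ ∈ Γ, w (g * γ) = w g)
    (hwN : ∀ g ∈ M, ∀ x ∈ N, w (g * x) = w g)
    (hwR : ∀ g ∈ M, ∀ r ∈ R, w (r * g) = w g)
    (hwζ : ∀ g ∈ M, ∀ t : ℝ, w (g * rp ζ t) = w g - (t : AddCircle a)) :
    ∃ L : Subgroup (U n), IsR L ∧ Rat Γ L ∧ Nm M L ∧ L ≤ M ∧ N ≤ L ∧ R ⊆ L ∧ ζ ∉ L := by
  obtain ⟨W, hWc, hWw, hWu⟩ := exists_lift hM w hw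
  haveI := connected_M hM
  haveI : PreconnectedSpace R := Subtype.preconnectedSpace hR
  have hζM := hΓM hζ
  -- relations for the lift
  have hWR : ∀ g ∈ M, ∀ r ∈ R, W (r * g) = W g := by
    intro g hg r hr
    exact hWu R (fun r => r.1 * g) (fun _ => W g) (by fun_prop) (fun r => mul_mem (hRM r.2) hg)
      continuous_const (fun r => by rw [hwR g hg r r.2, hWw g hg]) ⟨1, hR1⟩ (by simp) ⟨r, hr⟩
  have hWζ : W ζ = W 1 - 1 := by
    have := hWu ℝ (fun t => 1 * rp ζ t) (fun t => W 1 - t) (continuous_const.mul (continuous_rp' ζ))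
      (fun t => mul_mem (one_mem _) (hM.rp ζ hζM t)) (by fun_prop)
      (fun t => by rw [hwζ 1 (one_mem _), ← hWw 1 (one_mem _)]; rfl) 0 (by simp) 1
    simpa using this
  have hWN : ∀ x ∈ N, W x = W 1 := by
    intro x hx
    have := hWu ℝ (fun t => 1 * rp x t) (fun t => W 1) (continuous_const.mul (continuous_rp' x))
      (fun t => mul_mem (one_mem _) (hM.rp x (hle hx) t)) (by fun_prop)
      (fun t => by rw [hwN 1 (one_mem _) _ (hN.rp x hx t), ← hWw 1 (one_mem _)]) 0 (by simp) 1
    simpa using this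
  let c : U n → ℝ := fun g => W g - W 1
  have hWΓ : ∀ γ ∈ Γ, ∀ g ∈ M, W (g * γ) = W g + c γ := by
    intro γ hγ g hg
    have hcγ : ((c γ : ℝ) : AddCircle a) = 0 := by
      have h1 : w γ = w 1 := by simpa using hwΓ 1 (one_mem _) γ hγ
      have : ((c γ : ℝ) : AddCircle a) = (W γ : AddCircle a) - (W 1 : AddCircle a) := rfl
      rw [this, hWw _ (hΓM hγ), hWw _ (one_mem _), h1, sub_self]
    refine hWu M (fun g => g.1 * γ) (fun g => W g.1 + c γ) (by fun_prop)
      (fun g => mul_mem g.2 (hΓM hγ)) (hWc.add continuous_const) (fun g => ?_) 1 ?_ ⟨g, hg⟩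
    · have : ((W g.1 + c γ : ℝ) : AddCircle a) = (W g.1 : AddCircle a) + (c γ : AddCircle a) := rfl
      rw [this, hcγ, add_zero, hwΓ g.1 g.2 γ hγ, hWw _ g.2]
    · simp [c]
  have hc : ∀ γ ∈ Γ, ∀ δ ∈ Γ, c (γ * δ) = c γ + c δ := by
    intro γ hγ δ hδ
    have := hWΓ δ hδ γ (hΓM hγ)
    simp only [c] at this ⊢
    linarith
  have hcZ : ∀ γ ∈ Γ, ∃ m : ℤ, c γ = m * a := by
    intro γ hγ
    have h1 : w γ = w 1 := by simpa using hwΓ 1 (one_mem _) γ hγ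
    have : ((c γ : ℝ) : AddCircle a) = (W γ : AddCircle a) - (W 1 : AddCircle a) := rfl
    rw [hWw _ (hΓM hγ), hWw _ (one_mem _), h1, sub_self, AddCircle.coe_eq_zero_iff] at this
    obtain ⟨m, hm⟩ := this
    exact ⟨m, by rw [← hm]; simp⟩
  have hgood : Good Γ M N c 0 := ⟨by simp, by simp, fun γ _ hγN => by simp [c, hWN γ hγN]⟩
  obtain ⟨l, hl, hlN⟩ := good_extend hd hΓM hM hMR hc _ hN hNR hNm hle (Nat.le_add_left _ _) hgood
  have hlcont : Continuous fun x : U n => l (lg x) :=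
    (LinearMap.continuous_of_finiteDimensional l).comp continuous_lg
  obtain ⟨K, hK, hKM⟩ := id hMR
  have hKM' : ∀ g ∈ M, ∃ k ∈ K, k ∈ M ∧ ∃ γ ∈ Γ, g = k * γ := by
    intro g hg
    obtain ⟨k, hk, γ, hγ, hγM, rfl⟩ := hKM g hg
    exact ⟨k, hk, by simpa using mul_mem hg (inv_mem hγM), γ, hγ, rfl⟩
  have hbdd : ∃ C, ∀ g ∈ M, |W g - l (lg g)| ≤ C := by
    have hKc : IsCompact ((↑) ⁻¹' K : Set M) :=
      hM.closed.isClosedEmbedding_subtypeVal.isCompact_preimage hK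
    obtain ⟨C, hC⟩ := hKc.exists_bound_of_continuousOn (f := fun g : M => W g - l (lg g.1))
      (hWc.sub (hlcont.comp continuous_subtype_val)).continuousOn
    refine ⟨C, fun g hg => ?_⟩
    obtain ⟨k, hk, hkM, γ, hγ, rfl⟩ := hKM' g hg
    rw [hWΓ γ hγ k hkM, hl.hom k hkM γ (hΓM hγ), hl.eq γ hγ (hΓM hγ)]
    have := hC ⟨k, hkM⟩ hk
    rw [Real.norm_eq_abs] at this
    convert this using 2
    ring
  have hlR : ∀ r ∈ R, l (lg r) = 0 := by
    intro r hr
    obtain ⟨C, hC⟩ := hbdd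
    by_contra h0
    have hWp : ∀ k : ℕ, W (r ^ k) = W 1 := by
      intro k
      induction k with
      | zero => simp
      | succ k ih => rw [pow_succ', hWR _ (pow_mem (hRM hr) k) r hr, ih]
    have h2 : ∀ k : ℕ, (k : ℝ) * |l (lg r)| ≤ C + |W 1| := by
      intro k
      have := hC (r ^ k) (pow_mem (hRM hr) k)
      rw [hWp, lg_pow, map_smul, smul_eq_mul] at this
      rw [← Nat.abs_cast k, ← abs_mul]
      calc |(k : ℝ) * l (lg r)| = |W 1 - (W 1 - k * l (lg r))| := by congr 1; ring
        _ ≤ |W 1| + |W 1 - k * l (lg r)| := abs_sub _ _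
        _ ≤ _ := by linarith
    obtain ⟨k, hk⟩ := exists_nat_gt ((C + |W 1|) / |l (lg r)|)
    rw [div_lt_iff₀ (abs_pos.2 h0)] at hk
    exact absurd (h2 k) (not_le.2 hk)
  let L : Subgroup (U n) :=
    { carrier := {g | g ∈ M ∧ l (lg g) = 0}
      one_mem' := ⟨one_mem _, by simp⟩
      mul_mem' := by
        rintro g h ⟨hg, hg'⟩ ⟨hh, hh'⟩
        exact ⟨mul_mem hg hh, by rw [hl.hom g hg h hh, hg', hh', add_zero]⟩
      inv_mem' := by
        rintro g ⟨hg, hg'⟩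
        exact ⟨inv_mem hg, by rw [lg_inv, map_neg, hg', neg_zero]⟩ }
  refine ⟨L, ⟨?_, ?_⟩, ?_, ?_, fun g hg => hg.1, ?_, ?_, ?_⟩
  · exact hM.closed.inter (isClosed_eq hlcont continuous_const)
  · rintro g ⟨hg, hg'⟩ t
    exact ⟨hM.rp g hg t, by rw [lg_rp, map_smul, hg', smul_zero]⟩
  · -- rationality
    obtain ⟨C, hC⟩ := hK.exists_bound_of_continuousOn hlcont.continuousOn
    have hfin : {v : ℝ | ∃ γ ∈ Γ, c γ = v ∧ |v| ≤ C}.Finite := by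
      refine ((Set.finite_Icc (-⌈C / |a|⌉) ⌈C / |a|⌉).image (fun m : ℤ => (m : ℝ) * a)).subset ?_
      rintro v ⟨γ, hγ, rfl, hv⟩
      obtain ⟨m, hm⟩ := hcZ γ hγ
      refine ⟨m, ?_, hm.symm⟩
      rw [hm, abs_mul, ← le_div_iff₀ (abs_pos.2 ha)] at hv
      have h1 : |(m : ℝ)| ≤ (⌈C / |a|⌉ : ℝ) := hv.trans (Int.le_ceil _)
      rw [abs_le] at h1
      exact ⟨by exact_mod_cast h1.1, by exact_mod_cast h1.2⟩
    have hch : ∀ v : ℝ, ∃ b : U n, (∃ γ ∈ Γ, c γ = v) → b ∈ Γ ∧ c b = v := by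
      intro v
      by_cases h : ∃ γ ∈ Γ, c γ = v
      · obtain ⟨γ, hγ, he⟩ := h; exact ⟨γ, fun _ => ⟨hγ, he⟩⟩
      · exact ⟨1, fun h' => absurd h' h⟩
    choose b hb using hch
    refine ⟨K * (b '' {v : ℝ | ∃ γ ∈ Γ, c γ = v ∧ |v| ≤ C}), hK.mul (hfin.image b).isCompact, ?_⟩
    rintro g ⟨hg, hg'⟩
    obtain ⟨k, hk, hkM, γ, hγ, rfl⟩ := hKM' g hg
    have h1 : l (lg k) + c γ = 0 := by
      rw [← hg', hl.hom k hkM γ (hΓM hγ), hl.eq γ hγ (hΓM hγ)]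
    obtain ⟨hbΓ, hbc⟩ := hb (c γ) ⟨γ, hγ, rfl⟩
    refine ⟨k * b (c γ), Set.mul_mem_mul hk ⟨c γ, ⟨γ, hγ, rfl, ?_⟩, rfl⟩, (b (c γ))⁻¹ * γ,
      mul_mem (inv_mem hbΓ) hγ, ⟨mul_mem (inv_mem (hΓM hbΓ)) (hΓM hγ), ?_⟩, by group⟩
    · have := hC k hk
      rw [Real.norm_eq_abs] at this
      rwa [show c γ = - l (lg k) by linarith, abs_neg]
    · rw [hl.hom _ (inv_mem (hΓM hbΓ)) _ (hΓM hγ), lg_inv, map_neg, hl.eq _ hbΓ (hΓM hbΓ),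
        hl.eq γ hγ (hΓM hγ), hbc]
      ring
  · rintro m hm g ⟨hg, hg'⟩
    exact ⟨mul_mem (mul_mem hm hg) (inv_mem hm), by rw [hl.inv m hm g hg, hg']⟩
  · intro g hg
    exact ⟨hle hg, by rw [hlN g hg]; rfl⟩
  · exact fun r hr => ⟨hRM hr, hlR r hr⟩
  · rintro ⟨-, h⟩
    rw [hl.eq ζ hζ hζM] at h
    simp only [c, hWζ] at h
    linarith

theorem U_thm_aux {Γ M M' : Subgroup (U n)} {R : Set (U n)} (hd : Disc Γ) (hΓM : Γ ≤ M)
    (hM : IsR M) (hMR : Rat Γ M) 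
    (hR : IsPreconnected R) (hR1 : (1 : U n) ∈ R) (hRM : R ⊆ M)
    (hno : ∀ L : Subgroup (U n), IsR L → Rat Γ L → Nm M L → L ≤ M → M' ≤ L → R ⊆ L → L = M)
    (k : ℕ) {N : Subgroup (U n)} (hN : IsR N) (hNR : Rat Γ N) (hNm : Nm M N) (hle : N ≤ M)
    (hM'N : M' ≤ N) (hk : Module.finrank ℝ hM.lie ≤ Module.finrank ℝ hN.lie + k)
    {Y : Set (U n)} (hY : Inv Γ M N R Y) : (M : Set (U n)) ⊆ Y := by
  have triv : ∀ N : Subgroup (U n), N = M → ∀ {Y : Set (U n)}, Inv Γ M N R Y → (M : Set (U n)) ⊆ Y := by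
    intro N h Y hY g hg
    obtain ⟨y, hy⟩ := hY.ne
    have := hY.right y hy (y⁻¹ * g) (by rw [h]; exact mul_mem (inv_mem (hY.sub hy)) hg)
    simpa using this
  induction k generalizing N Y with
  | zero => exact triv N (hN.eq_of_finrank hM hle (by omega)) hY
  | succ k ih =>
    by_cases hne : N = M
    · exact triv N hne hY
    obtain ⟨N₁, ζ, hS⟩ := exists_step hΓM hM hMR hN hNR hNm hle hne
    have hlt := hN.finrank_lt hS.isR hS.le hS.ne
    obtain ⟨Y₁, hYY, hY₁, hmin⟩ := exists_minimal_inv hMR hY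
    refine Set.Subset.trans ?_ hYY
    have hζM := hΓM hS.hΓ
    have hrpM : ∀ t, rp ζ t ∈ M := hM.rp ζ hζM
    have hΓc : ∀ γ ∈ Γ, ∀ t : ℝ, ∃ ν ∈ N, γ * rp ζ t = rp ζ t * γ * ν := by
      intro γ hγ t
      refine ⟨γ⁻¹ * (rp ζ t)⁻¹ * γ * rp ζ t, ?_, by group⟩
      have h1 := hS.comm γ⁻¹ (inv_mem (hΓM hγ)) (-t)
      have h2 := hNm.inv (hrpM t) h1
      convert h2 using 1
      rw [rp_neg]; group
    -- first: Y₁ * N₁ is everything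
    have hZ : Inv Γ M N₁ R (Y₁ * rp ζ '' Set.Icc 0 1) := by
      have hfrac : ∀ y ∈ Y₁, ∀ t : ℝ, y * rp ζ t ∈ Y₁ * rp ζ '' Set.Icc 0 1 := by
        intro y hy t
        have : y * rp ζ t = (y * ζ ^ ⌊t⌋) * rp ζ (Int.fract t) := by
          rw [← rp_int, mul_assoc, ← rp_add, Int.floor_add_fract]
        rw [this]
        exact Set.mul_mem_mul (hY₁.gam y hy _ (zpow_mem hS.hΓ _))
          ⟨_, ⟨Int.fract_nonneg t, (Int.fract_lt_one t).le⟩, rfl⟩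
      refine ⟨hY₁.closed.mul_right_of_isCompact (isCompact_Icc.image (continuous_rp' ζ)), ?_, ?_, ?_, ?_, ?_⟩
      · rintro _ ⟨y, hy, _, ⟨t, -, rfl⟩, rfl⟩
        exact mul_mem (hY₁.sub hy) (hrpM t)
      · obtain ⟨y, hy⟩ := hY₁.ne
        exact ⟨_, hfrac y hy 0⟩
      · rintro r hr _ ⟨y, hy, _, ⟨t, ht, rfl⟩, rfl⟩
        have := Set.mul_mem_mul (hY₁.left r hr y hy) ⟨t, ht, rfl⟩ (t := rp ζ '' Set.Icc 0 1)
        rwa [mul_assoc] at this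
      · rintro _ ⟨y, hy, _, ⟨t, ht, rfl⟩, rfl⟩ x hx
        obtain ⟨s, hs⟩ := (hS.mem x).1 hx
        have : y * rp ζ t * x = y * (rp ζ (t + s) * ((rp ζ s)⁻¹ * x) * (rp ζ (t + s))⁻¹) * rp ζ (t + s) := by
          rw [rp_add]; group
        dsimp only
        rw [this]
        exact hfrac _ (hY₁.right y hy _ (hNm _ (hrpM _) _ hs)) _
      · rintro _ ⟨y, hy, _, ⟨t, ht, rfl⟩, rfl⟩ γ hγ
        obtain ⟨ν, hν, he⟩ := hΓc γ hγ t
        have : y * rp ζ t * γ = (y * γ * (rp ζ t * ν⁻¹ * (rp ζ t)⁻¹)) * rp ζ t := by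
          have : rp ζ t * γ = γ * rp ζ t * ν⁻¹ := by rw [he]; group
          rw [mul_assoc, this]; group
        dsimp only
        rw [this]
        exact hfrac _ (hY₁.right _ (hY₁.gam y hy γ hγ) _ (hNm _ (hrpM _) _ (inv_mem hν))) _
    have hall := ih hS.isR hS.rat hS.nm hS.le' (hM'N.trans hS.le) (by omega) hZ
    have hex : ∀ g ∈ M, ∃ t ∈ Set.Icc (-1 : ℝ) 0, g * rp ζ t ∈ Y₁ := by
      intro g hg
      obtain ⟨y, hy, _, ⟨t, ht, rfl⟩, rfl⟩ := hall hg
      refine ⟨-t, ⟨by linarith [ht.2], by linarith [ht.1]⟩, ?_⟩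
      simpa [rp_neg] using hy
    -- translations
    have htr : ∀ t : ℝ, ∀ y ∈ Y₁, y * rp ζ t ∈ Y₁ → ∀ y' ∈ Y₁, y' * rp ζ t ∈ Y₁ := by
      intro t y hy hyt y' hy'
      have hI : Inv Γ M N R (Y₁ ∩ {z | z * rp ζ t ∈ Y₁}) := by
        refine ⟨hY₁.closed.inter (hY₁.closed.preimage (continuous_mul_const _)), ?_, ⟨y, hy, hyt⟩, ?_, ?_, ?_⟩
        · exact fun z hz => hY₁.sub hz.1
        · rintro r hr z ⟨hz, hz'⟩
          exact ⟨hY₁.left r hr z hz, by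
            change r * z * rp ζ t ∈ Y₁
            rw [mul_assoc]; exact hY₁.left r hr _ hz'⟩
        · rintro z ⟨hz, hz'⟩ x hx
          refine ⟨hY₁.right z hz x hx, ?_⟩
          have : z * x * rp ζ t = z * rp ζ t * ((rp ζ t)⁻¹ * x * rp ζ t) := by group
          change z * x * rp ζ t ∈ Y₁
          rw [this]
          exact hY₁.right _ hz' _ (hNm.inv (hrpM t) hx)
        · rintro z ⟨hz, hz'⟩ γ hγ
          refine ⟨hY₁.gam z hz γ hγ, ?_⟩
          obtain ⟨ν, hν, he⟩ := hΓc γ hγ t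
          change z * γ * rp ζ t ∈ Y₁
          rw [mul_assoc, he, ← mul_assoc, ← mul_assoc]
          exact hY₁.right _ (hY₁.gam _ hz' γ hγ) ν hν
      exact (hmin _ Set.inter_subset_left hI hy').2
    obtain ⟨y₀, hy₀⟩ := hY₁.ne
    let T : AddSubgroup ℝ :=
      { carrier := {t | ∀ y ∈ Y₁, y * rp ζ t ∈ Y₁}
        zero_mem' := by intro y hy; simpa using hy
        add_mem' := by
          intro s t hs ht y hy
          rw [rp_add, ← mul_assoc]
          exact ht _ (hs y hy)
        neg_mem' := by
          intro t ht
          exact htr (-t) _ (ht y₀ hy₀) (by simpa [rp_neg] using hy₀) }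
    have hT1 : (1 : ℝ) ∈ T := fun y hy => by rw [rp_one]; exact hY₁.gam y hy ζ hS.hΓ
    have hTc : IsClosed (T : Set ℝ) := by
      have : (T : Set ℝ) = ⋂ y ∈ Y₁, (fun t => y * rp ζ t) ⁻¹' Y₁ := by
        ext t; simp [T]
      rw [this]
      exact isClosed_biInter fun y _ => hY₁.closed.preimage (continuous_const.mul (continuous_rp' ζ))
    rcases T.dense_or_cyclic with hden | ⟨a, ha⟩
    · have hTu : ∀ t, t ∈ T := fun t => by
        have := hTc.closure_eq ▸ hden t
        exact this
      intro g hg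
      obtain ⟨t, -, ht⟩ := hex g hg
      have := hTu (-t) _ ht
      simpa [rp_neg] using this
    · exfalso
      rw [← AddSubgroup.zmultiples_eq_closure] at ha
      have ha0 : a ≠ 0 := by
        rintro rfl
        rw [ha, AddSubgroup.mem_zmultiples_iff] at hT1
        obtain ⟨m, hm⟩ := hT1
        simp at hm
      have hsel : ∀ g : U n, ∃ t : ℝ, g ∈ M → g * rp ζ t ∈ Y₁ := by
        intro g
        by_cases hg : g ∈ M
        · obtain ⟨t, -, ht⟩ := hex g hg; exact ⟨t, fun _ => ht⟩
        · exact ⟨0, fun h => absurd h hg⟩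
      choose τ hτ using hsel
      let w : U n → AddCircle a := fun g => (τ g : AddCircle a)
      have hwiff : ∀ g ∈ M, ∀ t : ℝ, w g = (t : AddCircle a) ↔ g * rp ζ t ∈ Y₁ := by
        intro g hg t
        have h1 : w g = (t : AddCircle a) ↔ -τ g + t ∈ T := by
          rw [ha]; exact QuotientAddGroup.eq
        rw [h1]
        have h2 : g * rp ζ t = g * rp ζ (τ g) * rp ζ (-τ g + t) := by
          rw [mul_assoc, ← rp_add]; congr 2; ring
        constructor
        · intro h
          rw [h2]; exact h _ (hτ g hg)
        · intro h
          exact htr _ _ (hτ g hg) (by rw [← h2]; exact h)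
      have hwc : Continuous fun g : M => w g := by
        rw [continuous_iff_isClosed]
        intro C hC
        have : (fun g : M => w g) ⁻¹' C = Prod.fst '' {p : M × Set.Icc (-1 : ℝ) 0 |
            p.1.1 * rp ζ p.2.1 ∈ Y₁ ∧ ((p.2.1 : ℝ) : AddCircle a) ∈ C} := by
          ext g
          constructor
          · intro hg
            obtain ⟨t, ht, ht'⟩ := hex g.1 g.2
            refine ⟨(g, ⟨t, ht⟩), ⟨ht', ?_⟩, rfl⟩
            change ((t : ℝ) : AddCircle a) ∈ C
            rw [← (hwiff g.1 g.2 t).2 ht']; exact hg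
          · rintro ⟨⟨g', t⟩, ⟨h1, h2⟩, rfl⟩
            change w g'.1 ∈ C
            rw [(hwiff g'.1 g'.2 t.1).2 h1]; exact h2
        rw [this]
        refine isClosedMap_fst_of_compactSpace _ (IsClosed.inter ?_ ?_)
        · exact hY₁.closed.preimage ((continuous_subtype_val.comp continuous_fst).mul
            ((continuous_rp' ζ).comp (continuous_subtype_val.comp continuous_snd)))
        · exact hC.preimage ((AddCircle.continuous_mk' a).comp (continuous_subtype_val.comp continuous_snd))
      obtain ⟨L, hL, hLR, hLn, hLM, hNL, hRL, hζL⟩ := exists_char hd hΓM hM hMR hN hNR hNm hle hS.hΓ hR hR1 hRM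
        ha0 w hwc
        (by
          intro g hg γ hγ
          refine (hwiff _ (mul_mem hg (hΓM hγ)) (τ g)).2 ?_
          obtain ⟨ν, hν, he⟩ := hΓc γ hγ (τ g)
          rw [mul_assoc, he, ← mul_assoc, ← mul_assoc]
          exact hY₁.right _ (hY₁.gam _ (hτ g hg) γ hγ) ν hν)
        (by
          intro g hg x hx
          refine (hwiff _ (mul_mem hg (hle hx)) (τ g)).2 ?_
          have : g * x * rp ζ (τ g) = g * rp ζ (τ g) * ((rp ζ (τ g))⁻¹ * x * rp ζ (τ g)) := by group
          rw [this]
          exact hY₁.right _ (hτ g hg) _ (hNm.inv (hrpM _) hx))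
        (by
          intro g hg r hr
          refine (hwiff _ (mul_mem (hRM hr) hg) (τ g)).2 ?_
          rw [mul_assoc]
          exact hY₁.left r hr _ (hτ g hg))
        (by
          intro g hg t
          refine (hwiff _ (mul_mem hg (hrpM t)) (τ g - t)).2 ?_
          rw [mul_assoc, ← rp_add, add_sub_cancel]
          exact hτ g hg)
      exact hζL ((hno L hL hLR hLn hLM (hM'N.trans hNL) hRL) ▸ hζM)

theorem U_thm {Γ M M' : Subgroup (U n)} {R : Set (U n)} (hd : Disc Γ) (hΓM : Γ ≤ M)
    (hM : IsR M) (hMR : Rat Γ M) (hM' : IsR M') (hM'R : Rat Γ M') (hM'n : Nm M M') (hle : M' ≤ M)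
    (hR : IsPreconnected R) (hR1 : (1 : U n) ∈ R) (hRM : R ⊆ M)
    (hno : ∀ L : Subgroup (U n), IsR L → Rat Γ L → Nm M L → L ≤ M → M' ≤ L → R ⊆ L → L = M)
    {Y : Set (U n)} (hY : Inv Γ M M' R Y) : (M : Set (U n)) ⊆ Y :=
  U_thm_aux hd hΓM hM hMR hR hR1 hRM hno _ hM' hM'R hM'n hle le_rfl (Nat.le_add_left _ _) hY

end UP

namespace UP

variable {n : ℕ}

theorem baire_line {T : Type*} [TopologicalSpace T] [BaireSpace T] (ℓ : T → T → ℝ → T)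
    (hc : ∀ x y, Continuous (ℓ x y)) (h0 : ∀ x y, ℓ x y 0 = x) {C : Set (Set T)}
    (hC : C.Countable) (hcl : ∀ B ∈ C, IsClosed B)
    (hB : ∀ B ∈ C, ∀ x y, {t | ℓ x y t ∈ B}.Infinite → y ∈ B) (hne : ∀ B ∈ C, ∃ x, x ∉ B) :
    Dense {x | ∀ B ∈ C, x ∉ B} := by
  have h := dense_biInter_of_isOpen (f := fun B : Set T => Bᶜ) (fun B hB => (hcl B hB).isOpen_compl) hC (by
    intro B hBC
    rw [← interior_eq_empty_iff_dense_compl, Set.eq_empty_iff_forall_notMem]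
    intro x hx
    obtain ⟨y, hy⟩ := hne B hBC
    refine hy (hB B hBC x y ?_)
    have h1 : ∀ᶠ t in nhds (0 : ℝ), ℓ x y t ∈ B := by
      have := (hc x y).tendsto 0
      rw [h0] at this
      exact this (mem_interior_iff_mem_nhds.1 hx)
    exact infinite_of_mem_nhds 0 h1)
  convert h using 1
  ext x; simp

/-- polynomial functions on `ℝ^d` -/
def Pd (d : ℕ) : Subalgebra ℝ ((Fin d → ℝ) → ℝ) :=
  (MvPolynomial.aeval (R := ℝ) (S₁ := (Fin d → ℝ) → ℝ) (fun (i : Fin d) (x : Fin d → ℝ) => x i)).range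

theorem mem_Pd {d : ℕ} {f : (Fin d → ℝ) → ℝ} :
    f ∈ Pd d ↔ ∃ p : MvPolynomial (Fin d) ℝ, ∀ x, f x = MvPolynomial.eval x p := by
  have key : ∀ (p : MvPolynomial (Fin d) ℝ) x,
      (MvPolynomial.aeval (R := ℝ) (S₁ := (Fin d → ℝ) → ℝ) (fun (i : Fin d) (x : Fin d → ℝ) => x i) p) x
        = MvPolynomial.eval x p := by
    intro p x
    induction p using MvPolynomial.induction_on with
    | C a => simp
    | add p q hp hq => rw [map_add, Pi.add_apply, hp, hq, map_add]
    | mul_X p i hp => rw [map_mul, Pi.mul_apply, hp, map_mul]; simp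
  constructor
  · rintro ⟨p, rfl⟩
    exact ⟨p, key p⟩
  · rintro ⟨p, hp⟩
    exact ⟨p, by ext x; rw [hp]; exact key p x⟩

theorem Pd_coord {d : ℕ} (i : Fin d) : (fun x : Fin d → ℝ => x i) ∈ Pd d :=
  mem_Pd.2 ⟨MvPolynomial.X i, by simp⟩

theorem PR.comp {T : Type*} {A : Subalgebra ℝ (T → ℝ)} {f : ℝ → ℝ} (hf : f ∈ PR) {τ : T → ℝ}
    (hτ : τ ∈ A) : (fun x => f (τ x)) ∈ A := by
  obtain ⟨p, hp⟩ := mem_PR.1 hf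
  simp only [hp, Polynomial.eval_eq_sum_range]
  refine alg_sum _ fun i _ => A.mul_mem (alg_const _) ?_
  exact A.pow_mem hτ i

theorem PM.compPR {T : Type*} {A : Subalgebra ℝ (T → ℝ)} {F : ℝ → U n} (hF : PM PR F) {τ : T → ℝ}
    (hτ : τ ∈ A) : PM A (fun x => F (τ x)) := fun i j => PR.comp (hF i j) hτ

/-- finite expansion of a linear image of the logarithm -/
theorem expand {φ : (Fin 2 → ℝ) → U n} (h : PM (Pd 2) φ) (π : V n →ₗ[ℝ] V n) :
    ∃ (D : Finset (Fin 2 →₀ ℕ)) (c : (Fin 2 →₀ ℕ) → V n), (∀ d, ∃ X, c d = π X) ∧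
      ∀ x, π (lg (φ x)) = ∑ d ∈ D, (x 0 ^ d 0 * x 1 ^ d 1) • c d := by
  classical
  let b := Module.finBasis ℝ (V n)
  have h1 : ∀ k, ∃ p : MvPolynomial (Fin 2) ℝ, ∀ x, b.coord k (lg (φ x)) = MvPolynomial.eval x p :=
    fun k => mem_Pd.1 (h.lin (b.coord k))
  choose p hp using h1
  refine ⟨Finset.univ.biUnion fun k => (p k).support,
    fun d => π (∑ k, (p k).coeff d • b k), fun d => ⟨_, rfl⟩, fun x => ?_⟩
  have h2 : ∀ k, b.coord k (lg (φ x)) = ∑ d ∈ Finset.univ.biUnion fun k => (p k).support,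
      (x 0 ^ d 0 * x 1 ^ d 1) * (p k).coeff d := by
    intro k
    rw [hp, MvPolynomial.eval_eq']
    rw [Finset.sum_subset (Finset.subset_biUnion_of_mem (fun k => (p k).support) (Finset.mem_univ k))]
    · refine Finset.sum_congr rfl fun d _ => ?_
      rw [Fin.prod_univ_two, mul_comm]
    · intro d _ hd
      rw [MvPolynomial.notMem_support_iff.1 hd, zero_mul]
  have h3 : lg (φ x) = ∑ k, b.coord k (lg (φ x)) • b k := (b.sum_repr _).symm
  rw [h3]
  simp only [h2, Finset.sum_smul]
  rw [Finset.sum_comm, map_sum]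
  refine Finset.sum_congr rfl fun d _ => ?_
  rw [← map_smul, Finset.smul_sum]
  simp only [smul_smul]

theorem exists_limit {G P : Subgroup (U n)} (hG : IsR G) (hP : IsR P) (hPG : P ≤ G) (hN : Nm G P)
    {F : ℝ → U n} (hF : PM PR F) (hFG : ∀ t, F t ∈ G) (hF0 : F 0 = 1) (hFP : ∃ t, F t ∉ P) :
    ∃ r : ℝ → U n, Continuous r ∧ r 0 = 1 ∧ (∀ u, r u ∈ G) ∧ (∃ u, r u ∉ P) ∧
      ∀ u, ∃ (σ : ℝ → ℝ) (ψ : ℝ → U n), Tendsto σ atTop atTop ∧ Tendsto ψ atTop (nhds (r u)) ∧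
        ∀ᶠ t in atTop, ∃ p ∈ P, F (σ t) = ψ t * p * F t := by
  classical
  obtain ⟨s, hs⟩ := hP.lie.mkQ.exists_rightInverse_of_surjective (LinearMap.range_eq_top.2 (Submodule.mkQ_surjective _))
  have hs' : ∀ y, hP.lie.mkQ (s y) = y := fun y => LinearMap.congr_fun hs y
  let π : V n →ₗ[ℝ] V n := s ∘ₗ hP.lie.mkQ
  have hπ1 : ∀ X, X - π X ∈ hP.lie := by
    intro X
    rw [← Submodule.ker_mkQ hP.lie, LinearMap.mem_ker, map_sub]
    simp only [π, LinearMap.comp_apply, hs', sub_self]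
  have hπ0 : ∀ X ∈ hP.lie, π X = 0 := by
    intro X hX
    have : hP.lie.mkQ X = 0 := by rwa [← LinearMap.mem_ker, Submodule.ker_mkQ]
    simp only [π, LinearMap.comp_apply, this, map_zero]
  have hππ : ∀ X, π (π X) = π X := by
    intro X; simp only [π, LinearMap.comp_apply, hs']
  have hπG : ∀ X ∈ hG.lie, π X ∈ hG.lie := by
    intro X hX
    have := hG.lie.sub_mem hX ((hP.le_iff hG).1 hPG (hπ1 X))
    rwa [sub_sub_cancel] at this
  have hφ : PM (Pd 2) (fun x : Fin 2 → ℝ => F (x 0 + x 1) * (F (x 0))⁻¹) :=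
    (hF.compPR ((Pd 2).add_mem (Pd_coord 0) (Pd_coord 1))).mul (hF.compPR (Pd_coord 0)).inv
  obtain ⟨D, c, hcπ, hc⟩ := expand hφ π
  have hcc : ∀ d, π (c d) = c d := by
    intro d; obtain ⟨X, hX⟩ := hcπ d; rw [hX, hππ]
  set D' := D.filter fun d => 1 ≤ d 1 ∧ c d ≠ 0 with hD'
  have hE : ∀ t s : ℝ, π (lg (F (t + s) * (F t)⁻¹)) = ∑ d ∈ D', (t ^ d 0 * s ^ d 1) • c d := by
    intro t s
    have h1 := hc ![t, s]
    have h2 := hc ![t, 0]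
    simp only [Matrix.cons_val_zero, Matrix.cons_val_one] at h1 h2
    rw [add_zero, mul_inv_cancel, lg_one, map_zero] at h2
    rw [← sub_zero (π _), h1]
    conv_lhs => rw [h2]
    rw [← Finset.sum_sub_distrib, hD', Finset.sum_filter]
    refine Finset.sum_congr rfl fun d _ => ?_
    split_ifs with hd
    · rw [zero_pow (by omega), mul_zero, zero_smul, sub_zero]
    · by_cases hcd : c d = 0
      · simp [hcd]
      · have : d 1 = 0 := by
          by_contra h; exact hd ⟨by omega, hcd⟩
        simp [this]
  have hne : D'.Nonempty := by
    by_contra h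
    rw [Finset.not_nonempty_iff_eq_empty] at h
    obtain ⟨t, ht⟩ := hFP
    apply ht
    have h1 := hE 0 t
    rw [h, Finset.sum_empty, zero_add, hF0, inv_one, mul_one] at h1
    have h2 := hπ1 (lg (F t))
    rw [h1, sub_zero] at h2
    exact hP.mem_iff.2 h2
  obtain ⟨d₀, hd₀, hmax⟩ := D'.exists_max_image (fun d => (d 0 : ℚ) / d 1) hne
  set a := d₀ 0 with ha
  set b := d₀ 1 with hb
  have hd₀' := (Finset.mem_filter.1 hd₀).2
  have hb1 : 1 ≤ b := hd₀'.1
  have hle : ∀ d ∈ D', b * d 0 ≤ a * d 1 := by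
    intro d hd
    have h1 := hmax d hd
    have h2 := (Finset.mem_filter.1 hd).2.1
    rw [div_le_div_iff₀ (by exact_mod_cast h2) (by exact_mod_cast hb1)] at h1
    have h3 : d 0 * b ≤ a * d 1 := by exact_mod_cast h1
    linarith
  set D'' := D'.filter fun d => b * d 0 = a * d 1 with hD''
  let q : ℝ → V n := fun u => ∑ d ∈ D'', (u ^ d 1) • c d
  have hqπ : ∀ u, π (q u) = q u := by
    intro u; simp only [q, map_sum, map_smul, hcc]
  have hqc : Continuous q := continuous_finsetSum _ fun d _ => by fun_prop
  have hlim : ∀ u, Tendsto (fun τ : ℝ => π (lg (F (τ ^ b + u / τ ^ a) * (F (τ ^ b))⁻¹))) atTop (nhds (q u)) := by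
    intro u
    have hq : q u = ∑ d ∈ D', (if b * d 0 = a * d 1 then u ^ d 1 else 0) • c d := by
      simp only [q, hD'', Finset.sum_filter]
      refine Finset.sum_congr rfl fun d _ => ?_
      split_ifs <;> simp
    simp only [hE, hq]
    refine tendsto_finsetSum _ fun d hd => Tendsto.smul_const ?_ _
    have he : ∀ᶠ τ : ℝ in atTop, (τ ^ b) ^ d 0 * (u / τ ^ a) ^ d 1 = u ^ d 1 * (τ ^ (b * d 0) / τ ^ (a * d 1)) := by
      filter_upwards with τ
      rw [div_pow, ← pow_mul, ← pow_mul]; ring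
    refine Tendsto.congr' (he.mono fun _ h => h.symm) ?_
    split_ifs with h
    · refine tendsto_const_nhds.congr' ?_
      filter_upwards [eventually_gt_atTop 0] with τ hτ
      rw [h, div_self (by positivity), mul_one]
    · have := (tendsto_pow_div_pow_atTop_zero (𝕜 := ℝ) (lt_of_le_of_ne (hle d hd) h)).const_mul (u ^ d 1)
      rwa [mul_zero] at this
  have hqG : ∀ u, q u ∈ hG.lie := by
    intro u
    have hcl : IsClosed (hG.lie : Set (V n)) := Submodule.closed_of_finiteDimensional _
    refine hcl.mem_of_tendsto (hlim u) (Eventually.of_forall fun τ => hπG _ ?_)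
    exact hG.mem_iff.1 (mul_mem (hFG _) (inv_mem (hFG _)))
  refine ⟨fun u => ex (q u), continuous_ex.comp hqc, ?_, fun u => hqG u, ?_, ?_⟩
  · have : q 0 = 0 := by
      refine Finset.sum_eq_zero fun d hd => ?_
      have := (Finset.mem_filter.1 (Finset.mem_filter.1 hd).1).2.1
      rw [zero_pow (by omega), zero_smul]
    simp only [this, ex_zero]
  · by_contra hcon
    push Not at hcon
    have hq0 : ∀ u, q u = 0 := by
      intro u
      rw [← hqπ]
      exact hπ0 _ (hcon u)
    obtain ⟨l, hl⟩ := Submodule.exists_le_ker_of_notMem (p := (⊥ : Submodule ℝ (V n))) (v := c d₀) (by simpa using hd₀'.2)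
    let pp : Polynomial ℝ := ∑ d ∈ D'', Polynomial.monomial (d 1) (l (c d))
    have hpp : pp = 0 := by
      refine Polynomial.funext fun u => ?_
      have := congrArg l (hq0 u)
      simp only [q, map_sum, map_smul, map_zero, smul_eq_mul] at this
      simp only [pp, Polynomial.eval_finsetSum, Polynomial.eval_monomial, Polynomial.eval_zero]
      rw [← this]
      exact Finset.sum_congr rfl fun d _ => mul_comm _ _
    have hco : pp.coeff b = l (c d₀) := by
      simp only [pp, Polynomial.finsetSum_coeff, Polynomial.coeff_monomial]
      rw [Finset.sum_eq_single d₀]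
      · simp [hb]
      · intro d hd hdd
        rw [if_neg]
        intro h
        apply hdd
        have h1 := (Finset.mem_filter.1 hd).2
        rw [h, mul_comm] at h1
        have h2 : d 0 = a := Nat.eq_of_mul_eq_mul_right hb1 h1
        ext i
        fin_cases i
        · exact h2
        · exact h
      · intro h
        exact absurd (Finset.mem_filter.2 ⟨hd₀, by rw [mul_comm]⟩) h
    rw [hpp, Polynomial.coeff_zero] at hco
    exact hl.1 hco.symm
  · intro u
    let ρ : ℝ → ℝ := fun t => t ^ ((b : ℝ)⁻¹)
    have hb0 : (0 : ℝ) < (b : ℝ)⁻¹ := by positivity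
    have hρ : Tendsto ρ atTop atTop := tendsto_rpow_atTop hb0
    have hρb : ∀ t : ℝ, 0 ≤ t → ρ t ^ b = t := fun t ht => Real.rpow_inv_natCast_pow ht (by omega)
    refine ⟨fun t => ρ t ^ b + u / ρ t ^ a, fun t => ex (π (lg (F (ρ t ^ b + u / ρ t ^ a) * (F (ρ t ^ b))⁻¹))), ?_, ?_, ?_⟩
    · have h1 : Tendsto (fun τ : ℝ => τ ^ b + u / τ ^ a) atTop atTop := by
        rcases Nat.eq_zero_or_pos a with h | h
        · simp only [h, pow_zero, div_one]
          exact tendsto_atTop_add_const_right _ _ (tendsto_pow_atTop (by omega))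
        · refine Tendsto.atTop_add (tendsto_pow_atTop (by omega)) (C := 0) ?_
          exact (tendsto_const_nhds (x := u)).div_atTop (tendsto_pow_atTop (by omega))
      exact h1.comp hρ
    · exact (continuous_ex.tendsto _).comp ((hlim u).comp hρ)
    · filter_upwards [eventually_ge_atTop 0] with t ht
      rw [hρb t ht]
      set g := F (t + u / ρ t ^ a) * (F t)⁻¹ with hg
      have hgG : g ∈ G := mul_mem (hFG _) (inv_mem (hFG _))
      have hpG : ex (π (lg g)) ∈ G := hπG _ (hG.mem_iff.1 hgG)
      refine ⟨(ex (π (lg g)))⁻¹ * g, coset_of_lie hP (fun s x hx => hN.inv (hG.rp _ hpG s) hx) ?_, ?_⟩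
      · rw [lg_ex]; exact hπ1 _
      · rw [hg]; group

end UP

namespace UP

variable {n : ℕ}

/-- tail sets of the orbit -/
def Yk (Γ P : Subgroup (U n)) (F : ℝ → U n) (k : ℝ) : Set (U n) :=
  {x | ∃ t : ℝ, k ≤ t ∧ ∃ m ∈ P, ∃ γ ∈ Γ, x = F t * m * γ}

/-- limit set -/
def Yi (Γ P : Subgroup (U n)) (F : ℝ → U n) : Set (U n) := ⋂ k : ℝ, closure (Yk Γ P F k)

theorem Yk_anti (Γ P : Subgroup (U n)) (F : ℝ → U n) {k k' : ℝ} (h : k ≤ k') :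
    Yk Γ P F k' ⊆ Yk Γ P F k := by
  rintro x ⟨t, ht, H⟩
  exact ⟨t, h.trans ht, H⟩

theorem Yi_closed (Γ P : Subgroup (U n)) (F : ℝ → U n) : IsClosed (Yi Γ P F) :=
  isClosed_iInter fun _ => isClosed_closure

theorem Yi_gam {Γ P : Subgroup (U n)} {F : ℝ → U n} {y γ : U n} (hy : y ∈ Yi Γ P F) (hγ : γ ∈ Γ) :
    y * γ ∈ Yi Γ P F := by
  refine Set.mem_iInter.2 fun k => ?_
  refine map_mem_closure (f := fun x => x * γ) (continuous_mul_const γ) (Set.mem_iInter.1 hy k) ?_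
  rintro _ ⟨t, ht, m, hm, δ, hδ, rfl⟩
  exact ⟨t, ht, m, hm, δ * γ, mul_mem hδ hγ, by group⟩

theorem Yi_right {Γ P G : Subgroup (U n)} {F : ℝ → U n} (hΓ : Γ ≤ G) (hN : Nm G P) {y p : U n}
    (hy : y ∈ Yi Γ P F) (hp : p ∈ P) : y * p ∈ Yi Γ P F := by
  refine Set.mem_iInter.2 fun k => ?_
  refine map_mem_closure (f := fun x => x * p) (continuous_mul_const p) (Set.mem_iInter.1 hy k) ?_
  rintro _ ⟨t, ht, m, hm, δ, hδ, rfl⟩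
  exact ⟨t, ht, m * (δ * p * δ⁻¹), mul_mem hm (hN δ (hΓ hδ) p hp), δ, hδ, by group⟩

theorem Yi_left {Γ P G : Subgroup (U n)} {F : ℝ → U n} (hN : Nm G P) (hFG : ∀ t, F t ∈ G) {r : U n}
    {σ : ℝ → ℝ} {ψ : ℝ → U n} (hσ : Tendsto σ atTop atTop) (hψ : Tendsto ψ atTop (nhds r))
    (h : ∀ᶠ t in atTop, ∃ p ∈ P, F (σ t) = ψ t * p * F t) {y : U n} (hy : y ∈ Yi Γ P F) :
    r * y ∈ Yi Γ P F := by
  refine Set.mem_iInter.2 fun k => ?_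
  rw [mem_closure_iff_nhds]
  intro W hW
  have hc : Tendsto (fun p : U n × U n => p.1 * p.2) (nhds r ×ˢ nhds y) (nhds (r * y)) := by
    rw [← nhds_prod_eq]; exact tendsto_mul
  obtain ⟨V₁, hV₁, V₂, hV₂, hV⟩ := Filter.mem_prod_iff.1 (hc hW)
  have h0 : ∀ᶠ t in atTop, ψ t ∈ V₁ := hψ hV₁
  have h1 := (h0.and (hσ.eventually_ge_atTop k)).and h
  obtain ⟨k₁, hk₁⟩ := eventually_atTop.1 h1
  obtain ⟨z, hz, t, ht, m, hm, γ, hγ, rfl⟩ := mem_closure_iff_nhds.1 (Set.mem_iInter.1 hy k₁) V₂ hV₂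
  obtain ⟨⟨h2, h3⟩, p, hp, h4⟩ := hk₁ t ht
  refine ⟨ψ t * (F t * m * γ), hV (Set.mk_mem_prod h2 hz), σ t, h3,
    ((F t)⁻¹ * p⁻¹ * F t) * m, mul_mem (hN.inv (hFG t) (inv_mem hp)) hm, γ, hγ, ?_⟩
  rw [h4]; group

theorem Yi_trans {Γ P M G : Subgroup (U n)} {F : ℝ → U n} (hΓ : Γ ≤ G) (hM : IsR M) (hMR : Rat Γ M)
    (hN : Nm G M) {g : U n} (hg : g ∈ Yi Γ M F) : ∃ m ∈ M, g * m ∈ Yi Γ P F := by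
  obtain ⟨K, hK, hKM⟩ := hMR
  have hK' : IsCompact (K ∩ M) := hK.inter_right hM.closed
  have hsub : ∀ k, Yk Γ M F k ⊆ closure (Yk Γ P F k) * (K ∩ M : Set (U n))⁻¹ := by
    rintro k _ ⟨t, ht, m, hm, γ, hγ, rfl⟩
    have hm' : (γ⁻¹ * m * γ)⁻¹ ∈ M := inv_mem (hN.inv (hΓ hγ) hm)
    obtain ⟨κ, hκ, δ, hδ, hδM, he⟩ := hKM _ hm'
    have hκM : κ ∈ M := by
      have : κ = (γ⁻¹ * m * γ)⁻¹ * δ⁻¹ := by rw [he]; group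
      rw [this]; exact mul_mem hm' (inv_mem hδM)
    refine ⟨F t * 1 * (γ * δ⁻¹), subset_closure ⟨t, ht, 1, one_mem _, _, mul_mem hγ (inv_mem hδ), rfl⟩,
      κ⁻¹, Set.inv_mem_inv.2 ⟨hκ, hκM⟩, ?_⟩
    have : γ⁻¹ * m * γ = δ⁻¹ * κ⁻¹ := by rw [← inv_inj, he]; group
    have h2 : m = γ * (δ⁻¹ * κ⁻¹) * γ⁻¹ := by rw [← this]; group
    dsimp only
    rw [h2]; group
  have hex : ∀ k : ℕ, ((K ∩ M : Set (U n)) ∩ {x | g * x ∈ closure (Yk Γ P F k)}).Nonempty := by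
    intro k
    have h1 := closure_minimal (hsub k) (isClosed_closure.mul_right_of_isCompact hK'.inv)
      (Set.mem_iInter.1 hg k)
    obtain ⟨y, hy, x, hx, he⟩ := h1
    refine ⟨x⁻¹, Set.mem_inv.1 hx, ?_⟩
    change g * x⁻¹ ∈ closure (Yk Γ P F k)
    rw [← he]; simpa using hy
  have hcl : ∀ k : ℕ, IsClosed {x | g * x ∈ closure (Yk Γ P F k)} := fun k =>
    isClosed_closure.preimage (continuous_const_mul g)
  obtain ⟨x, hx⟩ := IsCompact.nonempty_iInter_of_sequence_nonempty_isCompact_isClosed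
    (fun k : ℕ => (K ∩ M : Set (U n)) ∩ {x | g * x ∈ closure (Yk Γ P F k)})
    (fun k => Set.inter_subset_inter_right _ fun x hx =>
      closure_mono (Yk_anti Γ P F (by push_cast; linarith)) hx)
    hex (hK'.inter_right (hcl 0)) (fun k => hK'.isClosed.inter (hcl k))
  rw [Set.mem_iInter] at hx
  refine ⟨x, (hx 0).1.2, Set.mem_iInter.2 fun k => ?_⟩
  obtain ⟨N, hN⟩ := exists_nat_ge k
  exact closure_mono (Yk_anti Γ P F hN) (hx N).2

theorem Yi_sub {Γ P G : Subgroup (U n)} {F : ℝ → U n} (hG : IsR G) (hΓ : Γ ≤ G) (hPG : P ≤ G)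
    (hFG : ∀ t, F t ∈ G) : Yi Γ P F ⊆ G := by
  intro x hx
  refine closure_minimal ?_ hG.closed (Set.mem_iInter.1 hx 0)
  rintro _ ⟨t, -, m, hm, γ, hγ, rfl⟩
  exact mul_mem (mul_mem (hFG t) (hPG hm)) (hΓ hγ)

theorem generic {G : Subgroup (U n)} (hG : IsR G) {C : Set (Set (U n))} (hC : C.Countable)
    (hcl : ∀ B ∈ C, IsClosed B)
    (hB : ∀ B ∈ C, ∀ x ∈ G, ∀ y ∈ G, {t : ℝ | x * rp (x⁻¹ * y) t ∈ B}.Infinite → y ∈ B)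
    (hne : ∀ B ∈ C, ∃ x ∈ G, x ∉ B) {Y : Set (U n)} (hY : IsClosed Y)
    (h : ∀ g ∈ G, (∀ B ∈ C, g ∉ B) → g ∈ Y) : (G : Set (U n)) ⊆ Y := by
  have : LocallyCompactSpace G := hG.closed.isClosedEmbedding_subtypeVal.locallyCompactSpace
  have hd := baire_line (T := G)
    (fun x y t => ⟨x.1 * rp (x.1⁻¹ * y.1) t, mul_mem x.2 (hG.rp _ (mul_mem (inv_mem x.2) y.2) t)⟩)
    (fun x y => Continuous.subtype_mk (continuous_const.mul (continuous_rp' _)) _)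
    (fun x y => by apply Subtype.ext; simp)
    (C := (fun B : Set (U n) => (Subtype.val ⁻¹' B : Set G)) '' C) (hC.image _)
    (by rintro _ ⟨B, hBC, rfl⟩; exact (hcl B hBC).preimage continuous_subtype_val)
    (by rintro _ ⟨B, hBC, rfl⟩ x y hxy; exact hB B hBC x.1 x.2 y.1 y.2 hxy)
    (by rintro _ ⟨B, hBC, rfl⟩; obtain ⟨x, hx, hxB⟩ := hne B hBC; exact ⟨⟨x, hx⟩, hxB⟩)
  have hYc : IsClosed (Subtype.val ⁻¹' Y : Set G) := hY.preimage continuous_subtype_val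
  intro g hg
  have := hYc.closure_subset_iff.2 (fun x hx => ?_) (hd ⟨g, hg⟩)
  · exact this
  · exact h x.1 x.2 fun B hBC hxB => hx _ ⟨B, hBC, rfl⟩ hxB

theorem D_aux {Γ G : Subgroup (U n)} (hd : Disc Γ) (hΓG : Γ ≤ G) (hG : IsR G) (hGR : Rat Γ G)
    {F : ℝ → U n} (hF : PM PR F) (hFG : ∀ t, F t ∈ G) (hF0 : F 0 = 1)
    (hFL : ∀ L : Subgroup (U n), IsR L → Rat Γ L → (∀ t, F t ∈ L) → G ≤ L)
    (c : ℕ) {P : Subgroup (U n)} (hP : IsR P) (hPR : Rat Γ P) (hPG : P ≤ G) (hN : Nm G P)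
    (hc : Module.finrank ℝ hG.lie ≤ Module.finrank ℝ hP.lie + c) :
    (G : Set (U n)) ⊆ Yi Γ P F := by
  have triv : ∀ P : Subgroup (U n), P = G → (G : Set (U n)) ⊆ Yi Γ P F := by
    rintro P rfl g hg
    refine Set.mem_iInter.2 fun k => subset_closure ⟨k, le_rfl, (F k)⁻¹ * g,
      mul_mem (inv_mem (hFG k)) hg, 1, one_mem _, by group⟩
  induction c generalizing P with
  | zero => exact triv P (hP.eq_of_finrank hG hPG (by omega))
  | succ c ih =>
    by_cases hne : P = G
    · exact triv P hne
    have hFP : ∃ t, F t ∉ P := by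
      by_contra h
      push Not at h
      exact hne (le_antisymm hPG (hFL P hP hPR h))
    obtain ⟨r, hrc, hr0, hrG, ⟨u₀, hu₀⟩, hr⟩ := exists_limit hG hP hPG hN hF hFG hF0 hFP
    have hleft : ∀ u, ∀ y ∈ Yi Γ P F, r u * y ∈ Yi Γ P F := by
      intro u y hy
      obtain ⟨σ, ψ, h1, h2, h3⟩ := hr u
      exact Yi_left hN hFG h1 h2 h3 hy
    let S : Set (U n) := P ∪ {x | ∃ g ∈ G, ∃ u, x = g⁻¹ * r u * g}
    obtain ⟨M, hM, hMR, hSM, hMG, hMmin⟩ := exists_hull hd hG hGR (S := S) (by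
      rintro x (hx | ⟨g, hg, u, rfl⟩)
      · exact hPG hx
      · exact mul_mem (mul_mem (inv_mem hg) (hrG u)) hg)
    have hMn : Nm G M := hull_normal hG hGR (S := S) (by
      rintro γ hγ x (hx | ⟨g, hg, u, rfl⟩)
      · exact Or.inl (hN.inv hγ hx)
      · exact Or.inr ⟨g * γ, mul_mem hg hγ, u, by group⟩) hM hMR hSM hMmin
    have hPM : P ≤ M := fun x hx => hSM (Or.inl hx)
    have hrM : ∀ g ∈ G, ∀ u, g⁻¹ * r u * g ∈ M := fun g hg u => hSM (Or.inr ⟨g, hg, u, rfl⟩)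
    have hPneM : P ≠ M := by
      intro h
      apply hu₀
      rw [h]
      simpa using hrM 1 (one_mem _) u₀
    have hlt := hP.finrank_lt hM hPM hPneM
    have hYM := ih hM hMR hMG hMn (by omega)
    -- generic points
    let 𝓛 : Set (Subgroup (U n)) := {L | (IsR L ∧ Rat Γ L) ∧ P ≤ L ∧ ¬ M ≤ L}
    have h𝓛 : 𝓛.Countable := (countable_rat hd).mono fun L hL => hL.1
    let B : Subgroup (U n) → Set (U n) := fun L => {g | ∀ u, g⁻¹ * r u * g ∈ L}
    refine generic hG (h𝓛.image B) ?_ ?_ ?_ (Yi_closed _ _ _) ?_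
    · rintro _ ⟨L, hL, rfl⟩
      have : B L = ⋂ u, (fun g => g⁻¹ * r u * g) ⁻¹' (L : Set (U n)) := by ext g; simp [B]
      rw [this]
      exact isClosed_iInter fun u => hL.1.1.closed.preimage (by fun_prop)
    · rintro _ ⟨L, hL, rfl⟩ x hx y hy hinf u
      have hpm : PM PR (fun t => x * rp (x⁻¹ * y) t) := (PM.const x).mul (PR_line _)
      have := PRmap hL.1.1 ((hpm.inv.mul (PM.const (r u))).mul hpm) hinf (fun t ht => ht u) 1
      simpa using this
    · rintro _ ⟨L, hL, rfl⟩
      by_contra h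
      push Not at h
      apply hL.2.2
      refine hMmin L hL.1.1 hL.1.2 ?_
      rintro x (hx | ⟨g, hg, u, rfl⟩)
      · exact hL.2.1 hx
      · exact h g hg u
    · intro g hg hgen
      obtain ⟨m, hm, hy⟩ := Yi_trans (P := P) hΓG hM hMR hMn (hYM hg)
      have hratM : ∀ L : Subgroup (U n), L ≤ M → Rat Γ L → Rat (Γ ⊓ M) L := by
        rintro L hL ⟨K, hK, h⟩
        refine ⟨K, hK, fun x hx => ?_⟩
        obtain ⟨k, hk, γ, hγ, hγL, he⟩ := h x hx
        exact ⟨k, hk, γ, ⟨hγ, hL hγL⟩, hγL, he⟩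
      have hratM' : ∀ L : Subgroup (U n), Rat (Γ ⊓ M) L → Rat Γ L := by
        rintro L ⟨K, hK, h⟩
        refine ⟨K, hK, fun x hx => ?_⟩
        obtain ⟨k, hk, γ, hγ, hγL, he⟩ := h x hx
        exact ⟨k, hk, γ, hγ.1, hγL, he⟩
      have hyG : g * m ∈ G := mul_mem hg (hMG hm)
      have hU := U_thm (Γ := Γ ⊓ M) (M := M) (M' := P) (R := Set.range fun u => (g * m)⁻¹ * r u * (g * m))
        (Y := {h | h ∈ M ∧ g * m * h ∈ Yi Γ P F})
        (hd.mono inf_le_left) inf_le_right hM (hratM M le_rfl hMR) hP (hratM P hPM hPR)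
        (fun x hx => hN x (hMG hx)) hPM
        (isPreconnected_range (by fun_prop)) ⟨0, by simp [hr0]⟩
        (by rintro _ ⟨u, rfl⟩; exact hrM _ hyG u)
        (by
          intro L hL hLR hLn hLM hPL hRL
          by_contra hLne
          refine hgen (B L) ⟨L, ⟨⟨hL, hratM' L hLR⟩, hPL, fun h => hLne (le_antisymm hLM h)⟩, rfl⟩ ?_
          intro u
          have h1 := hLn m hm _ (hRL ⟨u, rfl⟩)
          convert h1 using 1
          group)
        { closed := hM.closed.inter ((Yi_closed _ _ _).preimage (continuous_const_mul _))
          sub := fun h hh => hh.1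
          ne := ⟨1, one_mem _, by simpa using hy⟩
          left := by
            rintro _ ⟨u, rfl⟩ h ⟨hh, hh'⟩
            refine ⟨mul_mem (hrM _ hyG u) hh, ?_⟩
            have := hleft u _ hh'
            convert this using 1
            group
          right := by
            rintro h ⟨hh, hh'⟩ x hx
            refine ⟨mul_mem hh (hPM hx), ?_⟩
            rw [← mul_assoc]
            exact Yi_right hΓG hN hh' hx
          gam := by
            rintro h ⟨hh, hh'⟩ γ hγ
            refine ⟨mul_mem hh hγ.2, ?_⟩
            rw [← mul_assoc]
            exact Yi_gam hh' hγ.1 }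
      have := (hU (inv_mem hm)).2
      simpa using this

theorem D_main {Γ G : Subgroup (U n)} (hd : Disc Γ) (hΓG : Γ ≤ G) (hG : IsR G) (hGR : Rat Γ G)
    {F : ℝ → U n} (hF : PM PR F) (hFG : ∀ t, F t ∈ G) (hF0 : F 0 = 1)
    (hFL : ∀ L : Subgroup (U n), IsR L → Rat Γ L → (∀ t, F t ∈ L) → G ≤ L) :
    (G : Set (U n)) ⊆ closure {x | ∃ t, ∃ γ ∈ Γ, x = F t * γ} := by
  have hbot : IsR (⊥ : Subgroup (U n)) := ⟨by simp, by
    intro g hg t; rw [Subgroup.mem_bot] at hg ⊢; rw [hg, UP.rp]; simp [lg_one]⟩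
  have h := D_aux hd hΓG hG hGR hF hFG hF0 hFL (Module.finrank ℝ hG.lie) hbot
    ⟨{1}, isCompact_singleton, fun g hg => ⟨1, rfl, 1, one_mem _, one_mem _, by
      rw [Subgroup.mem_bot] at hg; simp [hg]⟩⟩ bot_le
    (fun m _ x hx => by rw [Subgroup.mem_bot] at hx ⊢; simp [hx]) (Nat.le_add_left _ _)
  intro g hg
  refine closure_mono ?_ (Set.mem_iInter.1 (h hg) 0)
  rintro x ⟨t, -, m, hm, γ, hγ, rfl⟩
  rw [Subgroup.mem_bot] at hm
  exact ⟨t, γ, hγ, by simp [hm]⟩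

end UP

namespace UP

variable {n : ℕ}

theorem Pd.comp {T : Type*} {A : Subalgebra ℝ (T → ℝ)} {d : ℕ} {f : (Fin d → ℝ) → ℝ} (hf : f ∈ Pd d)
    {τ : T → Fin d → ℝ} (hτ : ∀ i, (fun x => τ x i) ∈ A) : (fun x => f (τ x)) ∈ A := by
  obtain ⟨p, hp⟩ := mem_Pd.1 hf
  simp only [hp]
  clear hp hf
  induction p using MvPolynomial.induction_on with
  | C a => simpa using alg_const a
  | add p q hp hq => simp only [map_add]; exact A.add_mem hp hq
  | mul_X p i hp => simp only [map_mul, MvPolynomial.eval_X]; exact A.mul_mem hp (hτ i)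

theorem mem_Pol {f : U n → ℝ} : f ∈ Pol n ↔ ∃ p : MvPolynomial (Fin n × Fin n) ℝ,
    ∀ x : U n, f x = MvPolynomial.eval (matEval x.m) p := by
  constructor
  · intro hf
    induction hf using Algebra.adjoin_induction with
    | mem f hf => obtain ⟨ij, rfl⟩ := hf; exact ⟨MvPolynomial.X ij, by simp [matEval]⟩
    | algebraMap r => exact ⟨MvPolynomial.C r, by simp⟩
    | add f g _ _ hf hg =>
      obtain ⟨p, hp⟩ := hf
      obtain ⟨q, hq⟩ := hg
      exact ⟨p + q, by simp [hp, hq]⟩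
    | mul f g _ _ hf hg =>
      obtain ⟨p, hp⟩ := hf
      obtain ⟨q, hq⟩ := hg
      exact ⟨p * q, by simp [hp, hq]⟩
  · rintro ⟨p, hp⟩
    have : f = fun x => MvPolynomial.eval (matEval x.m) p := funext hp
    rw [this]
    clear hp this
    induction p using MvPolynomial.induction_on with
    | C a => simpa using alg_const (A := Pol n) a
    | add p q hp hq => simp only [map_add]; exact (Pol n).add_mem hp hq
    | mul_X p i hp =>
      simp only [map_mul, MvPolynomial.eval_X]
      exact (Pol n).mul_mem hp (PM_id i.1 i.2)

theorem m_inj {a b : U n} (h : a.m = b.m) : a = b := U.ext h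

/-- subgroup of `U n` attached to a set of matrices -/
theorem exists_subgroup {S : Set (Mat n ℝ)} (hS : S ⊆ UTset n) (h1 : (1 : Mat n ℝ) ∈ S)
    (hm : ∀ a ∈ S, ∀ b ∈ S, a * b ∈ S) (hi : ∀ a ∈ S, a⁻¹ ∈ S) :
    ∃ L : Subgroup (U n), (∀ x, x ∈ L ↔ x.m ∈ S) ∧ S = U.m '' (L : Set (U n)) := by
  let L : Subgroup (U n) :=
    { carrier := {x | x.m ∈ S}
      one_mem' := h1
      mul_mem' := fun {a b} ha hb => hm _ ha _ hb
      inv_mem' := fun {a} ha => by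
        change (a⁻¹).m ∈ S
        rw [m_inv]; exact hi _ ha }
  refine ⟨L, fun x => Iff.rfl, ?_⟩
  ext A
  constructor
  · intro hA
    exact ⟨⟨A, hS hA⟩, hA, rfl⟩
  · rintro ⟨x, hx, rfl⟩
    exact hx

theorem alg_to_R {G : Set (Mat n ℝ)} (hG : IsRealUnipotentGroup n G) :
    ∃ L : Subgroup (U n), IsR L ∧ (∀ x, x ∈ L ↔ x.m ∈ G) ∧ G = U.m '' (L : Set (U n)) := by
  obtain ⟨⟨S, hS⟩, h1, hm, hi⟩ := hG
  obtain ⟨L, hL, hL'⟩ := exists_subgroup (fun A hA => by rw [hS] at hA; exact hA.1) h1 hm hi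
  have hmem : ∀ x, x ∈ L ↔ ∀ p ∈ S, MvPolynomial.eval (matEval x.m) p = 0 := by
    intro x
    rw [hL, hS]
    exact ⟨fun h => h.2, fun h => ⟨x.2, h⟩⟩
  refine ⟨L, ⟨?_, ?_⟩, hL, hL'⟩
  · have : (L : Set (U n)) = ⋂ p ∈ S, {x | MvPolynomial.eval (matEval x.m) p = 0} := by
      ext x; simp [hmem]
    rw [this]
    exact isClosed_biInter fun p _ => isClosed_eq (Pol.continuous (mem_Pol.2 ⟨p, fun _ => rfl⟩)) continuous_const
  · intro g hg t
    rw [hmem]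
    intro p hp
    have h2 := Pol.comp (mem_Pol.2 ⟨p, fun _ => rfl⟩) (PR_line g)
    refine PR_nat h2 (fun k => ?_) t
    rw [rp_nat]
    exact (hmem _).1 (pow_mem hg k) p hp

theorem R_to_alg {L : Subgroup (U n)} (hL : IsR L) : IsRealUnipotentGroup n (U.m '' (L : Set (U n))) := by
  refine ⟨⟨{p | ∀ x ∈ L, MvPolynomial.eval (matEval x.m) p = 0}, ?_⟩, ⟨1, one_mem _, rfl⟩, ?_, ?_⟩
  · ext A
    constructor
    · rintro ⟨x, hx, rfl⟩
      exact ⟨x.2, fun p hp => hp x hx⟩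
    · rintro ⟨hA, h⟩
      obtain ⟨x, rfl⟩ : ∃ x : U n, x.m = A := ⟨⟨A, hA⟩, rfl⟩
      refine ⟨x, ?_, rfl⟩
      refine hL.mem_of_lin fun l hl => ?_
      obtain ⟨p, hp⟩ := mem_Pol.1 (PM_id.lin l)
      rw [hp]
      exact h p fun x hx => by rw [← hp]; exact hl x hx
  · rintro _ ⟨x, hx, rfl⟩ _ ⟨y, hy, rfl⟩
    exact ⟨x * y, mul_mem hx hy, rfl⟩
  · rintro _ ⟨x, hx, rfl⟩
    exact ⟨x⁻¹, inv_mem hx, m_inv x⟩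

theorem lattice_to_R {G' : Subgroup (U n)} {Γ : Set (Mat n ℝ)}
    (h : IsLatticeIn n (U.m '' (G' : Set (U n))) Γ) :
    ∃ Γ' : Subgroup (U n), Γ' ≤ G' ∧ Disc Γ' ∧ Rat Γ' G' ∧ Γ = U.m '' (Γ' : Set (U n)) := by
  obtain ⟨hsub, h1, hm, hi, hdisc, K, hKG, hK, hKc⟩ := h
  obtain ⟨Γ', hΓ', hΓ''⟩ := exists_subgroup (n := n) (S := Γ) (fun A hA => by
    obtain ⟨x, -, rfl⟩ := hsub hA; exact x.2) h1 hm hi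
  refine ⟨Γ', ?_, ?_, ?_, hΓ''⟩
  · intro x hx
    obtain ⟨y, hy, he⟩ := hsub ((hΓ' x).1 hx)
    rwa [← m_inj he]
  · have hd : DiscreteTopology Γ' :=
      DiscreteTopology.of_continuous_injective (f := fun x : Γ' => (⟨x.1.m, (hΓ' _).1 x.2⟩ : Γ))
        (Continuous.subtype_mk (continuous_m.comp continuous_subtype_val) _)
        (fun x y hxy => Subtype.ext (m_inj (by injection hxy)))
    intro K hK
    have hc : IsClosed (Γ' : Set (U n)) := Subgroup.isClosed_of_discrete
    refine (hK.inter_right hc).finite ?_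
    exact (isDiscrete_iff_discreteTopology.2 hd).mono Set.inter_subset_right
  · refine ⟨U.m ⁻¹' K, isClosedEmbedding_m.isCompact_preimage hK, fun g hg => ?_⟩
    obtain ⟨k, hk, γ, hγ, he⟩ := hKc g.m ⟨g, hg, rfl⟩
    obtain ⟨k', hk', rfl⟩ := hKG hk
    rw [hΓ''] at hγ
    obtain ⟨γ', hγ', rfl⟩ := hγ
    have he' : g = k' * γ' := m_inj he
    refine ⟨k', hk, γ', hγ', ?_, he'⟩
    have : γ' = k'⁻¹ * g := by rw [he']; group
    rw [this]; exact mul_mem (inv_mem hk') hg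

theorem rat_to_R {Γ' L : Subgroup (U n)}
    (h : IsRationalFor n (U.m '' (Γ' : Set (U n))) (U.m '' (L : Set (U n)))) : Rat Γ' L := by
  obtain ⟨-, -, -, -, -, K, hKG, hK, hKc⟩ := h
  refine ⟨U.m ⁻¹' K, isClosedEmbedding_m.isCompact_preimage hK, fun g hg => ?_⟩
  obtain ⟨k, hk, γ, ⟨⟨γ', hγ', rfl⟩, ⟨γ'', hγ'', hee⟩⟩, he⟩ := hKc g.m ⟨g, hg, rfl⟩
  obtain ⟨k', hk', rfl⟩ := hKG hk
  rw [m_inj hee] at hγ''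
  exact ⟨k', hk, γ', hγ', hγ'', m_inj he⟩

theorem R_to_rat {Γ' L : Subgroup (U n)} (hd : DiscreteTopology (U.m '' (Γ' : Set (U n))))
    (hL : IsR L) (h : Rat Γ' L) :
    IsRationalFor n (U.m '' (Γ' : Set (U n))) (U.m '' (L : Set (U n))) := by
  obtain ⟨K, hK, hKL⟩ := h
  refine ⟨Set.inter_subset_right, ⟨⟨1, one_mem _, rfl⟩, ⟨1, one_mem _, rfl⟩⟩, ?_, ?_, ?_,
    U.m '' (K ∩ L), Set.image_mono Set.inter_subset_right,
    (hK.inter_right hL.closed).image continuous_m, ?_⟩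
  · rintro _ ⟨⟨x, hx, rfl⟩, ⟨x', hx', hxx⟩⟩ _ ⟨⟨y, hy, rfl⟩, ⟨y', hy', hyy⟩⟩
    rw [m_inj hxx] at hx'
    rw [m_inj hyy] at hy'
    exact ⟨⟨x * y, mul_mem hx hy, rfl⟩, ⟨x * y, mul_mem hx' hy', rfl⟩⟩
  · rintro _ ⟨⟨x, hx, rfl⟩, ⟨x', hx', hxx⟩⟩
    rw [m_inj hxx] at hx'
    exact ⟨⟨x⁻¹, inv_mem hx, m_inv x⟩, ⟨x⁻¹, inv_mem hx', m_inv x⟩⟩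
  · exact DiscreteTopology.of_subset hd Set.inter_subset_left
  · rintro _ ⟨g, hg, rfl⟩
    obtain ⟨k, hk, γ, hγ, hγL, he⟩ := hKL g hg
    have hkL : k ∈ L := by
      have : k = g * γ⁻¹ := by rw [he]; group
      rw [this]; exact mul_mem hg (inv_mem hγL)
    exact ⟨_, ⟨k, ⟨hk, hkL⟩, rfl⟩, _, ⟨⟨γ, hγ, rfl⟩, ⟨γ, hγL, rfl⟩⟩, by rw [he]; rfl⟩

theorem PR_cont {f : ℝ → ℝ} (hf : f ∈ PR) : Continuous f := by
  obtain ⟨p, hp⟩ := mem_PR.1 hf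
  rw [show f = fun t => p.eval t from funext hp]
  exact p.continuous

theorem Pd_cont {d : ℕ} {f : (Fin d → ℝ) → ℝ} (hf : f ∈ Pd d) : Continuous f := by
  obtain ⟨p, hp⟩ := mem_Pd.1 hf
  rw [show f = fun t => MvPolynomial.eval t p from funext hp]
  exact MvPolynomial.continuous_eval p

theorem PM.cont {d : ℕ} {F : (Fin d → ℝ) → U n} (hF : PM (Pd d) F) : Continuous F :=
  continuous_U.2 (continuous_matrix fun i j => Pd_cont (hF i j))

/-- choice of a generic line -/
theorem exists_line {d : ℕ} {Γ H₀ : Subgroup (U n)} (hd : Disc Γ) {f : (Fin d → ℝ) → U n}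
    (hf : PM (Pd d) f)
    (hfL : ∀ L : Subgroup (U n), IsR L → Rat Γ L → (∀ x, f x ∈ L) → H₀ ≤ L) :
    ∃ v : Fin d → ℝ, ∀ L : Subgroup (U n), IsR L → Rat Γ L → (∀ s : ℝ, f (s • v) ∈ L) → H₀ ≤ L := by
  let 𝓛 : Set (Subgroup (U n)) := {L | (IsR L ∧ Rat Γ L) ∧ ¬ H₀ ≤ L}
  have h𝓛 : 𝓛.Countable := (countable_rat hd).mono fun L hL => hL.1
  let B : Subgroup (U n) → Set (Fin d → ℝ) := fun L => {v | ∀ s : ℝ, f (s • v) ∈ L}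
  have hden := baire_line (T := Fin d → ℝ) (fun x y t => x + t • (y - x))
    (fun x y => by fun_prop) (fun x y => by simp) (C := B '' 𝓛) (h𝓛.image B)
    (by
      rintro _ ⟨L, hL, rfl⟩
      have : B L = ⋂ s : ℝ, (fun v => f (s • v)) ⁻¹' (L : Set (U n)) := by ext v; simp [B]
      rw [this]
      exact isClosed_iInter fun s => hL.1.1.closed.preimage (hf.cont.comp (continuous_const_smul s)))
    (by
      rintro _ ⟨L, hL, rfl⟩ x y hinf s
      have hpm : PM PR (fun t : ℝ => f (s • (x + t • (y - x)))) := fun i j =>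
        Pd.comp (hf i j) fun k => by
          simp only [Pi.smul_apply, Pi.add_apply, smul_eq_mul]
          exact PR.mul_mem (alg_const _) (PR.add_mem (alg_const _) (PR.mul_mem PR_id (alg_const _)))
      have := PRmap hL.1.1 hpm hinf (fun t ht => ht s) 1
      simpa using this)
    (by
      rintro _ ⟨L, hL, rfl⟩
      by_contra h
      push Not at h
      refine hL.2 (hfL L hL.1.1 hL.1.2 fun x => ?_)
      simpa using h x 1)
  obtain ⟨v, hv⟩ := hden.nonempty
  refine ⟨v, fun L hL hLR hs => ?_⟩
  by_contra hc
  exact hv (B L) ⟨L, ⟨⟨hL, hLR⟩, hc⟩, rfl⟩ hs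

theorem main {d : ℕ} (G : Set (Mat n ℝ)) (hG : IsRealUnipotentGroup n G)
    (F : (Fin d → ℝ) → Mat n ℝ) (hFpoly : IsPolyMapVec d n F) (hFG : ∀ x, F x ∈ G)
    (X : Set (Mat n ℝ)) (hX : X = Set.range F)
    (g : Mat n ℝ) (hg : g ∈ G) (H : Set (Mat n ℝ)) (hH : IsRealAlgSubgroup n G H)
    (hXgH : X ⊆ {g} * H)
    (hmin : ∀ g' ∈ G, ∀ H' : Set (Mat n ℝ), IsRealAlgSubgroup n G H' → X ⊆ {g'} * H' →
      {g} * H ⊆ {g'} * H')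
    (Γ : Set (Mat n ℝ)) (hΓ : IsLatticeIn n G Γ) :
    ∃ H₀ : Set (Mat n ℝ), IsRealAlgSubgroup n G H₀ ∧ H ⊆ H₀ ∧ IsRationalFor n Γ H₀ ∧
      (∀ L : Set (Mat n ℝ), IsRealAlgSubgroup n G L → IsRationalFor n Γ L → H ⊆ L → H₀ ⊆ L) ∧
      closure (X * Γ) = {g} * H₀ * Γ := by
  obtain ⟨G', hG', -, rfl⟩ := alg_to_R hG
  obtain ⟨hHG, hH⟩ := hH
  obtain ⟨H', hH', -, rfl⟩ := alg_to_R hH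
  obtain ⟨Γ', hΓG, hd, hRat, rfl⟩ := lattice_to_R hΓ
  obtain ⟨g', hg', rfl⟩ := hg
  have hHG' : H' ≤ G' := by
    intro x hx
    obtain ⟨y, hy, he⟩ := hHG ⟨x, hx, rfl⟩
    rwa [← m_inj he]
  choose F' hF'G hF' using hFG
  have hFP : PM (Pd d) F' := by
    obtain ⟨P, hP⟩ := hFpoly
    intro i j
    exact mem_Pd.2 ⟨P i j, fun x => by
      change (F' x).m i j = _
      rw [hF', hP]⟩
  have hFgH : ∀ x, ∃ h ∈ H', F' x = g' * h := by
    intro x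
    obtain ⟨a, ha, _, ⟨h, hh, rfl⟩, he⟩ := hXgH (by rw [hX]; exact ⟨x, rfl⟩ : F x ∈ X)
    rw [Set.mem_singleton_iff] at ha
    refine ⟨h, hh, m_inj ?_⟩
    rw [hF', ← he, ha]; rfl
  obtain ⟨h₀, hh₀, hF0⟩ := hFgH 0
  let f : (Fin d → ℝ) → U n := fun x => (F' 0)⁻¹ * F' x
  have hfP : PM (Pd d) f := (PM.const _).mul hFP
  have hfH : ∀ x, f x ∈ H' := by
    intro x
    obtain ⟨h, hh, he⟩ := hFgH x
    have : f x = h₀⁻¹ * h := by simp only [f, he, hF0]; group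
    rw [this]; exact mul_mem (inv_mem hh₀) hh
  have hfL : ∀ L : Subgroup (U n), IsR L → (∀ x, f x ∈ L) → H' ≤ L := by
    intro L hL hfx h hh
    have h1 := hmin (F' 0).m ⟨_, hF'G 0, rfl⟩ (U.m '' ((L ⊓ G' : Subgroup (U n)) : Set (U n)))
      ⟨Set.image_mono fun x hx => hx.2, R_to_alg (hL.inf hG')⟩ (by
        rw [hX]
        rintro _ ⟨x, rfl⟩
        refine ⟨_, rfl, _, ⟨f x, ⟨hfx x, hHG' (hfH x)⟩, rfl⟩, ?_⟩
        rw [← hF']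
        change (F' 0 * f x).m = _
        simp [f])
    obtain ⟨a, ha, _, ⟨l, hl, rfl⟩, he⟩ := h1 ⟨g'.m, rfl, _, ⟨h₀ * h, mul_mem hh₀ hh, rfl⟩, rfl⟩
    rw [Set.mem_singleton_iff] at ha
    have he' : F' 0 * l = g' * (h₀ * h) := m_inj (by rw [ha] at he; exact he)
    rw [hF0, mul_assoc] at he'
    have : l = h := by simpa using he'
    rw [← this]; exact hl.1
  obtain ⟨H₀, hH₀, hH₀R, hHH₀, hH₀G, hH₀min⟩ := exists_hull hd hG' hRat (S := (H' : Set (U n))) hHG'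
  obtain ⟨v, hv⟩ := exists_line (H₀ := H₀) hd hfP
    (fun L hL hLR h => hH₀min L hL hLR (hfL L hL h))
  have hpm : PM PR (fun t : ℝ => f (t • v)) := fun i j =>
    Pd.comp (hfP i j) fun k => by
      simp only [Pi.smul_apply, smul_eq_mul]
      exact PR.mul_mem PR_id (alg_const _)
  have hD := D_main (Γ := Γ' ⊓ H₀) (G := H₀) (hd.mono inf_le_left) inf_le_right hH₀ (by
      obtain ⟨K, hK, h⟩ := hH₀R
      refine ⟨K, hK, fun x hx => ?_⟩
      obtain ⟨k, hk, γ, hγ, hγL, he⟩ := h x hx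
      exact ⟨k, hk, γ, ⟨hγ, hγL⟩, hγL, he⟩) hpm (fun t => hHH₀ (hfH _)) (by simp [f])
    (fun L hL hLR hLF => hv L hL (by
      obtain ⟨K, hK, h⟩ := hLR
      refine ⟨K, hK, fun x hx => ?_⟩
      obtain ⟨k, hk, γ, hγ, hγL, he⟩ := h x hx
      exact ⟨k, hk, γ, hγ.1, hγL, he⟩) hLF)
  refine ⟨U.m '' (H₀ : Set (U n)), ⟨Set.image_mono hH₀G, R_to_alg hH₀⟩, Set.image_mono hHH₀,
    R_to_rat hΓ.2.2.2.2.1 hH₀ hH₀R, ?_, ?_⟩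
  · rintro L ⟨hLG, hL⟩ hLR hHL
    obtain ⟨L', hL', hL'm, rfl⟩ := alg_to_R hL
    refine Set.image_mono (hH₀min L' hL' (rat_to_R hLR) fun x hx => ?_)
    exact (hL'm x).2 (hHL ⟨x, hx, rfl⟩)
  · apply le_antisymm
    · refine closure_minimal ?_ ?_
      · rintro _ ⟨a, ha, _, ⟨γ, hγ, rfl⟩, rfl⟩
        obtain ⟨b, hb, _, ⟨h, hh, rfl⟩, rfl⟩ := hXgH ha
        exact ⟨_, ⟨b, hb, _, ⟨h, hHH₀ hh, rfl⟩, rfl⟩, _, ⟨γ, hγ, rfl⟩, rfl⟩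
      · obtain ⟨K, hK, hKL⟩ := hH₀R
        have hΓc : IsClosed (Γ' : Set (U n)) := by
          have hdt : DiscreteTopology Γ' :=
            haveI := hΓ.2.2.2.2.1
            DiscreteTopology.of_continuous_injective
              (f := fun x : Γ' => (⟨x.1.m, ⟨x.1, x.2, rfl⟩⟩ : (U.m '' (Γ' : Set (U n)) : Set (Mat n ℝ))))
              (Continuous.subtype_mk (continuous_m.comp continuous_subtype_val) _)
              (fun x y hxy => Subtype.ext (m_inj (by injection hxy)))
          exact Subgroup.isClosed_of_discrete
        have hK' : IsCompact ((fun k => g' * k) '' (K ∩ H₀)) :=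
          (hK.inter_right hH₀.closed).image (continuous_const_mul g')
        have hcl : IsClosed (((fun k => g' * k) '' (K ∩ H₀)) * (Γ' : Set (U n))) :=
          hΓc.mul_left_of_isCompact hK'
        convert isClosedEmbedding_m.isClosedMap _ hcl using 1
        ext A
        constructor
        · rintro ⟨_, ⟨b, hb, _, ⟨h, hh, rfl⟩, rfl⟩, _, ⟨γ, hγ, rfl⟩, rfl⟩
          rw [Set.mem_singleton_iff] at hb
          obtain ⟨k, hk, δ, hδ, hδL, he⟩ := hKL h hh
          have hkL : k ∈ H₀ := by
            have : k = h * δ⁻¹ := by rw [he]; group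
            rw [this]; exact mul_mem hh (inv_mem hδL)
          refine ⟨g' * k * (δ * γ), ⟨_, ⟨k, ⟨hk, hkL⟩, rfl⟩, _, mul_mem hδ hγ, rfl⟩, ?_⟩
          rw [hb, he]
          simp [mul_assoc]
        · rintro ⟨_, ⟨_, ⟨k, hk, rfl⟩, γ, hγ, rfl⟩, rfl⟩
          exact ⟨_, ⟨_, rfl, _, ⟨k, hk.2, rfl⟩, rfl⟩, _, ⟨γ, hγ, rfl⟩, rfl⟩
    · rintro _ ⟨_, ⟨b, hb, _, ⟨h, hh, rfl⟩, rfl⟩, _, ⟨γ, hγ, rfl⟩, rfl⟩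
      rw [Set.mem_singleton_iff] at hb
      have h1 := hD (mul_mem (inv_mem (hHH₀ hh₀)) hh)
      have h2 := map_mem_closure (f := fun w : U n => (F' 0 * w * γ).m) (t := X * U.m '' (Γ' : Set (U n)))
        (continuous_m.comp (by fun_prop)) h1 (by
          rintro _ ⟨t, δ, hδ, rfl⟩
          refine ⟨F (t • v), by rw [hX]; exact ⟨_, rfl⟩, _, ⟨δ * γ, mul_mem hδ.1 hγ, rfl⟩, ?_⟩
          rw [← hF']
          change (F' (t • v) * (δ * γ)).m = _
          congr 1
          simp only [f]; group)
      convert h2 using 1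
      rw [hb]
      change (g' * h * γ).m = _
      congr 1
      rw [hF0]; group

end UP

/-- closure of the image of a polynomial map in a nilmanifold. -/
theorem stmt0 {n d : ℕ} (G : Set (Mat n ℝ)) (hG : IsRealUnipotentGroup n G)
    (F : (Fin d → ℝ) → Mat n ℝ) (hFpoly : IsPolyMapVec d n F) (hFG : ∀ x, F x ∈ G)
    (X : Set (Mat n ℝ)) (hX : X = Set.range F)
    (g : Mat n ℝ) (hg : g ∈ G) (H : Set (Mat n ℝ)) (hH : IsRealAlgSubgroup n G H)
    (hXgH : X ⊆ {g} * H)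
    (hmin : ∀ g' ∈ G, ∀ H' : Set (Mat n ℝ), IsRealAlgSubgroup n G H' → X ⊆ {g'} * H' →
      {g} * H ⊆ {g'} * H')
    (Γ : Set (Mat n ℝ)) (hΓ : IsLatticeIn n G Γ) :
    ∃ H₀ : Set (Mat n ℝ), IsRealAlgSubgroup n G H₀ ∧ H ⊆ H₀ ∧ IsRationalFor n Γ H₀ ∧
      (∀ L : Set (Mat n ℝ), IsRealAlgSubgroup n G L → IsRationalFor n Γ L → H ⊆ L → H₀ ⊆ L) ∧
      closure (X * Γ) = {g} * H₀ * Γ := by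
  exact UP.main G hG F hFpoly hFG X hX g hg H hH hXgH hmin Γ hΓ
end
end

section
/- Let G ⊆ UT(n,ℝ) be a real unipotent group and let α ∈ G^♯. Suppose H₁, H₂ are real algebraic subgroups of G and g₁, g₂ ∈ G are such that the cosets g₁H₁ and g₂H₂ are both near α. Then g₁H₁ ∩ g₂H₂ ≠ ∅, this intersection is a coset c·(H₁ ∩ H₂) for any c ∈ g₁H₁ ∩ g₂H₂, and the coset g₁H₁ ∩ g₂H₂ is near α as well, i.e. α ∈ μ(G)·c·(H₁ ∩ H₂)^♯. -/
open Pointwise Filter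

noncomputable section

section Helpers

open Topology

/-- A real function given by a polynomial. -/
def PolyFn (f : ℝ → ℝ) : Prop := ∃ p : Polynomial ℝ, ∀ t, f t = p.eval t

/-- A polynomial path of matrices. -/
def PolyPath {n : ℕ} (P : ℝ → Mat n ℝ) : Prop := ∀ i j, PolyFn fun t => P t i j

theorem PolyFn.eq_of_nat {f g : ℝ → ℝ} (hf : PolyFn f) (hg : PolyFn g)
    (h : ∀ m : ℕ, f m = g m) (t : ℝ) : f t = g t := by
  obtain ⟨p, hp⟩ := hf
  obtain ⟨q, hq⟩ := hg
  have : p = q := by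
    apply Polynomial.eq_of_infinite_eval_eq
    apply Set.Infinite.mono (s := Set.range (Nat.cast : ℕ → ℝ))
    · rintro _ ⟨m, rfl⟩
      simp only [Set.mem_setOf_eq]
      rw [← hp, ← hq, h]
    · exact Set.infinite_range_of_injective Nat.cast_injective
  rw [hp, hq, this]

theorem PolyFn.const (c : ℝ) : PolyFn fun _ => c := ⟨Polynomial.C c, by simp⟩

theorem PolyFn.continuous {f : ℝ → ℝ} (hf : PolyFn f) : Continuous f := by
  obtain ⟨p, hp⟩ := hf
  rw [show f = fun t => p.eval t from funext hp]
  exact p.continuous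

theorem PolyFn.mul {f g : ℝ → ℝ} (hf : PolyFn f) (hg : PolyFn g) :
    PolyFn fun t => f t * g t := by
  obtain ⟨p, hp⟩ := hf
  obtain ⟨q, hq⟩ := hg
  exact ⟨p * q, by simp [hp, hq]⟩

theorem PolyFn.sum {ι : Type*} (s : Finset ι) {f : ι → ℝ → ℝ} (hf : ∀ i, PolyFn (f i)) :
    PolyFn fun t => ∑ i ∈ s, f i t := by
  choose p hp using hf
  exact ⟨∑ i ∈ s, p i, by simp [hp, Polynomial.eval_finset_sum]⟩

theorem PolyPath.mul {n : ℕ} {P Q : ℝ → Mat n ℝ} (hP : PolyPath P) (hQ : PolyPath Q) :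
    PolyPath fun t => P t * Q t := by
  intro i j
  simp only [Matrix.mul_apply]
  exact PolyFn.sum _ fun k => (hP i k).mul (hQ k j)

theorem PolyPath.continuous {n : ℕ} {P : ℝ → Mat n ℝ} (hP : PolyPath P) : Continuous P :=
  continuous_matrix fun i j => (hP i j).continuous

theorem PolyPath.eval {n : ℕ} {P : ℝ → Mat n ℝ} (hP : PolyPath P)
    (q : MvPolynomial (Fin n × Fin n) ℝ) :
    PolyFn fun t => MvPolynomial.eval (matEval (P t)) q := by
  choose p hp using hP
  refine ⟨MvPolynomial.aeval (fun ij : Fin n × Fin n => p ij.1 ij.2) q, fun t => ?_⟩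
  have h := MvPolynomial.aeval_def (R := ℝ) (fun ij : Fin n × Fin n => p ij.1 ij.2) q
  rw [h, ← Polynomial.coe_evalRingHom, MvPolynomial.hom_eval₂]
  change MvPolynomial.eval₂ _ _ _ = _
  congr 1
  · ext; simp
  · ext ij
    simp [matEval, hp]

theorem ut_sub_one_pow {n : ℕ} {A : Mat n ℝ} (hA : A ∈ UTset n) (k : ℕ) :
    ∀ i j : Fin n, (j : ℕ) < i + k → ((A - 1) ^ k) i j = 0 := by
  induction k with
  | zero =>
    intro i j h
    rw [pow_zero, Matrix.one_apply_ne]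
    rintro rfl
    omega
  | succ k ih =>
    intro i j h
    rw [pow_succ, Matrix.mul_apply]
    refine Finset.sum_eq_zero fun l _ => ?_
    by_cases h1 : (l : ℕ) < i + k
    · rw [ih i l h1, zero_mul]
    · have : (A - 1) l j = 0 := by
        rw [Matrix.sub_apply]
        by_cases h2 : l = j
        · subst h2; simp [hA.1]
        · rw [Matrix.one_apply_ne h2, hA.2 l j, sub_zero]
          have : (l : ℕ) ≠ j := fun h => h2 (Fin.ext h)
          omega
      rw [this, mul_zero]

theorem exists_path {n : ℕ} {A : Mat n ℝ} (hA : A ∈ UTset n) :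
    ∃ P : ℝ → Mat n ℝ, PolyPath P ∧ ∀ m : ℕ, P m = A ^ m := by
  have hN : ∀ k, n ≤ k → (A - 1) ^ k = 0 := by
    intro k hk
    ext i j
    exact ut_sub_one_pow hA k i j (by omega)
  refine ⟨fun t => ∑ k ∈ Finset.range n,
    ((descPochhammer ℝ k).eval t * ((k.factorial : ℝ)⁻¹)) • (A - 1) ^ k, ?_, ?_⟩
  · intro i j
    simp only [Matrix.sum_apply, Matrix.smul_apply, smul_eq_mul]
    exact PolyFn.sum _ fun k => PolyFn.mul (PolyFn.mul ⟨_, fun _ => rfl⟩ (PolyFn.const _))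
      (PolyFn.const _)
  · intro m
    have h1 : ∀ k : ℕ, ((descPochhammer ℝ k).eval (m : ℝ) * ((k.factorial : ℝ)⁻¹))
        = (m.choose k : ℝ) := by
      intro k
      rw [descPochhammer_eval_eq_descFactorial, Nat.descFactorial_eq_factorial_mul_choose]
      have := Nat.factorial_ne_zero k
      push_cast
      field_simp
    simp only [h1]
    have h2 : A ^ m = ((A - 1) + 1) ^ m := by simp
    rw [h2, (Commute.one_right (A - 1)).add_pow]
    have e1 : ∑ k ∈ Finset.range n, (m.choose k : ℝ) • (A - 1) ^ k =
        ∑ k ∈ Finset.range (n + m + 1), (m.choose k : ℝ) • (A - 1) ^ k := by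
      apply Finset.sum_subset
      · intro x; simp only [Finset.mem_range]; omega
      · intro x _ hx
        rw [hN x (by simpa using hx), smul_zero]
    have e2 : ∑ k ∈ Finset.range (m + 1), (m.choose k : ℝ) • (A - 1) ^ k =
        ∑ k ∈ Finset.range (n + m + 1), (m.choose k : ℝ) • (A - 1) ^ k := by
      apply Finset.sum_subset
      · intro x; simp only [Finset.mem_range]; omega
      · intro x _ hx
        rw [Nat.choose_eq_zero_of_lt (by simp at hx; omega)]
        simp
    rw [e1, ← e2]
    refine Finset.sum_congr rfl fun k _ => ?_
    rw [one_pow, mul_one, ← nsmul_eq_mul', Nat.cast_smul_eq_nsmul]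

namespace IsRealUnipotentGroup

variable {n : ℕ} {H : Set (Mat n ℝ)}

theorem ut (hH : IsRealUnipotentGroup n H) {a : Mat n ℝ} (ha : a ∈ H) : a ∈ UTset n := by
  obtain ⟨⟨S, rfl⟩, _⟩ := hH
  exact ha.1

theorem pow_mem (hH : IsRealUnipotentGroup n H) {a : Mat n ℝ} (ha : a ∈ H) (m : ℕ) :
    a ^ m ∈ H := by
  induction m with
  | zero => rw [pow_zero]; exact hH.2.1
  | succ m ih => rw [pow_succ]; exact hH.2.2.1 _ ih _ ha

theorem path_mem (hH : IsRealUnipotentGroup n H) {P : ℝ → Mat n ℝ} (hP : PolyPath P)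
    (h : ∀ m : ℕ, P m ∈ H) (t : ℝ) : P t ∈ H := by
  obtain ⟨⟨S, rfl⟩, _⟩ := hH
  refine ⟨⟨fun i => ?_, fun i j hij => ?_⟩, fun p hp => ?_⟩
  · exact (hP i i).eq_of_nat (PolyFn.const 1) (fun m => (h m).1.1 i) t
  · exact (hP i j).eq_of_nat (PolyFn.const 0) (fun m => (h m).1.2 i j hij) t
  · exact (hP.eval p).eq_of_nat (PolyFn.const 0) (fun m => (h m).2 p hp) t

theorem isClosed (hH : IsRealUnipotentGroup n H) : IsClosed H := by
  obtain ⟨⟨S, rfl⟩, _⟩ := hH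
  have e : {A | A ∈ UTset n ∧ ∀ p ∈ S, MvPolynomial.eval (matEval A) p = 0} =
      (⋂ i, {A : Mat n ℝ | A i i = 1}) ∩
      (⋂ i : Fin n, ⋂ j : Fin n, ⋂ (_ : (j : ℕ) < i), {A : Mat n ℝ | A i j = 0}) ∩
      (⋂ p ∈ S, {A : Mat n ℝ | MvPolynomial.eval (matEval A) p = 0}) := by
    ext A
    simp [UTset]
  rw [e]
  refine IsClosed.inter (IsClosed.inter ?_ ?_) ?_
  · exact isClosed_iInter fun i => isClosed_eq (continuous_id.matrix_elem i i) continuous_const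
  · exact isClosed_iInter fun i => isClosed_iInter fun j => isClosed_iInter fun _ =>
      isClosed_eq (continuous_id.matrix_elem i j) continuous_const
  · refine isClosed_biInter fun p _ => isClosed_eq ?_ continuous_const
    have h1 : Continuous fun A : Mat n ℝ => matEval A :=
      continuous_pi fun ij => continuous_id.matrix_elem ij.1 ij.2
    exact (MvPolynomial.continuous_eval p).comp h1

end IsRealUnipotentGroup

theorem ut_det {n : ℕ} {A : Mat n ℝ} (hA : A ∈ UTset n) : A.det = 1 := by
  have : A.BlockTriangular id := fun i j h => hA.2 i j h
  rw [Matrix.det_of_upperTriangular this]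
  simp [hA.1]

theorem ut_mul_inv {n : ℕ} {A : Mat n ℝ} (hA : A ∈ UTset n) : A * A⁻¹ = 1 :=
  Matrix.mul_nonsing_inv _ (by simp [ut_det hA])

theorem ut_inv_mul {n : ℕ} {A : Mat n ℝ} (hA : A ∈ UTset n) : A⁻¹ * A = 1 :=
  Matrix.nonsing_inv_mul _ (by simp [ut_det hA])

theorem ut_inv_eq {n : ℕ} {A : Mat n ℝ} (hA : A ∈ UTset n) : A⁻¹ = A.adjugate := by
  rw [Matrix.inv_def, ut_det hA]; simp

theorem tendsto_ut_inv {n : ℕ} {l : Filter ℕ} {u : ℕ → Mat n ℝ} {L : Mat n ℝ}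
    (hu : ∀ k, u k ∈ UTset n) (hL : L ∈ UTset n) (h : Tendsto u l (𝓝 L)) :
    Tendsto (fun k => (u k)⁻¹) l (𝓝 L⁻¹) := by
  rw [ut_inv_eq hL]
  simp only [fun k => ut_inv_eq (hu k)]
  exact ((continuous_id.matrix_adjugate).tendsto L).comp h

/-- The rank of an entry. -/
def rk {n : ℕ} (i j : Fin n) : ℕ := (n - 1 - i) * n + j

theorem rk_lt_of {n : ℕ} {i j a b : Fin n} (h1 : (i : ℕ) ≤ a) (h2 : (b : ℕ) ≤ j)
    (h : ¬ (a = i ∧ b = j)) : rk a b < rk i j := by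
  unfold rk
  rcases h1.eq_or_lt with h3 | h3
  · have : a = i := Fin.ext h3.symm
    subst this
    have : (b : ℕ) ≠ j := fun h' => h ⟨rfl, Fin.ext h'⟩
    omega
  · have h4 : (n - 1 - a) + 1 ≤ n - 1 - i := by omega
    have := Nat.mul_le_mul_right n h4
    rw [add_mul] at this
    have := b.2
    omega

theorem rk_inj {n : ℕ} {i j a b : Fin n} (h : rk a b = rk i j) : a = i ∧ b = j := by
  by_contra hc
  have hc' : ¬ (i = a ∧ j = b) := fun h' => hc ⟨h'.1.symm, h'.2.symm⟩
  unfold rk at h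
  have hb := b.2
  have hj := j.2
  have key : n - 1 - (a : ℕ) = n - 1 - i := by
    have e1 : ((n - 1 - (a : ℕ)) * n + b) / n = n - 1 - a := by
      rw [mul_comm, Nat.mul_add_div (by omega), Nat.div_eq_of_lt hb, add_zero]
    have e2 : ((n - 1 - (i : ℕ)) * n + j) / n = n - 1 - i := by
      rw [mul_comm, Nat.mul_add_div (by omega), Nat.div_eq_of_lt hj, add_zero]
    rw [← e1, ← e2, h]
  rw [key] at h
  exact hc ⟨Fin.ext (by omega), Fin.ext (by omega)⟩

theorem rk_lt {n : ℕ} (i j : Fin n) : rk i j < n * n := by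
  unfold rk
  have h4 : (n - 1 - i) + 1 ≤ n := by have := i.2; omega
  have := Nat.mul_le_mul_right n h4
  rw [add_mul] at this
  have := j.2
  omega

theorem conj_entry {n m : ℕ} {u v D : Mat n ℝ} (hu : u ∈ UTset n) (hv : v ∈ UTset n)
    (hD : ∀ i j, rk i j < m → D i j = 0) (i j : Fin n) (hij : rk i j ≤ m) :
    (u * D * v) i j = D i j := by
  rw [Matrix.mul_apply, Finset.sum_eq_single j]
  · rw [hv.1, mul_one, Matrix.mul_apply, Finset.sum_eq_single i]
    · rw [hu.1, one_mul]
    · intro a _ ha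
      by_cases h : (i : ℕ) ≤ a
      · rw [hD a j (lt_of_lt_of_le (rk_lt_of h le_rfl (by tauto)) hij), mul_zero]
      · rw [hu.2 i a (by omega), zero_mul]
    · simp
  · intro b _ hb
    by_cases h : (b : ℕ) ≤ j
    · rw [Matrix.mul_apply, Finset.sum_eq_zero, zero_mul]
      intro a _
      by_cases h' : (i : ℕ) ≤ a
      · rw [hD a b (lt_of_lt_of_le (rk_lt_of h' h (by tauto)) hij), mul_zero]
      · rw [hu.2 i a (by omega), zero_mul]
    · rw [hv.2 b j (by omega), mul_zero]
  · simp

theorem key_lemma {n : ℕ} {H₁ H₂ : Set (Mat n ℝ)} (hH₁ : IsRealUnipotentGroup n H₁)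
    (hH₂ : IsRealUnipotentGroup n H₂) (l : Filter ℕ) (h g : ℕ → Mat n ℝ)
    (hh : ∀ k, h k ∈ H₁) (hg : ∀ k, g k ∈ H₂) (m : ℕ)
    (hconv : ∀ i j : Fin n, ∃ x : ℝ, Tendsto (fun k => (h k * g k) i j) l (𝓝 x)) :
    ∃ s t : ℕ → Mat n ℝ, (∀ k, s k ∈ H₁) ∧ (∀ k, t k ∈ H₂) ∧
      (∀ k i j, rk i j < m → (s k * t k - 1) i j = 0) ∧
      (∃ L, Tendsto (fun k => h k * s k) l (𝓝 L)) ∧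
      (∃ L, Tendsto (fun k => t k * g k) l (𝓝 L)) := by
  induction m with
  | zero =>
    refine ⟨fun k => (h k)⁻¹, fun k => (g k)⁻¹, fun k => hH₁.2.2.2 _ (hh k),
      fun k => hH₂.2.2.2 _ (hg k), by simp, ⟨1, ?_⟩, ⟨1, ?_⟩⟩
    · simp only [fun k => ut_mul_inv (hH₁.ut (hh k))]
      exact tendsto_const_nhds
    · simp only [fun k => ut_inv_mul (hH₂.ut (hg k))]
      exact tendsto_const_nhds
  | succ m ih =>
    obtain ⟨s, t, hs, ht, hst, ⟨L₁, hL₁⟩, ⟨L₂, hL₂⟩⟩ := ih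
    by_cases hcase : ∀ a ∈ H₁, ∀ b ∈ H₂, (∀ i j, rk i j < m → (a * b - 1) i j = 0) →
        ∀ i j, rk i j = m → (a * b - 1) i j = 0
    · refine ⟨s, t, hs, ht, fun k i j hij => ?_, ⟨L₁, hL₁⟩, ⟨L₂, hL₂⟩⟩
      rcases Nat.lt_succ_iff_lt_or_eq.1 hij with h1 | h1
      · exact hst k i j h1
      · exact hcase _ (hs k) _ (ht k) (hst k) i j h1
    · push Not at hcase
      obtain ⟨a, ha, b, hb, hab, i₀, j₀, hij₀, hne⟩ := hcase
      obtain ⟨P, hP, hPm⟩ := exists_path (hH₁.ut ha)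
      obtain ⟨Q, hQ, hQm⟩ := exists_path (hH₂.ut hb)
      have hPmem : ∀ τ, P τ ∈ H₁ :=
        hH₁.path_mem hP fun m => by rw [hPm]; exact hH₁.pow_mem ha m
      have hQmem : ∀ τ, Q τ ∈ H₂ :=
        hH₂.path_mem hQ fun m => by rw [hQm]; exact hH₂.pow_mem hb m
      -- entries of powers
      have hpow : ∀ (N : ℕ) (i j : Fin n), rk i j ≤ m →
          (a ^ N * b ^ N) i j = (1 : Mat n ℝ) i j + N * (a * b - 1) i j := by
        intro N
        induction N with
        | zero => intro i j _; simp
        | succ N ihN =>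
          intro i j hij
          have e : a ^ (N + 1) * b ^ (N + 1) = a ^ N * b ^ N + a ^ N * (a * b - 1) * b ^ N := by
            rw [pow_succ, pow_succ']; noncomm_ring
          rw [e, Matrix.add_apply, ihN i j hij,
            conj_entry (hH₁.ut (hH₁.pow_mem ha N)) (hH₂.ut (hH₂.pow_mem hb N)) hab i j hij]
          push_cast
          ring
      have hPQ : ∀ (τ : ℝ) (i j : Fin n), rk i j ≤ m →
          (P τ * Q τ - 1) i j = τ * (a * b - 1) i j := by
        intro τ i j hij
        have : (P τ * Q τ) i j = (1 : Mat n ℝ) i j + τ * (a * b - 1) i j := by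
          refine ((hP.mul hQ) i j).eq_of_nat
            (g := fun τ => (1 : Mat n ℝ) i j + τ * (a * b - 1) i j)
            ⟨Polynomial.C ((1 : Mat n ℝ) i j) + Polynomial.X * Polynomial.C ((a * b - 1) i j),
              by simp⟩ (fun N => ?_) τ
          simp only
          rw [hPm, hQm]
          exact hpow N i j hij
        rw [Matrix.sub_apply, this]
        ring
      set χ := (a * b - 1) i₀ j₀ with hχ
      let c : ℕ → ℝ := fun k => (s k * t k - 1) i₀ j₀
      have hc : ∃ x, Tendsto c l (𝓝 x) := by
        obtain ⟨x, hx⟩ := hconv i₀ j₀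
        have h1 : Tendsto (fun k => ((h k * s k) * (t k * g k)) i₀ j₀) l (𝓝 ((L₁ * L₂) i₀ j₀)) :=
          ((continuous_id.matrix_elem i₀ j₀).tendsto (L₁ * L₂)).comp (hL₁.mul hL₂)
        refine ⟨_, (h1.sub hx).congr fun k => ?_⟩
        have h2 := conj_entry (hH₁.ut (hh k)) (hH₂.ut (hg k)) (hst k) i₀ j₀ hij₀.le
        have e : h k * s k * (t k * g k) = h k * g k + h k * (s k * t k - 1) * g k := by
          noncomm_ring
        rw [e, Matrix.add_apply, h2]
        simp [c]
      obtain ⟨x, hx⟩ := hc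
      have hτ : Tendsto (fun k => - c k / χ) l (𝓝 (- x / χ)) := hx.neg.div_const χ
      refine ⟨fun k => s k * P (- c k / χ), fun k => Q (- c k / χ) * t k,
        fun k => hH₁.2.2.1 _ (hs k) _ (hPmem _), fun k => hH₂.2.2.1 _ (hQmem _) _ (ht k),
        fun k i j hij => ?_, ⟨L₁ * P (- x / χ), ?_⟩, ⟨Q (- x / χ) * L₂, ?_⟩⟩
      · have hij' : rk i j ≤ m := Nat.lt_succ_iff.1 hij
        have e : s k * P (- c k / χ) * (Q (- c k / χ) * t k) - 1 =
            (s k * t k - 1) + s k * (P (- c k / χ) * Q (- c k / χ) - 1) * t k := by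
          noncomm_ring
        rw [e, Matrix.add_apply, conj_entry (m := m) (hH₁.ut (hs k)) (hH₂.ut (ht k)) ?_ i j hij',
          hPQ _ i j hij']
        · rcases Nat.lt_succ_iff_lt_or_eq.1 hij with h1 | h1
          · rw [hst k i j h1, hab i j h1]; simp
          · obtain ⟨rfl, rfl⟩ := rk_inj (h1.trans hij₀.symm)
            rw [← hχ, div_mul_cancel₀ _ hne]
            simp [c]
        · intro i' j' h'
          rw [hPQ _ i' j' h'.le, hab i' j' h', mul_zero]
      · simp only [← mul_assoc]
        exact hL₁.mul ((hP.continuous.tendsto _).comp hτ)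
      · simp only [mul_assoc]
        exact ((hQ.continuous.tendsto _).comp hτ).mul hL₂

theorem ofSeq_eq_iff {f g : ℕ → ℝ} :
    Hyperreal.ofSeq f = Hyperreal.ofSeq g ↔ ∀ᶠ k in hyperfilter ℕ, f k = g k :=
  Filter.Germ.coe_eq

theorem matOfSeq_eq_iff {n : ℕ} {u v : ℕ → Mat n ℝ} :
    matOfSeq n u = matOfSeq n v ↔ ∀ᶠ k in hyperfilter ℕ, u k = v k := by
  rw [← Matrix.ext_iff]
  simp only [matOfSeq, Matrix.of_apply, ofSeq_eq_iff, ← Matrix.ext_iff, eventually_all]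

theorem ofSeq_sum {ι : Type*} (s : Finset ι) (f : ι → ℕ → ℝ) :
    Hyperreal.ofSeq (fun k => ∑ i ∈ s, f i k) = ∑ i ∈ s, Hyperreal.ofSeq (f i) := by
  classical
  induction s using Finset.induction_on with
  | empty => simp; rfl
  | insert a s ha ih =>
    rw [Finset.sum_insert ha, ← ih]
    simp only [Finset.sum_insert ha]
    rfl

theorem matOfSeq_mul {n : ℕ} (u v : ℕ → Mat n ℝ) :
    matOfSeq n (fun k => u k * v k) = matOfSeq n u * matOfSeq n v := by
  ext i j
  simp only [matOfSeq, Matrix.of_apply, Matrix.mul_apply, ofSeq_sum]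
  rfl

theorem matCast_eq {n : ℕ} (A : Mat n ℝ) : matCast A = matOfSeq n fun _ => A := rfl

theorem matSharp_rep {n : ℕ} {S : Set (Mat n ℝ)} (h1 : (1 : Mat n ℝ) ∈ S) {A : Mat n Hyperreal}
    (hA : A ∈ matSharp n S) : ∃ u : ℕ → Mat n ℝ, (∀ k, u k ∈ S) ∧ A = matOfSeq n u := by
  classical
  obtain ⟨u, hu, rfl⟩ := hA
  refine ⟨fun k => if u k ∈ S then u k else 1, fun k => ?_, ?_⟩
  · by_cases h : u k ∈ S <;> simp [h, h1]
  · rw [matOfSeq_eq_iff]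
    filter_upwards [hu] with k hk
    simp [hk]

set_option linter.deprecated false in
theorem infinitesimal_iff_tendsto {n : ℕ} (u : ℕ → Mat n ℝ) :
    (∀ i j, Hyperreal.Infinitesimal (matOfSeq n u i j - (1 : Mat n Hyperreal) i j)) ↔
      Tendsto u (hyperfilter ℕ) (𝓝 1) := by
  have h1 : ∀ i j, (1 : Mat n Hyperreal) i j = Hyperreal.ofSeq fun _ => (1 : Mat n ℝ) i j := by
    intro i j
    by_cases h : i = j
    · subst h; simp only [Matrix.one_apply_eq]; rfl
    · simp only [Matrix.one_apply_ne h]; rfl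
  have h2 : ∀ i j, matOfSeq n u i j - (1 : Mat n Hyperreal) i j =
      Hyperreal.ofSeq fun k => u k i j - (1 : Mat n ℝ) i j := by
    intro i j; rw [h1]; rfl
  simp only [h2, Hyperreal.Infinitesimal, Hyperreal.isSt_ofSeq_iff_tendsto]
  have h3 : Tendsto u (hyperfilter ℕ) (𝓝 1) ↔
      ∀ i j, Tendsto (fun k => u k i j) (hyperfilter ℕ) (𝓝 ((1 : Mat n ℝ) i j)) := by
    exact (tendsto_pi_nhds (f := u) (g := (1 : Mat n ℝ))).trans
      (forall_congr' fun i => tendsto_pi_nhds)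
  rw [h3]
  exact forall_congr' fun i => forall_congr' fun j => tendsto_sub_nhds_zero_iff

theorem near_rep {n : ℕ} {G H : Set (Mat n ℝ)} (hG : IsRealUnipotentGroup n G)
    (hH : IsRealUnipotentGroup n H) {g : Mat n ℝ} {α : Mat n Hyperreal} :
    NearCoset n G g H α ↔ ∃ e h : ℕ → Mat n ℝ, (∀ k, e k ∈ G) ∧ (∀ k, h k ∈ H) ∧
      Tendsto e (hyperfilter ℕ) (𝓝 1) ∧ α = matOfSeq n fun k => e k * (g * h k) := by
  constructor
  · intro hn
    obtain ⟨A, hA, B, hB, rfl⟩ := hn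
    obtain ⟨C, hC, D, hD, rfl⟩ := hB
    rw [Set.mem_singleton_iff] at hC
    subst hC
    obtain ⟨h, hh, rfl⟩ := matSharp_rep hH.2.1 hD
    obtain ⟨hA1, hA2⟩ := hA
    obtain ⟨e, he, rfl⟩ := matSharp_rep hG.2.1 hA1
    refine ⟨e, h, he, hh, (infinitesimal_iff_tendsto e).1 hA2, ?_⟩
    simp only [matOfSeq_mul, matCast_eq]
  · rintro ⟨e, h, he, hh, hlim, rfl⟩
    simp only [matOfSeq_mul, ← matCast_eq]
    exact Set.mul_mem_mul
      ⟨⟨e, Eventually.of_forall he, rfl⟩, (infinitesimal_iff_tendsto e).2 hlim⟩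
      (Set.mul_mem_mul rfl ⟨h, Eventually.of_forall hh, rfl⟩)

theorem inter_group {n : ℕ} {H₁ H₂ : Set (Mat n ℝ)} (h₁ : IsRealUnipotentGroup n H₁)
    (h₂ : IsRealUnipotentGroup n H₂) : IsRealUnipotentGroup n (H₁ ∩ H₂) := by
  refine ⟨?_, ⟨h₁.2.1, h₂.2.1⟩, fun a ha b hb => ⟨h₁.2.2.1 _ ha.1 _ hb.1, h₂.2.2.1 _ ha.2 _ hb.2⟩,
    fun a ha => ⟨h₁.2.2.2 _ ha.1, h₂.2.2.2 _ ha.2⟩⟩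
  obtain ⟨⟨S, hS⟩, _⟩ := h₁
  obtain ⟨⟨T, hT⟩, _⟩ := h₂
  refine ⟨S ∪ T, ?_⟩
  rw [hS, hT]
  ext A
  simp only [Set.mem_inter_iff, Set.mem_setOf_eq, Set.mem_union]
  constructor
  · rintro ⟨⟨a, b⟩, _, c⟩
    exact ⟨a, fun p hp => hp.elim (b p) (c p)⟩
  · rintro ⟨a, b⟩
    exact ⟨⟨a, fun p hp => b p (Or.inl hp)⟩, a, fun p hp => b p (Or.inr hp)⟩

theorem mem_coset {n : ℕ} {g c : Mat n ℝ} {H : Set (Mat n ℝ)} :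
    c ∈ ({g} * H : Set (Mat n ℝ)) ↔ ∃ a ∈ H, c = g * a := by
  rw [Set.singleton_mul]
  simp only [Set.mem_image, eq_comm]

end Helpers

/-- the intersection of two cosets near `α` is a nonempty coset near `α`. -/
theorem stmt1 {n : ℕ} (G : Set (Mat n ℝ)) (hG : IsRealUnipotentGroup n G)
    (α : Mat n Hyperreal) (hα : α ∈ matSharp n G)
    (H₁ H₂ : Set (Mat n ℝ)) (hH₁ : IsRealAlgSubgroup n G H₁) (hH₂ : IsRealAlgSubgroup n G H₂)
    (g₁ g₂ : Mat n ℝ) (hg₁ : g₁ ∈ G) (hg₂ : g₂ ∈ G)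
    (hnear₁ : NearCoset n G g₁ H₁ α) (hnear₂ : NearCoset n G g₂ H₂ α) :
    (({g₁} * H₁) ∩ ({g₂} * H₂)).Nonempty ∧
    ∀ c ∈ ({g₁} * H₁) ∩ ({g₂} * H₂),
      ({g₁} * H₁) ∩ ({g₂} * H₂) = {c} * (H₁ ∩ H₂) ∧ NearCoset n G c (H₁ ∩ H₂) α := by
  have hH₁' := hH₁.2
  have hH₂' := hH₂.2
  have hI := inter_group hH₁' hH₂'
  obtain ⟨e₁, h₁, he₁, hh₁, hl₁, ha₁⟩ := (near_rep hG hH₁').1 hnear₁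
  obtain ⟨e₂, h₂, he₂, hh₂, hl₂, ha₂⟩ := (near_rep hG hH₂').1 hnear₂
  have hev := matOfSeq_eq_iff.1 (ha₁.symm.trans ha₂)
  have hone : (1 : Mat n ℝ) ∈ UTset n := hG.ut hG.2.1
  have ug₁ := hG.ut hg₁
  have ug₂ := hG.ut hg₂
  -- the product `h₁ h₂⁻¹` converges
  have hprod : Tendsto (fun k => h₁ k * (h₂ k)⁻¹) (hyperfilter ℕ) (nhds (g₁⁻¹ * g₂)) := by
    have hi := tendsto_ut_inv (fun k => hG.ut (he₁ k)) hone hl₁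
    have h1 : Tendsto (fun k => g₁⁻¹ * ((e₁ k)⁻¹ * e₂ k) * g₂) (hyperfilter ℕ)
        (nhds (g₁⁻¹ * ((1 : Mat n ℝ)⁻¹ * 1) * g₂)) :=
      ((hi.mul hl₂).const_mul _).mul_const _
    rw [inv_one, mul_one, mul_one] at h1
    refine h1.congr' ?_
    filter_upwards [hev] with k hk
    have q1 := ut_inv_mul (hG.ut (he₁ k))
    have q2 := ut_inv_mul ug₁
    have q3 := ut_mul_inv (hH₂'.ut (hh₂ k))
    calc g₁⁻¹ * ((e₁ k)⁻¹ * e₂ k) * g₂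
        = g₁⁻¹ * (e₁ k)⁻¹ * (e₂ k * (g₂ * (h₂ k * (h₂ k)⁻¹))) := by
          rw [q3, mul_one]; simp only [mul_assoc]
      _ = g₁⁻¹ * (e₁ k)⁻¹ * ((e₂ k * (g₂ * h₂ k)) * (h₂ k)⁻¹) := by simp only [mul_assoc]
      _ = g₁⁻¹ * (((e₁ k)⁻¹ * e₁ k) * (g₁ * h₁ k)) * (h₂ k)⁻¹ := by
          rw [← hk]; simp only [mul_assoc]
      _ = (g₁⁻¹ * g₁) * h₁ k * (h₂ k)⁻¹ := by rw [q1, one_mul]; simp only [mul_assoc]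
      _ = h₁ k * (h₂ k)⁻¹ := by rw [q2, one_mul]
  obtain ⟨s, t, hs, ht, hst, ⟨L₁, hL₁⟩, ⟨L₂, hL₂⟩⟩ := key_lemma hH₁' hH₂' (hyperfilter ℕ : Filter ℕ)
    h₁ (fun k => (h₂ k)⁻¹) hh₁ (fun k => hH₂'.2.2.2 _ (hh₂ k)) (n * n)
    (fun i j => ⟨_, ((continuous_id.matrix_elem i j).tendsto _).comp hprod⟩)
  have hst1 : ∀ k, s k * t k = 1 := by
    intro k
    rw [← sub_eq_zero]
    ext i j
    exact hst k i j (rk_lt i j)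
  have htinv : ∀ k, t k = (s k)⁻¹ := fun k => (Matrix.inv_eq_right_inv (hst1 k)).symm
  have htI : ∀ k, t k ∈ H₁ ∩ H₂ := fun k => ⟨by rw [htinv]; exact hH₁'.2.2.2 _ (hs k), ht k⟩
  have mL₁ : L₁ ∈ H₁ := hH₁'.isClosed.mem_of_tendsto hL₁
    (Eventually.of_forall fun k => hH₁'.2.2.1 _ (hh₁ k) _ (hs k))
  have mL₂ : L₂ ∈ H₂ := hH₂'.isClosed.mem_of_tendsto hL₂
    (Eventually.of_forall fun k => hH₂'.2.2.1 _ (ht k) _ (hH₂'.2.2.2 _ (hh₂ k)))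
  have uL₁ := hH₁'.ut mL₁
  have uL₂ := hH₂'.ut mL₂
  have hLL : L₁ * L₂ = g₁⁻¹ * g₂ := by
    refine tendsto_nhds_unique (hL₁.mul hL₂) (hprod.congr fun k => ?_)
    calc h₁ k * (h₂ k)⁻¹ = h₁ k * (s k * t k) * (h₂ k)⁻¹ := by rw [hst1, mul_one]
      _ = _ := by simp only [mul_assoc]
  have hc0 : g₁ * L₁ = g₂ * L₂⁻¹ := by
    calc g₁ * L₁ = g₁ * (L₁ * L₂) * L₂⁻¹ := by
          rw [mul_assoc, mul_assoc, ut_mul_inv uL₂, mul_one]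
      _ = g₂ * L₂⁻¹ := by rw [hLL, ← mul_assoc, ut_mul_inv ug₁, one_mul]
  refine ⟨⟨g₁ * L₁, mem_coset.2 ⟨L₁, mL₁, rfl⟩,
    mem_coset.2 ⟨L₂⁻¹, hH₂'.2.2.2 _ mL₂, hc0⟩⟩, ?_⟩
  rintro c ⟨hc1, hc2⟩
  obtain ⟨a, ha, rfl⟩ := mem_coset.1 hc1
  obtain ⟨b, hb, hab⟩ := mem_coset.1 hc2
  have ua := hH₁'.ut ha
  have ub := hH₂'.ut hb
  have hcos : ({g₁} * H₁) ∩ ({g₂} * H₂) = {g₁ * a} * (H₁ ∩ H₂) := by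
    ext x
    constructor
    · rintro ⟨hx1, hx2⟩
      obtain ⟨y, hy, rfl⟩ := mem_coset.1 hx1
      obtain ⟨z, hz, hyz⟩ := mem_coset.1 hx2
      have e1 : g₁ * y = g₁ * a * (a⁻¹ * y) := by
        rw [mul_assoc, ← mul_assoc a, ut_mul_inv ua, one_mul]
      have e2 : a⁻¹ * y = b⁻¹ * z := by
        have e3 : g₁ * a * (b⁻¹ * z) = g₁ * a * (a⁻¹ * y) := by
          rw [← e1, hyz, hab, mul_assoc, ← mul_assoc b, ut_mul_inv ub, one_mul]
        have u : g₁ * a ∈ UTset n := hG.ut (hG.2.2.1 _ hg₁ _ (hH₁.1 ha))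
        have e4 := congrArg (fun M => (g₁ * a)⁻¹ * M) e3
        rw [← mul_assoc (g₁ * a)⁻¹ (g₁ * a), ← mul_assoc (g₁ * a)⁻¹ (g₁ * a), ut_inv_mul u,
          one_mul, one_mul] at e4
        exact e4.symm
      refine mem_coset.2 ⟨a⁻¹ * y, ⟨hH₁'.2.2.1 _ (hH₁'.2.2.2 _ ha) _ hy, ?_⟩, e1⟩
      rw [e2]
      exact hH₂'.2.2.1 _ (hH₂'.2.2.2 _ hb) _ hz
    · intro hx
      obtain ⟨d, hd, rfl⟩ := mem_coset.1 hx
      exact ⟨mem_coset.2 ⟨a * d, hH₁'.2.2.1 _ ha _ hd.1, mul_assoc _ _ _⟩,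
        mem_coset.2 ⟨b * d, hH₂'.2.2.1 _ hb _ hd.2, by rw [hab, mul_assoc]⟩⟩
  refine ⟨hcos, ?_⟩
  have hmem : g₁ * L₁ ∈ ({g₁} * H₁) ∩ ({g₂} * H₂) :=
    ⟨mem_coset.2 ⟨L₁, mL₁, rfl⟩, mem_coset.2 ⟨L₂⁻¹, hH₂'.2.2.2 _ mL₂, hc0⟩⟩
  rw [hcos] at hmem
  obtain ⟨d, hd, hd'⟩ := mem_coset.1 hmem
  have mc : g₁ * L₁ ∈ G := hG.2.2.1 _ hg₁ _ (hH₁.1 mL₁)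
  have uc := hG.ut mc
  refine (near_rep hG hI).2 ⟨fun k => e₁ k * (g₁ * (h₁ k * s k) * (g₁ * L₁)⁻¹),
    fun k => d * t k, fun k => ?_, fun k => hI.2.2.1 _ hd _ (htI k), ?_, ?_⟩
  · exact hG.2.2.1 _ (he₁ k) _ (hG.2.2.1 _ (hG.2.2.1 _ hg₁ _
      (hH₁.1 (hH₁'.2.2.1 _ (hh₁ k) _ (hs k)))) _ (hG.2.2.2 _ mc))
  · have h1 := hl₁.mul ((hL₁.const_mul g₁).mul_const (g₁ * L₁)⁻¹)
    rwa [ut_mul_inv uc, mul_one] at h1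
  · rw [ha₁]
    congr 1
    funext k
    symm
    calc e₁ k * (g₁ * (h₁ k * s k) * (g₁ * L₁)⁻¹) * (g₁ * a * (d * t k))
        = e₁ k * (g₁ * (h₁ k * s k)) * ((g₁ * L₁)⁻¹ * (g₁ * a * d)) * t k := by
          simp only [mul_assoc]
      _ = e₁ k * (g₁ * (h₁ k * s k)) * t k := by rw [← hd', ut_inv_mul uc, mul_one]
      _ = e₁ k * (g₁ * (h₁ k * (s k * t k))) := by simp only [mul_assoc]
      _ = e₁ k * (g₁ * h₁ k) := by rw [hst1, mul_one]
end
end
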